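/- arXiv:math/0008224 — 2 statements merged into one kernel-verified Lean document; each statement's English description precedes it below -/
import Mathlib

section
/- Let R be an F-vector space with a linear operator ∂ and bilinear products u⁽ⁿ⁾v (n ∈ ℕ) satisfying locality, and suppose that for all u, v ∈ R and n ∈ ℕ both (∂u)⁽ⁿ⁾v = -n·(u⁽ⁿ⁻¹⁾v) and ∂(u⁽ⁿ⁾v) - u⁽ⁿ⁾(∂v) = (∂u)⁽ⁿ⁾v hold. Let V be a subspace of R with R = F[∂]V, i.e., R is spanned by the elements ∂^m(v) with m ∈ ℕ, v ∈ V. Then (R, ∂, products) is a conformal algebra (i.e., skew-symmetry and the Jacobi identity hold on all of R) if and only if skew-symmetry holds for all u, v ∈ V and the Jacobi identity holds for all u, v, w ∈ V. -/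
theorem kac_span_all {F R : Type*} [Field F] [AddCommGroup R] [Module F R]
    (D : R →ₗ[F] R) (V : Submodule F R)
    (hspan : Submodule.span F {x : R | ∃ (m : ℕ) (v : R), v ∈ V ∧ x = (D ^ m) v} = ⊤)
    (p : R → Prop) (hV : ∀ v ∈ V, p v) (hadd : ∀ x y, p x → p y → p (x + y))
    (hsmul : ∀ (a : F) x, p x → p (a • x)) (hD : ∀ x, p x → p (D x)) (x : R) : p x := by
  have hx : x ∈ Submodule.span F {x : R | ∃ (m : ℕ) (v : R), v ∈ V ∧ x = (D ^ m) v} := by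
    rw [hspan]; trivial
  induction hx using Submodule.span_induction with
  | mem x h =>
    obtain ⟨m, v, hv, rfl⟩ := h
    induction m with
    | zero => simpa using hV v hv
    | succ m ih => rw [pow_succ']; exact hD _ ih
  | zero => exact hV 0 V.zero_mem
  | add x y _ _ hx hy => exact hadd x y hx hy
  | smul a x _ hx => exact hsmul a x hx

/-- Truncated right side of skew-symmetry. -/
def kacT {F R : Type*} [Field F] [AddCommGroup R] [Module F R]
    (D : R →ₗ[F] R) (P : ℕ → R →ₗ[F] R →ₗ[F] R) (n N : ℕ) (u v : R) : R :=
  ∑ j ∈ Finset.range N,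
    ((-1 : F) ^ (n + j + 1) * ((j.factorial : F)⁻¹)) • ((D ^ j) (P (n + j) v u))

/-- Skew-symmetry for large truncations. -/
def kacS {F R : Type*} [Field F] [AddCommGroup R] [Module F R]
    (D : R →ₗ[F] R) (P : ℕ → R →ₗ[F] R →ₗ[F] R) (u v : R) : Prop :=
  ∀ n, ∃ N₀, ∀ N ≥ N₀, P n u v = kacT D P n N u v

/-- Jacobi identity for three elements. -/
def kacJ {F R : Type*} [Field F] [AddCommGroup R] [Module F R]
    (P : ℕ → R →ₗ[F] R →ₗ[F] R) (u v w : R) : Prop :=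
  ∀ m n : ℕ, P m u (P n v w) - P n v (P m u w) =
          ∑ j ∈ Finset.range (m + 1), ((m.choose j : F)) • P (m + n - j) (P j u v) w

section
variable {F R : Type*} [Field F] [AddCommGroup R] [Module F R]
    (D : R →ₗ[F] R) (P : ℕ → R →ₗ[F] R →ₗ[F] R)

theorem kacT_add_left (n N : ℕ) (u u' v : R) :
    kacT D P n N (u + u') v = kacT D P n N u v + kacT D P n N u' v := by
  simp [kacT, Finset.sum_add_distrib]

theorem kacT_add_right (n N : ℕ) (u v v' : R) :
    kacT D P n N u (v + v') = kacT D P n N u v + kacT D P n N u v' := by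
  simp [kacT, Finset.sum_add_distrib]

theorem kacT_smul_left (n N : ℕ) (a : F) (u v : R) :
    kacT D P n N (a • u) v = a • kacT D P n N u v := by
  simp only [kacT, Finset.smul_sum, map_smul]
  exact Finset.sum_congr rfl fun j _ => smul_comm _ _ _

theorem kacT_smul_right (n N : ℕ) (a : F) (u v : R) :
    kacT D P n N u (a • v) = a • kacT D P n N u v := by
  simp only [kacT, Finset.smul_sum, map_smul, LinearMap.smul_apply]
  exact Finset.sum_congr rfl fun j _ => smul_comm _ _ _

theorem kacT_stable (n N M : ℕ) (u v : R) (hN : ∀ j ≥ N, P (n + j) v u = 0) (h : N ≤ M) :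
    kacT D P n M u v = kacT D P n N u v := by
  unfold kacT
  symm
  apply Finset.sum_subset (Finset.range_mono h)
  intro j _ hj
  rw [hN j (by simpa using hj)]
  simp

theorem kacS_iff (locality : ∀ u v : R, ∃ N : ℕ, ∀ n ≥ N, P n u v = 0) (u v : R) :
    kacS D P u v ↔ ∀ n N, (∀ j ≥ N, P (n + j) v u = 0) → P n u v = kacT D P n N u v := by
  constructor
  · intro h n N hN
    obtain ⟨N₀, h0⟩ := h n
    rw [h0 (max N N₀) (le_max_right _ _)]
    exact kacT_stable D P n N _ u v hN (le_max_left _ _)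
  · intro h n
    obtain ⟨N, hN⟩ := locality v u
    exact ⟨N, fun M hM => h n M fun j hj => hN _ (by omega)⟩

theorem kacS_add_left {u u' v : R} (h : kacS D P u v) (h' : kacS D P u' v) :
    kacS D P (u + u') v := by
  intro n
  obtain ⟨N, hN⟩ := h n
  obtain ⟨M, hM⟩ := h' n
  refine ⟨max N M, fun K hK => ?_⟩
  rw [kacT_add_left, ← hN K (by omega), ← hM K (by omega)]; simp

theorem kacS_add_right {u v v' : R} (h : kacS D P u v) (h' : kacS D P u v') :
    kacS D P u (v + v') := by
  intro n
  obtain ⟨N, hN⟩ := h n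
  obtain ⟨M, hM⟩ := h' n
  refine ⟨max N M, fun K hK => ?_⟩
  rw [kacT_add_right, ← hN K (by omega), ← hM K (by omega)]; simp

theorem kacS_smul_left (a : F) {u v : R} (h : kacS D P u v) : kacS D P (a • u) v := by
  intro n
  obtain ⟨N, hN⟩ := h n
  refine ⟨N, fun K hK => ?_⟩
  rw [kacT_smul_left, ← hN K hK]; simp

theorem kacS_smul_right (a : F) {u v : R} (h : kacS D P u v) : kacS D P u (a • v) := by
  intro n
  obtain ⟨N, hN⟩ := h n
  refine ⟨N, fun K hK => ?_⟩
  rw [kacT_smul_right, ← hN K hK]; simp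

theorem kacT_zero_D [CharZero F]
    (sesqui_zero : ∀ u v : R, P 0 (D u) v = 0)
    (sesqui : ∀ (n : ℕ) (u v : R), P (n + 1) (D u) v = -(((n + 1 : ℕ) : F)) • P n u v)
    (deriv : ∀ (n : ℕ) (u v : R), D (P n u v) - P n u (D v) = P n (D u) v)
    (N : ℕ) (u v : R) :
    kacT D P 0 (N + 1) (D u) v =
      ((-1 : F) ^ (N + 1) * ((N.factorial : F)⁻¹)) • (D ^ (N + 1)) (P N v u) := by
  have hd : ∀ n u v, P n u (D v) = D (P n u v) - P n (D u) v := by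
    intro n u v; rw [← deriv]; abel
  induction N with
  | zero => simp [kacT, hd, sesqui_zero]
  | succ N ih =>
    unfold kacT at ih ⊢
    rw [Finset.sum_range_succ, ih]
    have h1 : (N.factorial : F) ≠ 0 := by exact_mod_cast N.factorial_ne_zero
    have h2 : ((N : F) + 1) ≠ 0 := by exact_mod_cast N.succ_ne_zero
    rw [Nat.zero_add, hd, sesqui, map_sub, map_smul, pow_succ D (N + 1), Module.End.mul_apply]
    simp only [Nat.factorial_succ, Nat.cast_mul]
    push_cast
    match_scalars
    · field_simp
      ring
    · field_simp

theorem kacT_succ_D [CharZero F]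
    (sesqui : ∀ (n : ℕ) (u v : R), P (n + 1) (D u) v = -(((n + 1 : ℕ) : F)) • P n u v)
    (deriv : ∀ (n : ℕ) (u v : R), D (P n u v) - P n u (D v) = P n (D u) v)
    (n N : ℕ) (u v : R) :
    kacT D P (n + 1) N (D u) v = -((n + 1 : ℕ) : F) • kacT D P n N u v +
      ((N : F) * ((-1 : F) ^ (n + N + 1) * ((N.factorial : F)⁻¹))) • (D ^ N) (P (n + N) v u) := by
  have hd : ∀ n u v, P n u (D v) = D (P n u v) - P n (D u) v := by
    intro n u v; rw [← deriv]; abel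
  induction N with
  | zero => simp [kacT]
  | succ N ih =>
    unfold kacT at ih ⊢
    rw [Finset.sum_range_succ, ih, Finset.sum_range_succ]
    have h1 : (N.factorial : F) ≠ 0 := by exact_mod_cast N.factorial_ne_zero
    have h2 : ((N : F) + 1) ≠ 0 := by exact_mod_cast N.succ_ne_zero
    have e : n + 1 + N = n + N + 1 := by omega
    rw [e, hd, sesqui, map_sub, map_smul, pow_succ D N, Module.End.mul_apply, ← add_assoc n N 1]
    simp only [Nat.factorial_succ, Nat.cast_mul]
    push_cast
    match_scalars
    all_goals (field_simp; try ring)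

theorem kacS_D_left [CharZero F]
    (locality : ∀ u v : R, ∃ N : ℕ, ∀ n ≥ N, P n u v = 0)
    (sesqui_zero : ∀ u v : R, P 0 (D u) v = 0)
    (sesqui : ∀ (n : ℕ) (u v : R), P (n + 1) (D u) v = -(((n + 1 : ℕ) : F)) • P n u v)
    (deriv : ∀ (n : ℕ) (u v : R), D (P n u v) - P n u (D v) = P n (D u) v)
    {u v : R} (h : kacS D P u v) : kacS D P (D u) v := by
  obtain ⟨M, hM⟩ := locality v u
  intro n
  cases n with
  | zero =>
    refine ⟨M + 1, fun K hK => ?_⟩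
    obtain ⟨K, rfl⟩ : ∃ k, K = k + 1 := ⟨K - 1, by omega⟩
    rw [kacT_zero_D D P sesqui_zero sesqui deriv, sesqui_zero, hM K (by omega)]; simp
  | succ n =>
    obtain ⟨N, hN⟩ := h n
    refine ⟨max N M, fun K hK => ?_⟩
    rw [kacT_succ_D D P sesqui deriv, sesqui, hM (n + K) (by omega), ← hN K (by omega)]; simp

theorem kacT_deriv
    (deriv : ∀ (n : ℕ) (u v : R), D (P n u v) - P n u (D v) = P n (D u) v)
    (n N : ℕ) (u v : R) :
    kacT D P n N u (D v) = D (kacT D P n N u v) - kacT D P n N (D u) v := by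
  unfold kacT
  rw [map_sum, ← Finset.sum_sub_distrib]
  refine Finset.sum_congr rfl fun j _ => ?_
  rw [← deriv, map_sub, map_smul, smul_sub]
  congr 2
  exact (Module.End.mul_apply _ _ _).symm.trans ((LinearMap.congr_fun ((pow_succ D j).symm.trans (pow_succ' D j)) _).trans (Module.End.mul_apply _ _ _))

theorem kacS_D_right [CharZero F]
    (locality : ∀ u v : R, ∃ N : ℕ, ∀ n ≥ N, P n u v = 0)
    (sesqui_zero : ∀ u v : R, P 0 (D u) v = 0)
    (sesqui : ∀ (n : ℕ) (u v : R), P (n + 1) (D u) v = -(((n + 1 : ℕ) : F)) • P n u v)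
    (deriv : ∀ (n : ℕ) (u v : R), D (P n u v) - P n u (D v) = P n (D u) v)
    {u v : R} (h : kacS D P u v) : kacS D P u (D v) := by
  have h' := kacS_D_left D P locality sesqui_zero sesqui deriv h
  intro n
  obtain ⟨N, hN⟩ := h n
  obtain ⟨M, hM⟩ := h' n
  refine ⟨max N M, fun K hK => ?_⟩
  rw [kacT_deriv D P deriv, ← hN K (by omega), ← hM K (by omega), ← deriv]; abel

theorem kacJ_D_left
    (sesqui_zero : ∀ u v : R, P 0 (D u) v = 0)
    (sesqui : ∀ (n : ℕ) (u v : R), P (n + 1) (D u) v = -(((n + 1 : ℕ) : F)) • P n u v)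
    {u v w : R} (h : kacJ P u v w) : kacJ P (D u) v w := by
  intro m n
  cases m with
  | zero => simp [sesqui_zero]
  | succ m =>
    rw [Finset.sum_range_succ']
    simp only [sesqui, sesqui_zero, map_smul, map_zero, LinearMap.zero_apply, smul_zero, add_zero,
      LinearMap.smul_apply]
    rw [← smul_sub, h m n, Finset.smul_sum]
    refine Finset.sum_congr rfl fun j _ => ?_
    have e : m + 1 + n - (j + 1) = m + n - j := by omega
    rw [e, smul_smul, smul_smul]
    congr 1
    have := congrArg (Nat.cast : ℕ → F) (Nat.add_one_mul_choose_eq m j)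
    push_cast at this ⊢
    linear_combination -this

theorem kacJ_D_mid
    (sesqui_zero : ∀ u v : R, P 0 (D u) v = 0)
    (sesqui : ∀ (n : ℕ) (u v : R), P (n + 1) (D u) v = -(((n + 1 : ℕ) : F)) • P n u v)
    (deriv : ∀ (n : ℕ) (u v : R), D (P n u v) - P n u (D v) = P n (D u) v)
    {u v w : R} (h : kacJ P u v w) : kacJ P u (D v) w := by
  have hd : ∀ n u v, P n u (D v) = D (P n u v) - P n (D u) v := by
    intro n u v; rw [← deriv]; abel
  have hs : ∀ k u v, P k (D u) v = -(k : F) • P (k - 1) u v := by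
    intro k u v
    cases k with
    | zero => simp [sesqui_zero]
    | succ k => rw [sesqui]; simp
  intro m n
  have key : ∑ j ∈ Finset.range (m + 1), ((m.choose j : F)) • P (m + n - j) (P j u (D v)) w
      = -(n : F) • ∑ j ∈ Finset.range (m + 1), ((m.choose j : F)) • P (m + n - j - 1) (P j u v) w := by
    have e2 : ∑ j ∈ Finset.range (m + 1), ((m.choose j : F)) • P (m + n - j) (P j (D u) v) w
        = ∑ j ∈ Finset.range (m + 1),
          (-((m - j : ℕ) : F) * (m.choose j : F)) • P (m + n - j - 1) (P j u v) w := by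
      rw [Finset.sum_range_succ', Finset.sum_range_succ]
      simp only [sesqui, sesqui_zero, map_smul, map_zero, LinearMap.zero_apply, smul_zero, add_zero,
        LinearMap.smul_apply, Nat.sub_self, Nat.cast_zero, neg_zero, zero_mul, zero_smul]
      refine Finset.sum_congr rfl fun j _ => ?_
      rw [smul_smul, Nat.sub_sub]
      congr 1
      have := congrArg (Nat.cast : ℕ → F) (Nat.choose_succ_right_eq m j)
      push_cast at this ⊢
      linear_combination -this
    simp only [hd, map_sub, LinearMap.sub_apply, smul_sub, Finset.sum_sub_distrib]
    rw [e2, ← Finset.sum_sub_distrib, Finset.smul_sum]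
    refine Finset.sum_congr rfl fun j hj => ?_
    rw [hs, smul_smul, smul_smul, ← sub_smul]
    congr 1
    have hj : j ≤ m := by simpa [Nat.lt_succ_iff] using hj
    rw [Nat.cast_sub hj, Nat.cast_sub (by omega : j ≤ m + n)]
    push_cast
    ring
  rw [key]
  cases n with
  | zero => simp [sesqui_zero]
  | succ n =>
    simp only [sesqui, map_smul]
    rw [← smul_sub, h m n]
    congr 1
    refine Finset.sum_congr rfl fun j hj => ?_
    have e : m + (n + 1) - j - 1 = m + n - j := by omega
    rw [e]

theorem kacJ_D_right
    (sesqui_zero : ∀ u v : R, P 0 (D u) v = 0)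
    (sesqui : ∀ (n : ℕ) (u v : R), P (n + 1) (D u) v = -(((n + 1 : ℕ) : F)) • P n u v)
    (deriv : ∀ (n : ℕ) (u v : R), D (P n u v) - P n u (D v) = P n (D u) v)
    {u v w : R} (h : kacJ P u v w) : kacJ P u v (D w) := by
  have hd : ∀ n u v, P n u (D v) = D (P n u v) - P n (D u) v := by
    intro n u v; rw [← deriv]; abel
  have hd' : ∀ n u v, D (P n u v) = P n u (D v) + P n (D u) v := by
    intro n u v; rw [← deriv]; abel
  intro m n
  have h0 := congrArg D (h m n)
  have h1 := kacJ_D_left D P sesqui_zero sesqui h m n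
  have h2 := kacJ_D_mid D P sesqui_zero sesqui deriv h m n
  have e : ∑ j ∈ Finset.range (m + 1), ((m.choose j : F)) • P (m + n - j) (P j u v) (D w)
      = D (∑ j ∈ Finset.range (m + 1), ((m.choose j : F)) • P (m + n - j) (P j u v) w)
      - ∑ j ∈ Finset.range (m + 1), ((m.choose j : F)) • P (m + n - j) (P j (D u) v) w
      - ∑ j ∈ Finset.range (m + 1), ((m.choose j : F)) • P (m + n - j) (P j u (D v)) w := by
    rw [map_sum, ← Finset.sum_sub_distrib, ← Finset.sum_sub_distrib]
    refine Finset.sum_congr rfl fun j hj => ?_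
    rw [hd (m + n - j), hd' j, map_add, LinearMap.add_apply, map_smul, ← smul_sub, ← smul_sub]
    congr 1
    abel
  rw [e, ← h0, ← h1, ← h2, map_sub, hd n v w, hd m u w, map_sub, map_sub, hd m u (P n v w),
    hd n v (P m u w)]
  abel

end


/-- **Kac's theorem** (Theorem 2.1): let `R` be an `F`-vector space with a linear
operator `D = ∂` and bilinear `n`-th products `P n` satisfying locality,
sesquilinearity in the first argument, and the derivation rule
`∂(u⁽ⁿ⁾v) - u⁽ⁿ⁾(∂v) = (∂u)⁽ⁿ⁾v`.  If `V` is a subspace with `R = F[∂]V`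
(i.e. the elements `∂^m v`, `v ∈ V`, span `R`), then skew-symmetry and the
Jacobi identity hold on all of `R` if and only if they hold for elements of `V`. -/
theorem conformal_axioms_iff_on_spanning_subspace
    {F R : Type*} [Field F] [CharZero F] [AddCommGroup R] [Module F R]
    (D : R →ₗ[F] R) (P : ℕ → R →ₗ[F] R →ₗ[F] R)
    (locality : ∀ u v : R, ∃ N : ℕ, ∀ n ≥ N, P n u v = 0)
    (sesqui_zero : ∀ u v : R, P 0 (D u) v = 0)
    (sesqui : ∀ (n : ℕ) (u v : R), P (n + 1) (D u) v = -(((n + 1 : ℕ) : F)) • P n u v)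
    (deriv : ∀ (n : ℕ) (u v : R), D (P n u v) - P n u (D v) = P n (D u) v)
    (V : Submodule F R)
    (hspan : Submodule.span F {x : R | ∃ (m : ℕ) (v : R), v ∈ V ∧ x = (D ^ m) v} = ⊤) :
    ((∀ (n N : ℕ) (u v : R), (∀ j ≥ N, P (n + j) v u = 0) →
        P n u v = ∑ j ∈ Finset.range N,
          ((-1 : F) ^ (n + j + 1) * ((j.factorial : F)⁻¹)) • ((D ^ j) (P (n + j) v u))) ∧
      (∀ (m n : ℕ) (u v w : R),
        P m u (P n v w) - P n v (P m u w) =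
          ∑ j ∈ Finset.range (m + 1), ((m.choose j : F)) • P (m + n - j) (P j u v) w))
    ↔
    ((∀ (n N : ℕ), ∀ u ∈ V, ∀ v ∈ V, (∀ j ≥ N, P (n + j) v u = 0) →
        P n u v = ∑ j ∈ Finset.range N,
          ((-1 : F) ^ (n + j + 1) * ((j.factorial : F)⁻¹)) • ((D ^ j) (P (n + j) v u))) ∧
      (∀ (m n : ℕ), ∀ u ∈ V, ∀ v ∈ V, ∀ w ∈ V,
        P m u (P n v w) - P n v (P m u w) =
          ∑ j ∈ Finset.range (m + 1), ((m.choose j : F)) • P (m + n - j) (P j u v) w)) := by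
  constructor
  · rintro ⟨hS, hJ⟩
    exact ⟨fun n N u _ v _ => hS n N u v, fun m n u _ v _ w _ => hJ m n u v w⟩
  rintro ⟨hS, hJ⟩
  constructor
  · have all : ∀ u v, kacS D P u v := by
      intro u
      refine kac_span_all D V hspan (fun u => ∀ v, kacS D P u v) ?_ ?_ ?_ ?_ u
      · intro u hu
        refine kac_span_all D V hspan _ ?_ ?_ ?_ ?_
        · intro v hv
          rw [kacS_iff D P locality]
          exact fun n N => hS n N u hu v hv
        · exact fun x y hx hy => kacS_add_right D P hx hy
        · exact fun a x hx => kacS_smul_right D P a hx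
        · exact fun x hx => kacS_D_right D P locality sesqui_zero sesqui deriv hx
      · exact fun x y hx hy v => kacS_add_left D P (hx v) (hy v)
      · exact fun a x hx v => kacS_smul_left D P a (hx v)
      · exact fun x hx v => kacS_D_left D P locality sesqui_zero sesqui deriv (hx v)
    intro n N u v
    exact (kacS_iff D P locality u v).1 (all u v) n N
  · have all : ∀ u v w, kacJ P u v w := by
      intro u
      refine kac_span_all D V hspan (fun u => ∀ v w, kacJ P u v w) ?_ ?_ ?_ ?_ u
      · intro u hu v
        refine kac_span_all D V hspan (fun v => ∀ w, kacJ P u v w) ?_ ?_ ?_ ?_ v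
        · intro v hv
          refine kac_span_all D V hspan _ ?_ ?_ ?_ ?_
          · exact fun w hw m n => hJ m n u hu v hv w hw
          · intro x y hx hy m n
            simp only [map_add, smul_add, Finset.sum_add_distrib]
            rw [← hx m n, ← hy m n]; abel
          · intro a x hx m n
            simp only [map_smul]
            simp_rw [smul_comm _ a]
            rw [← smul_sub, hx m n, Finset.smul_sum]
          · exact fun x hx => kacJ_D_right D P sesqui_zero sesqui deriv hx
        · intro x y hx hy w m n
          simp only [map_add, LinearMap.add_apply, smul_add, Finset.sum_add_distrib]
          rw [← hx w m n, ← hy w m n]; abel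
        · intro a x hx w m n
          simp only [map_smul, LinearMap.smul_apply]
          simp_rw [smul_comm _ a]
          rw [← smul_sub, hx w m n, Finset.smul_sum]
        · exact fun x hx w => kacJ_D_mid D P sesqui_zero sesqui deriv (hx w)
      · intro x y hx hy v w m n
        simp only [map_add, LinearMap.add_apply, smul_add, Finset.sum_add_distrib]
        rw [← hx v w m n, ← hy v w m n]; abel
      · intro a x hx v w m n
        simp only [map_smul, LinearMap.smul_apply]
        simp_rw [smul_comm _ a]
        rw [← smul_sub, hx v w m n, Finset.smul_sum]
      · exact fun x hx v w => kacJ_D_left D P sesqui_zero sesqui (hx v w)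
    exact fun m n u v w => all u v w m n
end

section
/- Every simple conformal algebra of finite type over an algebraically closed field F of characteristic 0 is isomorphic either to the Virasoro conformal algebra R_W or to the current conformal algebra R(G) for some finite-dimensional simple Lie algebra G over F. -/
/-- A conformal algebra over a field `F` of characteristic 0. -/
structure ConformalAlgebra (F : Type*) (R : Type*) [Field F] [CharZero F]
    [AddCommGroup R] [Module F R] where
  D : R →ₗ[F] R
  prod : ℕ → R →ₗ[F] R →ₗ[F] R
  locality : ∀ u v : R, ∃ N : ℕ, ∀ n ≥ N, prod n u v = 0
  sesqui_zero : ∀ u v : R, prod 0 (D u) v = 0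
  sesqui : ∀ (n : ℕ) (u v : R), prod (n + 1) (D u) v = -(((n + 1 : ℕ) : F)) • prod n u v
  skew : ∀ (n N : ℕ) (u v : R), (∀ j ≥ N, prod (n + j) v u = 0) →
    prod n u v = ∑ j ∈ Finset.range N,
      ((-1 : F) ^ (n + j + 1) * ((j.factorial : F)⁻¹)) • ((D ^ j) (prod (n + j) v u))
  jacobi : ∀ (m n : ℕ) (u v w : R),
    prod m u (prod n v w) - prod n v (prod m u w) =
      ∑ j ∈ Finset.range (m + 1), ((m.choose j : F)) • prod (m + n - j) (prod j u v) w

set_option linter.unusedSectionVars false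
set_option linter.style.haveILetI false


namespace CA

section Laurent
variable {F : Type*} [Field F]

/-- Divided-power derivatives on Laurent polynomials. -/
noncomputable def hs (k : ℕ) : LaurentPolynomial F →ₗ[F] LaurentPolynomial F :=
  (Finsupp.lsum F (fun n : ℤ => LinearMap.toSpanSingleton F (LaurentPolynomial F)
    (AddMonoidAlgebra.single (n - k) ((Ring.choose n k : ℤ) : F)))) ∘ₗ
    (AddMonoidAlgebra.coeffLinearEquiv (S := F) (M := ℤ) F).toLinearMap

lemma hs_single (k : ℕ) (n : ℤ) (c : F) :
    hs k (AddMonoidAlgebra.single n c : LaurentPolynomial F) =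
      AddMonoidAlgebra.single (n - k) (((Ring.choose n k : ℤ) : F) * c) := by
  simp only [hs, LinearMap.comp_apply, LinearEquiv.coe_coe]
  change (Finsupp.lsum F _) (Finsupp.single n c) = _
  rw [Finsupp.lsum_single, LinearMap.toSpanSingleton_apply, AddMonoidAlgebra.smul_single,
    smul_eq_mul, mul_comm]

/-- Two linear maps agreeing on monomials agree. -/
lemma lau_ext {V : Type*} [AddCommMonoid V] [Module F V] {f g : LaurentPolynomial F →ₗ[F] V}
    (h : ∀ n : ℤ, f (LaurentPolynomial.T n) = g (LaurentPolynomial.T n)) : f = g := by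
  apply LinearMap.ext
  intro p
  induction p using LaurentPolynomial.induction_on' with
  | add p q hp hq => rw [map_add, map_add, hp, hq]
  | C_mul_T n a =>
    rw [← LaurentPolynomial.smul_eq_C_mul, map_smul, map_smul, h]

lemma hs_coeff (k : ℕ) (f : LaurentPolynomial F) (n : ℤ) :
    (hs k f).coeff n = ((Ring.choose (n + k) k : ℤ) : F) * f.coeff (n + k) := by
  induction f using LaurentPolynomial.induction_on' with
  | add p q hp hq => simp [map_add, hp, hq, mul_add]
  | C_mul_T m a =>
    rw [← LaurentPolynomial.single_eq_C_mul_T, hs_single]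
    simp only [AddMonoidAlgebra.coeff_single, Finsupp.single_apply]
    by_cases h : m = n + k
    · subst h; simp
    · rw [if_neg h, if_neg (by omega)]; simp

lemma hs_zero (f : LaurentPolynomial F) : hs 0 f = f := by
  apply LaurentPolynomial.ext; intro n; simp [hs_coeff]

lemma T_one_mul_coeff (m : ℤ) (f : LaurentPolynomial F) (n : ℤ) :
    (LaurentPolynomial.T m * f).coeff n = f.coeff (n - m) := by
  rw [LaurentPolynomial.T, AddMonoidAlgebra.coeff_single_mul_apply]
  simp [sub_eq_neg_add]

lemma hs_T_mul (k : ℕ) (f : LaurentPolynomial F) :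
    hs (k + 1) (LaurentPolynomial.T 1 * f) =
      LaurentPolynomial.T 1 * hs (k + 1) f + hs k f := by
  apply LaurentPolynomial.ext; intro n
  simp only [hs_coeff, T_one_mul_coeff, AddMonoidAlgebra.coeff_add, Finsupp.add_apply]
  have h := Ring.choose_succ_succ (n + k : ℤ) k
  have e1 : n + ((k + 1 : ℕ) : ℤ) = (n + k) + 1 := by push_cast; ring
  have e2 : n - 1 + ((k + 1 : ℕ) : ℤ) = n + k := by push_cast; ring
  have e3 : (n + k : ℤ) + 1 - 1 = n + k := by ring
  rw [e1, e2, e3, h]; push_cast; ring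

lemma hs_one (k : ℕ) : hs (k + 1) (1 : LaurentPolynomial F) = 0 := by
  have := hs_single (F := F) (k + 1) 0 1
  rw [AddMonoidAlgebra.one_def, this, Ring.choose_zero_succ]; simp

lemma coeff_mul_top {f g : LaurentPolynomial F} {a b : ℤ} (hf : ∀ n, a < n → f.coeff n = 0)
    (hg : ∀ n, b < n → g.coeff n = 0) : (f * g).coeff (a + b) = f.coeff a * g.coeff b := by
  classical
  rw [AddMonoidAlgebra.coeff_mul_apply_left, Finsupp.sum]
  rw [Finset.sum_eq_single a]
  · simp
  · intro n _ hn
    rcases lt_or_gt_of_ne hn with h | h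
    · rw [hg (-n + (a + b)) (by omega)]; simp
    · rw [hf n h]; simp
  · intro h; rw [Finsupp.notMem_support_iff.mp h]; simp

lemma coeff_mul_above {f g : LaurentPolynomial F} {a b : ℤ} (hf : ∀ n, a < n → f.coeff n = 0)
    (hg : ∀ n, b < n → g.coeff n = 0) (m : ℤ) (hm : a + b < m) : (f * g).coeff m = 0 := by
  classical
  rw [AddMonoidAlgebra.coeff_mul_apply_left, Finsupp.sum]
  apply Finset.sum_eq_zero
  intro n _
  rcases le_or_gt n a with h | h
  · rw [hg (-n + m) (by omega)]; simp
  · rw [hf n h]; simp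

lemma exists_deg_bound (f : LaurentPolynomial F) : ∃ a : ℤ, ∀ n, a < n → f.coeff n = 0 := by
  obtain ⟨a, ha⟩ := f.coeff.support.bddAbove
  refine ⟨a, fun n hn => ?_⟩
  by_contra h
  exact absurd (ha (Finset.mem_coe.mpr (Finsupp.mem_support_iff.mpr h))) (not_le.mpr hn)

end Laurent

section MatDeg
variable {F : Type*} [Field F] {ι : Type*} [Fintype ι] [DecidableEq ι]

/-- weighted degree bound for matrices of Laurent polynomials -/
def MD (u : ι → ℝ) (s : ℝ) (M : Matrix ι ι (LaurentPolynomial F)) : Prop :=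
  ∀ i j (n : ℤ), s + u j < n + u i → (M i j).coeff n = 0

open Classical in
/-- weighted symbol -/
noncomputable def gc (u : ι → ℝ) (s : ℝ) (M : Matrix ι ι (LaurentPolynomial F)) : Matrix ι ι F :=
  fun i j => if ((⌊s + u j - u i⌋ : ℤ) : ℝ) = s + u j - u i then
    (M i j).coeff ⌊s + u j - u i⌋ else 0

variable {u : ι → ℝ}

lemma gc_exact (s : ℝ) (M : Matrix ι ι (LaurentPolynomial F)) (i j : ι) (n : ℤ)
    (h : (n : ℝ) + u i = s + u j) : gc u s M i j = (M i j).coeff n := by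
  have h1 : s + u j - u i = n := by linarith
  simp [gc, h1]

lemma gc_notint (s : ℝ) (M : Matrix ι ι (LaurentPolynomial F)) (i j : ι)
    (h : ∀ n : ℤ, (n : ℝ) + u i ≠ s + u j) : gc u s M i j = 0 := by
  rw [gc, if_neg]
  intro h'
  exact h _ (by rw [h']; ring)

lemma gc_add (s : ℝ) (M N : Matrix ι ι (LaurentPolynomial F)) :
    gc u s (M + N) = gc u s M + gc u s N := by
  ext i j; simp only [gc, Matrix.add_apply]; split_ifs <;> simp

lemma gc_smul (s : ℝ) (c : F) (M : Matrix ι ι (LaurentPolynomial F)) :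
    gc u s (c • M) = c • gc u s M := by
  ext i j; simp only [gc, Matrix.smul_apply]; split_ifs <;> simp

/-- symbol as a linear map -/
noncomputable def gcl (u : ι → ℝ) (s : ℝ) :
    Matrix ι ι (LaurentPolynomial F) →ₗ[F] Matrix ι ι F where
  toFun := gc u s
  map_add' := gc_add s
  map_smul' := gc_smul s

lemma gcl_apply (s : ℝ) (M : Matrix ι ι (LaurentPolynomial F)) : gcl u s M = gc u s M := rfl

lemma gc_sub (s : ℝ) (M N : Matrix ι ι (LaurentPolynomial F)) :
    gc u s (M - N) = gc u s M - gc u s N := (gcl u s).map_sub M N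

lemma gc_zero (s : ℝ) : gc u s (0 : Matrix ι ι (LaurentPolynomial F)) = 0 := (gcl u s).map_zero

lemma gc_sum {κ : Type*} (t : Finset κ) (s : ℝ) (M : κ → Matrix ι ι (LaurentPolynomial F)) :
    gc u s (∑ k ∈ t, M k) = ∑ k ∈ t, gc u s (M k) := map_sum (gcl u s) _ _

lemma MD.gc_lt {s t : ℝ} {M : Matrix ι ι (LaurentPolynomial F)} (h : MD u s M) (hst : s < t) :
    gc u t M = 0 := by
  ext i j
  simp only [gc]
  split_ifs with h1
  · apply h; linarith
  · rfl

lemma MD.mono {s t : ℝ} {M : Matrix ι ι (LaurentPolynomial F)} (h : MD u s M) (hst : s ≤ t) :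
    MD u t M := fun i j n hn => h i j n (by linarith)

lemma MD.add {s : ℝ} {M N : Matrix ι ι (LaurentPolynomial F)} (h : MD u s M) (h' : MD u s N) :
    MD u s (M + N) := fun i j n hn => by simp [h i j n hn, h' i j n hn]

lemma MD.sub {s : ℝ} {M N : Matrix ι ι (LaurentPolynomial F)} (h : MD u s M) (h' : MD u s N) :
    MD u s (M - N) := fun i j n hn => by simp [h i j n hn, h' i j n hn]

lemma MD.sum {κ : Type*} {t : Finset κ} {s : ℝ} {M : κ → Matrix ι ι (LaurentPolynomial F)}
    (h : ∀ k ∈ t, MD u s (M k)) : MD u s (∑ k ∈ t, M k) := fun i j n hn => by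
  rw [Matrix.sum_apply, AddMonoidAlgebra.coeff_sum, Finsupp.finsetSum_apply]
  exact Finset.sum_eq_zero fun k hk => h k hk i j n hn

lemma MD.entry {s : ℝ} {M : Matrix ι ι (LaurentPolynomial F)} (h : MD u s M) (i j : ι) :
    ∀ n : ℤ, ⌊s + u j - u i⌋ < n → (M i j).coeff n = 0 := by
  intro n hn
  apply h
  have := Int.floor_lt.mp hn
  linarith

lemma MD.mul {s t : ℝ} {M N : Matrix ι ι (LaurentPolynomial F)} (h : MD u s M) (h' : MD u t N) :
    MD u (s + t) (M * N) := by
  intro i j n hn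
  rw [Matrix.mul_apply, AddMonoidAlgebra.coeff_sum, Finsupp.finsetSum_apply]
  refine Finset.sum_eq_zero fun l _ => ?_
  refine coeff_mul_above (h.entry i l) (h'.entry l j) n ?_
  have h1 := Int.floor_le (s + u l - u i)
  have h2 := Int.floor_le (t + u j - u l)
  have : ((⌊s + u l - u i⌋ + ⌊t + u j - u l⌋ : ℤ) : ℝ) < n := by push_cast; linarith
  exact_mod_cast this

lemma MD.gc_mul {s t : ℝ} {M N : Matrix ι ι (LaurentPolynomial F)} (h : MD u s M)
    (h' : MD u t N) : gc u (s + t) (M * N) = gc u s M * gc u t N := by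
  ext i j
  rw [Matrix.mul_apply]
  by_cases hn : ∃ n : ℤ, (n : ℝ) + u i = s + t + u j
  · obtain ⟨n, hn⟩ := hn
    rw [gc_exact _ _ i j n hn, Matrix.mul_apply, AddMonoidAlgebra.coeff_sum,
      Finsupp.finsetSum_apply]
    refine Finset.sum_congr rfl fun l _ => ?_
    by_cases hl : ∃ m : ℤ, (m : ℝ) + u i = s + u l
    · obtain ⟨m, hm⟩ := hl
      have hm2 : ((n - m : ℤ) : ℝ) + u l = t + u j := by push_cast; linarith
      rw [gc_exact _ _ i l m hm, gc_exact _ _ l j (n - m) hm2]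
      have := coeff_mul_top (a := m) (b := n - m) (f := M i l) (g := N l j)
        (fun k hk => h i l k (by
          have : (m : ℝ) < k := by exact_mod_cast hk
          linarith)) (fun k hk => h' l j k (by
          have : ((n - m : ℤ) : ℝ) < k := by exact_mod_cast hk
          linarith))
      rw [← this]; congr 1; ring
    · push Not at hl
      rw [gc_notint _ _ i l hl, zero_mul]
      refine coeff_mul_above (h.entry i l) (h'.entry l j) n ?_
      have h1 := Int.floor_le (s + u l - u i)
      have h2 := Int.floor_le (t + u j - u l)
      have h3 : (⌊s + u l - u i⌋ : ℝ) ≠ s + u l - u i := fun h3 => hl _ (by rw [h3]; ring)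
      have h4 := lt_of_le_of_ne h1 h3
      have : ((⌊s + u l - u i⌋ + ⌊t + u j - u l⌋ : ℤ) : ℝ) < n := by push_cast; linarith
      exact_mod_cast this
  · push Not at hn
    rw [gc_notint _ _ i j hn]
    symm
    refine Finset.sum_eq_zero fun l _ => ?_
    by_cases hl : ∃ m : ℤ, (m : ℝ) + u i = s + u l
    · obtain ⟨m, hm⟩ := hl
      rw [gc_notint t N l j, mul_zero]
      intro k hk
      apply hn (m + k); push_cast; linarith
    · push Not at hl
      rw [gc_notint _ _ i l hl, zero_mul]

lemma MD.one : MD u 0 (1 : Matrix ι ι (LaurentPolynomial F)) := by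
  intro i j n hn
  by_cases hij : i = j
  · subst hij
    have h0 : (0:ℝ) < n := by linarith
    have h1 : n ≠ 0 := by rintro rfl; simp at h0
    rw [Matrix.one_apply_eq, AddMonoidAlgebra.one_def, AddMonoidAlgebra.coeff_single,
      Finsupp.single_eq_of_ne (by simpa using h1)]
  · simp [Matrix.one_apply_ne hij]

lemma gc_one : gc u 0 (1 : Matrix ι ι (LaurentPolynomial F)) = 1 := by
  ext i j
  by_cases hij : i = j
  · subst hij
    rw [gc_exact _ _ i i 0 (by simp), Matrix.one_apply_eq, AddMonoidAlgebra.one_def,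
      AddMonoidAlgebra.coeff_single, Matrix.one_apply_eq, Finsupp.single_eq_same]
  · rw [gc, Matrix.one_apply_ne hij]; simp [Matrix.one_apply_ne hij]

lemma MD.pow {s : ℝ} {M : Matrix ι ι (LaurentPolynomial F)} (h : MD u s M) (k : ℕ) :
    MD u (k * s) (M ^ k) := by
  induction k with
  | zero => simpa using MD.one
  | succ k ih => rw [pow_succ]; convert ih.mul h using 1; push_cast; ring

lemma MD.gc_pow {s : ℝ} {M : Matrix ι ι (LaurentPolynomial F)} (h : MD u s M) (k : ℕ) :
    gc u (k * s) (M ^ k) = gc u s M ^ k := by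
  induction k with
  | zero => simpa using gc_one
  | succ k ih =>
    rw [pow_succ, pow_succ, ← ih, ← (h.pow k).gc_mul h]; congr 1; push_cast; ring

lemma gc_trace (s : ℝ) {M : Matrix ι ι (LaurentPolynomial F)} (h : M.trace = 0) :
    (gc u s M).trace = 0 := by
  by_cases hs : ∃ n : ℤ, (n : ℝ) = s
  · obtain ⟨n, rfl⟩ := hs
    have : (gc u (n : ℝ) M).trace = M.trace.coeff n := by
      rw [Matrix.trace, Matrix.trace, AddMonoidAlgebra.coeff_sum, Finsupp.finsetSum_apply]
      exact Finset.sum_congr rfl fun i _ => gc_exact _ _ i i n rfl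
    rw [this, h]; rfl
  · push Not at hs
    rw [Matrix.trace]
    refine Finset.sum_eq_zero fun i _ => gc_notint _ _ i i ?_
    intro n hn; exact hs n (by linarith)

lemma MD.hs {s : ℝ} {M : Matrix ι ι (LaurentPolynomial F)} (h : MD u s M) (k : ℕ) :
    MD u (s - k) (M.map (hs k)) := by
  intro i j n hn
  rw [Matrix.map_apply, hs_coeff, h i j (n + k) (by push_cast; linarith), mul_zero]

lemma gc_hs_one_apply (s : ℝ) (M : Matrix ι ι (LaurentPolynomial F)) (i j : ι) (n : ℤ)
    (hn : (n : ℝ) + u i = s + u j) :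
    gc u (s - 1) (M.map (CA.hs 1)) i j = (n : F) * gc u s M i j := by
  rw [gc_exact _ _ i j (n - 1) (by push_cast; linarith), gc_exact _ _ i j n hn]
  simp [hs_coeff]

end MatDeg
end CA


namespace CA

section Aux
variable {F : Type*} [Field F] {ι : Type*} [Fintype ι] [DecidableEq ι]

lemma nil_of_trace [CharZero F] (M : Matrix ι ι F) (h : ∀ k : ℕ, (M ^ (k + 1)).trace = 0) :
    IsNilpotent M := by
  open Polynomial in
  have hp0 : M.charpoly ≠ 0 := M.charpoly_monic.ne_zero
  obtain ⟨g, hg, hg0⟩ := Polynomial.exists_eq_pow_rootMultiplicity_mul_and_not_dvd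
    M.charpoly hp0 0
  set a := M.charpoly.rootMultiplicity 0
  rw [map_zero, sub_zero] at hg hg0
  have hcop : IsCoprime ((X : F[X]) ^ (a + 1)) g :=
    IsCoprime.pow_left ((Polynomial.irreducible_X.coprime_iff_not_dvd).mpr hg0)
  obtain ⟨s, t, hst⟩ := hcop
  have hM : M ^ a * aeval M g = 0 := by
    have := Matrix.aeval_self_charpoly M
    rw [hg] at this
    simpa using this
  have hst' : aeval M s * M ^ (a + 1) + aeval M t * aeval M g = 1 := by
    have := congrArg (aeval M) hst
    simpa using this
  have hcomm : ∀ p q : F[X], aeval M p * aeval M q = aeval M q * aeval M p := fun p q => by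
    rw [← map_mul, ← map_mul, mul_comm]
  have hX : ∀ k, M ^ k = aeval M ((X : F[X]) ^ k) := fun k => by simp
  set e := aeval M s * M ^ (a + 1) with he
  have hidem : IsIdempotentElem e := by
    have h1 : e * (aeval M t * aeval M g) = 0 := by
      rw [he, hcomm t g, pow_succ', ← mul_assoc (aeval M s), mul_assoc, ← mul_assoc (M ^ a), hM]
      simp
    have h2 : e * (e + aeval M t * aeval M g) = e := by rw [hst', mul_one]
    rw [mul_add, h1, add_zero] at h2
    exact h2
  have htr : e.trace = 0 := by
    rw [he, hX, ← map_mul]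
    have : ∀ p : F[X], (aeval M (p * X ^ (a + 1))).trace = 0 := by
      intro p
      induction p using Polynomial.induction_on' with
      | add p q hp hq => rw [add_mul, map_add, Matrix.trace_add, hp, hq, add_zero]
      | monomial n c =>
        rw [map_mul, aeval_monomial, ← hX, mul_assoc, ← pow_add, Algebra.algebraMap_eq_smul_one,
          smul_mul_assoc, one_mul, Matrix.trace_smul, ← add_assoc, h, smul_zero]
    exact this s
  have he0 : e = 0 := by
    have h1 : IsIdempotentElem (Matrix.toLin' e) := by
      rw [IsIdempotentElem, Module.End.mul_eq_comp, ← Matrix.toLin'_mul, hidem]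
    have h2 : LinearMap.trace F _ (Matrix.toLin' e) = 0 := by
      rw [Matrix.trace_toLin'_eq, htr]
    have := (LinearMap.IsIdempotentElem.trace_eq_zero_iff h1).mp h2
    simpa using this
  rw [he0, zero_add] at hst'
  refine ⟨a, ?_⟩
  calc M ^ a = M ^ a * (aeval M t * aeval M g) := by rw [hst', mul_one]
    _ = 0 := by rw [hcomm t g, ← mul_assoc, hM, zero_mul]

lemma comm_model {L : Type*} [AddCommGroup L] [Module F L] (σ : L →ₗ[F] Matrix ι ι F)
    (hc : ∀ x y, σ x * σ y = σ y * σ x) :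
    ∃ (S : Subalgebra F (Matrix ι ι F)) (_ : ∀ a b : S, a * b = b * a),
      ∀ x, σ x ∈ S := by
  refine ⟨Algebra.adjoin F (Set.range σ), ?_, fun x => Algebra.subset_adjoin ⟨x, rfl⟩⟩
  intro a b
  have := Algebra.isMulCommutative_adjoin F (s := Set.range σ)
    (by rintro _ ⟨x, rfl⟩ _ ⟨y, rfl⟩; exact hc x y)
  exact this.is_comm.comm a b

lemma list_prod_mem_pow {S : Type*} [CommRing S] (I : Ideal S) (l : List S)
    (h : ∀ x ∈ l, x ∈ I) : l.prod ∈ I ^ l.length := by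
  induction l with
  | nil => simp
  | cons a l ih =>
    rw [List.prod_cons, List.length_cons, pow_succ']
    exact Ideal.mul_mem_mul (h a (by simp)) (ih fun x hx => h x (by simp [hx]))

lemma exists_not_nil {L : Type*} [AddCommGroup L] [Module F L] (σ : L →ₗ[F] Matrix ι ι F)
    (hc : ∀ x y, σ x * σ y = σ y * σ x)
    (hnn : ∀ k : ℕ, ∃ l : List L, l.length = k ∧ (l.map σ).prod ≠ 0) :
    ∃ x, ¬ IsNilpotent (σ x) := by
  by_contra! hall
  obtain ⟨S, hS, hσ⟩ := comm_model σ hc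
  letI : CommRing S := { (inferInstance : Ring S) with mul_comm := hS }
  haveI : Module.Finite F S := inferInstance
  haveI : IsNoetherianRing S := IsNoetherianRing.of_finite F S
  obtain ⟨k, hk⟩ := IsNoetherianRing.isNilpotent_nilradical S
  obtain ⟨l, hl, hl0⟩ := hnn k
  apply hl0
  have h1 : (l.map fun x => (⟨σ x, hσ x⟩ : S)).prod ∈ nilradical S ^ k := by
    have := list_prod_mem_pow (nilradical S) (l.map fun x => (⟨σ x, hσ x⟩ : S)) (by
      intro y hy
      obtain ⟨x, -, rfl⟩ := List.mem_map.mp hy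
      obtain ⟨n, hn⟩ := hall x
      exact ⟨n, Subtype.ext (by simpa using hn)⟩)
    rwa [List.length_map, hl] at this
  rw [hk, Ideal.zero_eq_bot, Ideal.mem_bot] at h1
  have h2 := congrArg (S.val : S → Matrix ι ι F) h1
  rw [map_list_prod, List.map_map] at h2
  have h3 : (⇑S.val ∘ fun x => (⟨σ x, hσ x⟩ : S)) = σ := rfl
  rw [h3] at h2
  rw [h2, map_zero]

lemma exists_char [IsAlgClosed F] {S : Type*} [CommRing S] [Algebra F S] [Module.Finite F S]
    (x : S) (hx : ¬ IsNilpotent x) : ∃ χ : S →ₐ[F] F, χ x ≠ 0 := by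
  have h1 : x ∉ nilradical S := hx
  rw [nilradical_eq_sInf, Submodule.mem_sInf] at h1
  push Not at h1
  obtain ⟨p, hp, hxp⟩ : ∃ p : Ideal S, p.IsPrime ∧ x ∉ p := h1
  haveI : Ideal.IsPrime p := hp
  have hb := IsAlgClosed.algebraMap_bijective_of_isIntegral (k := F) (K := S ⧸ p)
  let e := (AlgEquiv.ofBijective (Algebra.ofId F (S ⧸ p)) hb).symm
  refine ⟨(e : (S ⧸ p) →ₐ[F] F).comp (Ideal.Quotient.mkₐ F p), ?_⟩
  simp only [AlgHom.comp_apply]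
  intro h
  apply hxp
  have h3 : e (Ideal.Quotient.mkₐ F p x) = 0 := h
  rw [EmbeddingLike.map_eq_zero_iff] at h3
  exact Ideal.Quotient.eq_zero_iff_mem.mp h3

lemma polar [CharZero F] (n : ℕ) (A B C D : Matrix ι ι F) (hAB : A * B = B * A)
    (h : ∀ t : F, ((A + t • B) ^ n * (C + t • D)).trace = 0) :
    (A ^ n * D).trace + n * (A ^ (n - 1) * B * C).trace = 0 := by
  open Polynomial in
  let α : ℕ → F := fun m => (A ^ (n - m) * B ^ m * C).trace * (n.choose m)
  let β : ℕ → F := fun m => (A ^ (n - m) * B ^ m * D).trace * (n.choose m)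
  let p : F[X] := ∑ m ∈ Finset.range (n + 1), (monomial m (α m) + monomial (m + 1) (β m))
  have hp : p = 0 := by
    apply Polynomial.funext
    intro t
    rw [eval_zero, ← h t]
    have hc : Commute (t • B) A := (Commute.smul_left (show Commute B A from hAB.symm) t)
    rw [add_comm A, hc.add_pow, Finset.sum_mul, Matrix.trace_sum, Polynomial.eval_finsetSum]
    refine Finset.sum_congr rfl fun m _ => ?_
    have hcm : B ^ m * A ^ (n - m) = A ^ (n - m) * B ^ m :=
      ((show Commute B A from hAB.symm).pow_pow m (n - m))
    rw [eval_add, eval_monomial, eval_monomial, _root_.smul_pow, smul_mul_assoc, hcm, mul_add]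
    have e : ∀ (X Y : Matrix ι ι F) (c : ℕ), X * (c : Matrix ι ι F) * Y = (c : F) • (X * Y) := by
      intro X Y c
      rw [← nsmul_eq_mul', smul_mul_assoc, Nat.cast_smul_eq_nsmul]
    rw [e, e, Matrix.trace_add]
    simp only [smul_mul_assoc, mul_smul_comm, Matrix.trace_smul, smul_eq_mul, α, β]
    ring
  have h1 := congrArg (fun q : F[X] => q.coeff 1) hp
  simp only [p, Polynomial.finsetSum_coeff, coeff_add, coeff_monomial, coeff_zero] at h1
  rw [Finset.sum_add_distrib] at h1
  have hb : (∑ m ∈ Finset.range (n + 1), if m + 1 = 1 then β m else 0) = β 0 := by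
    rw [Finset.sum_eq_single 0]
    · simp
    · intro b _ hb; simp [hb]
    · simp
  have ha : (∑ m ∈ Finset.range (n + 1), if m = 1 then α m else 0) = α 1 := by
    rw [Finset.sum_eq_single 1]
    · simp
    · intro b _ hb; simp [hb]
    · intro hn
      have : n = 0 := by
        simp at hn; omega
      subst this; simp [α]
  rw [ha, hb] at h1
  simp only [α, β, Nat.sub_zero, pow_zero, mul_one, Nat.choose_zero_right, Nat.cast_one,
    Nat.choose_one_right, pow_one] at h1
  linear_combination h1

end Aux
end CA


namespace CA

section CaseAnalysis
variable {F : Type*} [Field F] [CharZero F] {ι : Type*} [Fintype ι] [DecidableEq ι]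

lemma exists_lam : ∃ lam : ℝ →+ F, lam 1 = 1 := by
  obtain ⟨g, hg⟩ := LinearMap.exists_leftInverse_of_injective
    (LinearMap.toSpanSingleton ℚ ℝ 1) (by
      rw [LinearMap.ker_eq_bot]
      intro a b h
      simpa using h)
  refine ⟨(Rat.castHom F).toAddMonoidHom.comp g.toAddMonoidHom, ?_⟩
  have h1 : g 1 = 1 := by
    have := LinearMap.congr_fun hg 1
    simpa using this
  simp [h1]

lemma gc_hs_one (lam : ℝ →+ F) (hl : lam 1 = 1) (u : ι → ℝ) (s : ℝ)
    (M : Matrix ι ι (LaurentPolynomial F)) :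
    gc u (s - 1) (M.map (hs 1)) = lam s • gc u s M +
      (gc u s M * Matrix.diagonal (fun i => lam (u i)) -
        Matrix.diagonal (fun i => lam (u i)) * gc u s M) := by
  ext i j
  simp only [Matrix.add_apply, Matrix.sub_apply, Matrix.smul_apply, Matrix.mul_diagonal,
    Matrix.diagonal_mul, smul_eq_mul]
  by_cases hn : ∃ n : ℤ, (n : ℝ) + u i = s + u j
  · obtain ⟨n, hn⟩ := hn
    rw [gc_hs_one_apply s M i j n hn]
    have h1 : lam (n : ℝ) = (n : F) := by
      have : (n : ℝ) = n • (1 : ℝ) := by simp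
      rw [this, map_zsmul, hl]; simp
    have h2 : lam (n : ℝ) + lam (u i) = lam s + lam (u j) := by rw [← map_add, hn, map_add]
    rw [h1] at h2
    linear_combination (gc u s M i j) * h2
  · push Not at hn
    rw [gc_notint s M i j hn, gc_notint]
    · simp
    · intro n h; apply hn (n + 1); push_cast; linarith

lemma tr_comm_zero (A X B : Matrix ι ι F) (h : A * X = X * A) :
    (A * (X * B - B * X)).trace = 0 := by
  rw [mul_sub, Matrix.trace_sub, ← mul_assoc, h, mul_assoc, Matrix.trace_mul_comm X,
    mul_assoc, sub_self]

lemma tr_comm_zero' (A X B : Matrix ι ι F) (h : A * X = X * A) :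
    (A * (B * X - X * B)).trace = 0 := by
  rw [← neg_sub, mul_neg, Matrix.trace_neg, tr_comm_zero A X B h, neg_zero]

variable {L : Type*} [LieRing L] [LieAlgebra F L] {δ : L →ₗ[F] L}
  {Z : L →ₗ[F] Matrix ι ι (LaurentPolynomial F)} {u : ι → ℝ} {P : ℝ}

/-- The fundamental formula for the matrices. -/
def ZLie (δ : L →ₗ[F] L) (Z : L →ₗ[F] Matrix ι ι (LaurentPolynomial F)) : Prop :=
  ∀ (x y : L) (K : ℕ), (δ ^ K) x = 0 → (δ ^ K) y = 0 → Z ⁅x, y⁆ =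
    ∑ k ∈ Finset.range K, (Z ((δ ^ k) x) * (Z y).map (hs k) - Z ((δ ^ k) y) * (Z x).map (hs k))

lemma map_hs_zero (M : Matrix ι ι (LaurentPolynomial F)) : M.map (hs 0) = M := by
  ext i j : 2; simp [hs_zero]

lemma pow_zero_of_le {V : Type*} [AddCommGroup V] [Module F V] {δ : V →ₗ[F] V} {x : V} {k l : ℕ}
    (h : (δ ^ k) x = 0) (hkl : k ≤ l) : (δ ^ l) x = 0 := by
  rw [← Nat.sub_add_cancel hkl, pow_add, Module.End.mul_apply, h, map_zero]

/-- symbol -/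
noncomputable def sg (Z : L →ₗ[F] Matrix ι ι (LaurentPolynomial F)) (u : ι → ℝ) (P : ℝ) :
    L →ₗ[F] Matrix ι ι F := gcl u P ∘ₗ Z

lemma sg_apply (x : L) : sg Z u P x = gc u P (Z x) := rfl

lemma lie_expand (hnil : ∀ x : L, ∃ k, (δ ^ k) x = 0) (hZ : ZLie δ Z) (hd : ∀ x, MD u P (Z x))
    (x y : L) : ∃ Q, MD u (2 * P - 2) Q ∧ Z ⁅x, y⁆ = (Z x * Z y - Z y * Z x) +
      (Z (δ x) * (Z y).map (hs 1) - Z (δ y) * (Z x).map (hs 1)) + Q := by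
  obtain ⟨a, ha⟩ := hnil x
  obtain ⟨b, hb⟩ := hnil y
  have := hZ x y (a + b + 2) (pow_zero_of_le ha (by omega)) (pow_zero_of_le hb (by omega))
  rw [Finset.sum_range_succ', Finset.sum_range_succ'] at this
  refine ⟨∑ k ∈ Finset.range (a + b), (Z ((δ ^ (k + 1 + 1)) x) * (Z y).map (hs (k + 1 + 1)) -
    Z ((δ ^ (k + 1 + 1)) y) * (Z x).map (hs (k + 1 + 1))), ?_, this.trans ?_⟩
  rotate_left
  · simp only [zero_add, pow_zero, pow_one, map_hs_zero, Module.End.one_apply]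
    rw [add_comm, add_comm (Finset.sum _ _), ← add_assoc]
  · apply MD.sum
    intro k _
    have key : ∀ x y : L, MD u (2 * P - 2) (Z x * (Z y).map (hs (k + 1 + 1))) := by
      intro x y
      refine ((hd x).mul ((hd y).hs (k + 1 + 1))).mono ?_
      push_cast
      have : (0:ℝ) ≤ k := by positivity
      linarith
    exact (key _ _).sub (key _ _)

lemma MD1 (hd : ∀ x, MD u P (Z x)) (x y x' y' : L) :
    MD u (2 * P - 1) (Z x * (Z y).map (hs 1) - Z x' * (Z y').map (hs 1)) := by
  have key : ∀ x y : L, MD u (2 * P - 1) (Z x * (Z y).map (hs 1)) := by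
    intro x y
    refine ((hd x).mul ((hd y).hs 1)).mono ?_
    push_cast
    linarith
  exact (key _ _).sub (key _ _)

lemma gc1 (hd : ∀ x, MD u P (Z x)) (x y x' y' : L) :
    gc u (2 * P - 1) (Z x * (Z y).map (hs 1) - Z x' * (Z y').map (hs 1)) =
      sg Z u P x * gc u (P - 1) ((Z y).map (hs 1)) -
      sg Z u P x' * gc u (P - 1) ((Z y').map (hs 1)) := by
  have key : ∀ x y : L, gc u (2 * P - 1) (Z x * (Z y).map (hs 1)) =
      sg Z u P x * gc u (P - 1) ((Z y).map (hs 1)) := by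
    intro x y
    have := (hd x).gc_mul ((hd y).hs 1)
    rw [show (2 * P - 1) = P + (P - ((1 : ℕ) : ℝ)) by push_cast; ring, this, sg_apply]
    simp
  rw [gc_sub, key, key]

lemma sg_comm (hnil : ∀ x : L, ∃ k, (δ ^ k) x = 0) (hZ : ZLie δ Z) (hd : ∀ x, MD u P (Z x))
    (hP : 0 < P) (x y : L) : sg Z u P x * sg Z u P y = sg Z u P y * sg Z u P x := by
  obtain ⟨Q, hQ, h⟩ := lie_expand hnil hZ hd x y
  have h1 := congrArg (gc u (P + P)) h
  rw [(hd _).gc_lt (by linarith), gc_add, gc_add, gc_sub, (hd x).gc_mul (hd y),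
    (hd y).gc_mul (hd x), hQ.gc_lt (by linarith), (MD1 hd _ _ _ _).gc_lt (by linarith)] at h1
  rw [add_zero, add_zero] at h1
  exact (sub_eq_zero.mp h1.symm)

lemma case_zero (hnil : ∀ x : L, ∃ k, (δ ^ k) x = 0) (hZ : ZLie δ Z)
    (hd : ∀ x, MD u 0 (Z x)) (x y : L) :
    sg Z u 0 ⁅x, y⁆ = sg Z u 0 x * sg Z u 0 y - sg Z u 0 y * sg Z u 0 x := by
  obtain ⟨Q, hQ, h⟩ := lie_expand hnil hZ hd x y
  have h1 := congrArg (gc u (0 + 0)) h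
  rw [gc_add, gc_add, gc_sub, (hd x).gc_mul (hd y),
    (hd y).gc_mul (hd x), hQ.gc_lt (by linarith), (MD1 hd _ _ _ _).gc_lt (by linarith)] at h1
  rw [add_zero, add_zero] at h1
  simpa [sg_apply] using h1

lemma tr_small (hnil : ∀ x : L, ∃ k, (δ ^ k) x = 0) (hZ : ZLie δ Z) (hd : ∀ x, MD u P (Z x))
    (hP1 : P < 1) (k : ℕ) (x y : L) : (sg Z u P x ^ k * sg Z u P ⁅x, y⁆).trace = 0 := by
  obtain ⟨Q, hQ, h⟩ := lie_expand hnil hZ hd x y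
  set Q' := (Z (δ x) * (Z y).map (hs 1) - Z (δ y) * (Z x).map (hs 1)) + Q with hQ'
  have hQ'd : MD u (2 * P - 1) Q' := (MD1 hd _ _ _ _).add (hQ.mono (by linarith))
  rw [add_assoc] at h
  have h1 : gc u (k * P + P) (Z x ^ k * Z ⁅x, y⁆) = sg Z u P x ^ k * sg Z u P ⁅x, y⁆ := by
    rw [((hd x).pow k).gc_mul (hd _), (hd x).gc_pow]; rfl
  rw [← h1, h, mul_add, gc_add, Matrix.trace_add,
    (((hd x).pow k).mul hQ'd).gc_lt (by linarith), Matrix.trace_zero, add_zero]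
  apply gc_trace
  rw [mul_sub, Matrix.trace_sub, ← mul_assoc, ← mul_assoc, Matrix.trace_mul_comm (Z x ^ k * Z y),
    ← mul_assoc, ← pow_succ, ← pow_succ', sub_self]

lemma case_small (hnil : ∀ x : L, ∃ k, (δ ^ k) x = 0) (hZ : ZLie δ Z) (hd : ∀ x, MD u P (Z x))
    (hP : 0 < P) (hP1 : P < 1) (x0 : L) (hx0 : ¬ IsNilpotent (sg Z u P x0)) :
    ∃ J : LieIdeal F L, J ≠ ⊤ ∧ ∀ x, sg Z u P x = 0 → x ∈ J := by
  have hc := sg_comm hnil hZ hd hP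
  obtain ⟨k, hk⟩ : ∃ k : ℕ, (sg Z u P x0 ^ (k + 1)).trace ≠ 0 := by
    by_contra! h
    exact hx0 (nil_of_trace _ h)
  have hcl : ∀ y : L, (∀ x, (sg Z u P x ^ k * sg Z u P y).trace = 0) →
      ∀ b x : L, (sg Z u P x ^ k * sg Z u P ⁅y, b⁆).trace = 0 := by
    intro y hy b x
    have h1 := polar k (sg Z u P x) (sg Z u P y) (sg Z u P ⁅x, b⁆) (sg Z u P ⁅y, b⁆) (hc _ _)
      (by
        intro t
        have := tr_small hnil hZ hd hP1 k (x + t • y) b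
        simpa using this)
    have h2 := polar k (sg Z u P x) (sg Z u P ⁅x, b⁆) (sg Z u P y) 0 (hc _ _)
      (by
        intro t
        have := hy (x + t • ⁅x, b⁆)
        simpa using this)
    rw [mul_zero, Matrix.trace_zero, zero_add] at h2
    rw [mul_assoc, hc y, ← mul_assoc] at h1
    rw [h2, add_zero] at h1
    exact h1
  let J : LieIdeal F L :=
    { carrier := {y | ∀ x, (sg Z u P x ^ k * sg Z u P y).trace = 0}
      add_mem' := by
        intro a b ha hb x
        rw [map_add, mul_add, Matrix.trace_add, ha x, hb x, add_zero]
      zero_mem' := by intro x; simp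
      smul_mem' := by
        intro c a ha x
        rw [map_smul, mul_smul_comm, Matrix.trace_smul, ha x, smul_zero]
      lie_mem := by
        intro b y hy x
        have := hcl y hy b x
        rw [← lie_skew, map_neg, mul_neg, Matrix.trace_neg, this, neg_zero] }
  refine ⟨J, ?_, ?_⟩
  · intro hJ
    have : x0 ∈ J := by rw [hJ]; trivial
    have h2 := this x0
    rw [← pow_succ] at h2
    exact hk h2
  · intro x hx y
    rw [hx, mul_zero, Matrix.trace_zero]

lemma case_big (hsurj : Function.Surjective δ) (hnil : ∀ x : L, ∃ k, (δ ^ k) x = 0)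
    (hZ : ZLie δ Z) (hd : ∀ x, MD u P (Z x)) (hP1 : 1 < P)
    (hrat : ∃ q : ℕ, 0 < q ∧ ∃ p : ℤ, (q : ℝ) * P = p) (x : L) :
    IsNilpotent (sg Z u P x) := by
  have hc := sg_comm hnil hZ hd (by linarith)
  obtain ⟨lam, hlam⟩ := exists_lam (F := F)
  have hlP : lam P ≠ 0 := by
    obtain ⟨q, hq, p, hqp⟩ := hrat
    have h1 : lam (p : ℝ) = (p : F) := by
      have : (p : ℝ) = p • (1 : ℝ) := by simp
      rw [this, map_zsmul, hlam]; simp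
    rw [← hqp, ← nsmul_eq_mul, map_nsmul] at h1
    intro h0
    rw [h0, smul_zero] at h1
    have h2 : p = 0 := by exact_mod_cast h1.symm
    rw [h2] at hqp
    have : (0 : ℝ) < q := by exact_mod_cast hq
    have : 0 < (q : ℝ) * P := by positivity
    rw [hqp] at this; simp at this
  have key : ∀ (k : ℕ) (x b : L), (sg Z u P x ^ k *
      (sg Z u P (δ x) * sg Z u P b - sg Z u P (δ b) * sg Z u P x)).trace = 0 := by
    intro k x b
    obtain ⟨Q, hQ, h⟩ := lie_expand hnil hZ hd x b
    have h1 : gc u (k * P + (2 * P - 1)) (Z x ^ k * Z ⁅x, b⁆) = 0 :=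
      (((hd x).pow k).mul (hd _)).gc_lt (by linarith)
    rw [h, mul_add, mul_add, gc_add, gc_add,
      (((hd x).pow k).mul hQ).gc_lt (by linarith), add_zero,
      ((hd x).pow k).gc_mul (MD1 hd _ _ _ _), gc1 hd, (hd x).gc_pow] at h1
    have h2 := congrArg Matrix.trace h1
    rw [Matrix.trace_add, gc_trace, zero_add, Matrix.trace_zero] at h2
    swap
    · rw [mul_sub, Matrix.trace_sub, ← mul_assoc, ← mul_assoc,
        Matrix.trace_mul_comm (Z x ^ k * Z b), ← mul_assoc, ← pow_succ, ← pow_succ', sub_self]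
    rw [gc_hs_one lam hlam, gc_hs_one lam hlam] at h2
    change (sg Z u P x ^ k * (sg Z u P (δ x) * (lam P • sg Z u P b + (sg Z u P b *
      Matrix.diagonal (fun i => lam (u i)) - Matrix.diagonal (fun i => lam (u i)) * sg Z u P b)) -
      sg Z u P (δ b) * (lam P • sg Z u P x + (sg Z u P x *
      Matrix.diagonal (fun i => lam (u i)) -
      Matrix.diagonal (fun i => lam (u i)) * sg Z u P x)))).trace = 0 at h2
    set H := Matrix.diagonal (fun i => lam (u i))
    have hcm : ∀ a b c : L, sg Z u P a ^ k * sg Z u P b * sg Z u P c =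
        sg Z u P c * (sg Z u P a ^ k * sg Z u P b) := by
      intro a b c
      have c1 : Commute (sg Z u P a) (sg Z u P c) := hc a c
      have c2 : Commute (sg Z u P b) (sg Z u P c) := hc b c
      exact ((c1.pow_left k).mul_left c2)
    have e1 := tr_comm_zero (sg Z u P x ^ k * sg Z u P (δ x)) (sg Z u P b) H (hcm _ _ _)
    have e2 := tr_comm_zero (sg Z u P x ^ k * sg Z u P (δ b)) (sg Z u P x) H (hcm _ _ _)
    rw [mul_sub, mul_add, mul_add, mul_add, mul_add, ← mul_assoc, ← mul_assoc, ← mul_assoc,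
      ← mul_assoc (sg Z u P x ^ k), Matrix.trace_sub,
      Matrix.trace_add, Matrix.trace_add, e1, e2, add_zero, add_zero] at h2
    rw [mul_smul_comm, mul_smul_comm, Matrix.trace_smul, Matrix.trace_smul, ← smul_sub,
      smul_eq_mul, mul_eq_zero] at h2
    rw [mul_sub, Matrix.trace_sub, ← mul_assoc, ← mul_assoc]
    exact h2.resolve_left hlP
  obtain ⟨n, hn⟩ := hnil x
  induction n generalizing x with
  | zero => 
    rw [pow_zero, Module.End.one_apply] at hn
    rw [hn, map_zero]; exact IsNilpotent.zero
  | succ n ih =>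
    have h1 : IsNilpotent (sg Z u P (δ x)) := by
      apply ih
      rw [pow_succ, Module.End.mul_apply] at hn
      exact hn
    obtain ⟨b, hb⟩ := hsurj x
    have h2 : IsNilpotent (sg Z u P x ^ 2) := by
      apply nil_of_trace
      intro k
      have h3 := key (2 * k) x b
      have c1 : Commute (sg Z u P x ^ (2 * k)) (sg Z u P (δ x)) :=
        (show Commute _ _ from hc x (δ x)).pow_left _
      have c2 : Commute (sg Z u P (δ x)) (sg Z u P b) := hc _ _
      have h4 : IsNilpotent (sg Z u P x ^ (2 * k) * (sg Z u P (δ x) * sg Z u P b)) := by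
        have c3 : Commute (sg Z u P x ^ (2 * k)) (sg Z u P b) :=
          (show Commute _ _ from hc x b).pow_left _
        exact (c1.mul_right c3).isNilpotent_mul_left (c2.isNilpotent_mul_right h1)
      have h5 := (Matrix.isNilpotent_trace_of_isNilpotent h4).eq_zero
      rw [mul_sub, Matrix.trace_sub, h5, zero_sub, neg_eq_zero, hb, ← pow_two, ← pow_add] at h3
      rw [← pow_mul, mul_add, mul_one]
      exact h3
    obtain ⟨m, hm⟩ := h2
    exact ⟨2 * m, by rw [pow_mul]; exact hm⟩

lemma coeff_mul_sub_top {f g : LaurentPolynomial F} {a b : ℤ} (hf : ∀ n, a < n → f.coeff n = 0)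
    (hg : ∀ n, b < n → g.coeff n = 0) : (f * g).coeff (a + b - 1) =
      f.coeff a * g.coeff (b - 1) + f.coeff (a - 1) * g.coeff b := by
  classical
  rw [AddMonoidAlgebra.coeff_mul_apply_left, Finsupp.sum]
  rw [Finset.sum_subset (Finset.subset_union_left (s₂ := {a, a - 1}))]
  · rw [← Finset.sum_subset (Finset.subset_union_right (s₂ := {a, a - 1}))]
    · rw [Finset.sum_pair (by omega)]
      congr 3 <;> ring
    · intro n _ hn
      simp only [Finset.mem_insert, Finset.mem_singleton, not_or] at hn
      rcases lt_or_gt_of_ne hn.1 with h | h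
      · rw [hg (-n + (a + b - 1)) (by omega)]; simp
      · rw [hf n h]; simp
  · intro n _ hn
    rw [Finsupp.notMem_support_iff.mp hn]; simp

lemma gc_mul_one {M N : Matrix ι ι (LaurentPolynomial F)} (hM : MD 0 1 M) (hN : MD 0 1 N) :
    gc 0 1 (M * N) = gc 0 1 M * gc 0 0 N + gc 0 0 M * gc 0 1 N := by
  have e1 : ∀ (M : Matrix ι ι (LaurentPolynomial F)) i j, gc 0 1 M i j = (M i j).coeff 1 :=
    fun M i j => gc_exact _ _ _ _ _ (by simp)
  have e0 : ∀ (M : Matrix ι ι (LaurentPolynomial F)) i j, gc 0 0 M i j = (M i j).coeff 0 :=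
    fun M i j => gc_exact _ _ _ _ _ (by simp)
  have d : ∀ M : Matrix ι ι (LaurentPolynomial F), MD 0 1 M →
      ∀ i j (n : ℤ), 1 < n → (M i j).coeff n = 0 := by
    intro M hM i j n hn
    apply hM
    have : (1 : ℝ) < n := by exact_mod_cast hn
    simpa using this
  ext i j
  rw [e1, Matrix.add_apply, Matrix.mul_apply, Matrix.mul_apply, Matrix.mul_apply,
    AddMonoidAlgebra.coeff_sum, Finsupp.finsetSum_apply, ← Finset.sum_add_distrib]
  refine Finset.sum_congr rfl fun l _ => ?_
  rw [e1, e1, e0, e0]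
  have := coeff_mul_sub_top (a := 1) (b := 1) (d M hM i l) (d N hN l j)
  simpa using this

lemma case_one [IsAlgClosed F] (hnil : ∀ x : L, ∃ k, (δ ^ k) x = 0)
    (hZ : ZLie δ Z) (hd : ∀ x, MD 0 1 (Z x)) (x0 : L) (hx0 : ¬ IsNilpotent (sg Z 0 1 x0)) :
    ∃ θ : L →ₗ[F] F, θ ≠ 0 ∧ (∀ x, sg Z 0 1 x = 0 → θ x = 0) ∧
      ∀ x b, θ ⁅x, b⁆ = θ (δ x) * θ b - θ (δ b) * θ x := by
  have hc := sg_comm hnil hZ hd one_pos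
  obtain ⟨lam, hlam⟩ := exists_lam (F := F)
  have key : ∀ (C : Matrix ι ι F) (_ : ∀ x, C * sg Z 0 1 x = sg Z 0 1 x * C) (x b : L),
      (C * (sg Z 0 1 (δ x) * sg Z 0 1 b - sg Z 0 1 (δ b) * sg Z 0 1 x - sg Z 0 1 ⁅x, b⁆)).trace
        = 0 := by
    intro C hC x b
    obtain ⟨Q, hQ, h⟩ := lie_expand hnil hZ hd x b
    have h1 := congrArg (gc 0 1) h
    have h2 := gc1 hd (δ x) b (δ b) x
    rw [gc_hs_one lam hlam, gc_hs_one lam hlam] at h2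
    norm_num at h2
    rw [hlam, one_smul, one_smul] at h2
    rw [gc_add, gc_add, hQ.gc_lt (by norm_num), gc_sub, gc_mul_one (hd x) (hd b),
      gc_mul_one (hd b) (hd x), h2, add_zero] at h1
    rw [sg_apply ⁅x, b⁆, h1]
    have e1 := tr_comm_zero C (sg Z 0 1 x) (gc 0 0 (Z b)) (hC x)
    have e2 := tr_comm_zero C (sg Z 0 1 b) (gc 0 0 (Z x)) (hC b)
    rw [sg_apply] at e1 e2
    simp only [sg_apply, mul_sub, mul_add, Matrix.trace_sub, Matrix.trace_add] at e1 e2 ⊢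
    linear_combination e2 - e1
  obtain ⟨S, hS, hσ⟩ := comm_model (sg Z 0 1) hc
  letI : CommRing S := { (inferInstance : Ring S) with mul_comm := hS }
  haveI : Module.Finite F S := inferInstance
  let s : L →ₗ[F] S := (sg Z 0 1).codRestrict (Subalgebra.toSubmodule S) hσ
  have hs1 : ∀ x, (s x : Matrix ι ι F) = sg Z 0 1 x := fun x => rfl
  have hsx0 : ¬ IsNilpotent (s x0) := by
    rintro ⟨n, hn⟩
    exact hx0 ⟨n, by simpa [hs1] using congrArg (S.val : S → Matrix ι ι F) hn⟩
  obtain ⟨χ, hχ⟩ := exists_char (F := F) (s x0) hsx0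
  refine ⟨χ.toLinearMap ∘ₗ s, ?_, ?_, ?_⟩
  · intro h0
    exact hχ (LinearMap.congr_fun h0 x0)
  · intro x hx
    have : s x = 0 := Subtype.ext (by simpa [hs1] using hx)
    simp [this]
  · intro x b
    have hΦ : IsNilpotent (s (δ x) * s b - s (δ b) * s x - s ⁅x, b⁆) := by
      set Φ := s (δ x) * s b - s (δ b) * s x - s ⁅x, b⁆ with hΦ
      have h1 : IsNilpotent (Φ : Matrix ι ι F) := by
        apply nil_of_trace
        intro k
        have h2 := key ((Φ ^ k : S) : Matrix ι ι F) (by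
          intro y
          have := congrArg (S.val : S → Matrix ι ι F) (mul_comm (Φ ^ k) (s y))
          simpa [hs1] using this) x b
        rw [pow_succ]
        simpa [hΦ, hs1] using h2
      obtain ⟨n, hn⟩ := h1
      exact ⟨n, Subtype.ext (by simpa using hn)⟩
    have h1 := (hΦ.map χ).eq_zero
    simp only [map_sub, map_mul] at h1
    simp only [LinearMap.comp_apply, AlgHom.toLinearMap_apply]
    linear_combination -h1

theorem case_analysis [IsAlgClosed F] (hsurj : Function.Surjective δ)
    (hnil : ∀ x : L, ∃ k, (δ ^ k) x = 0)
    (hZ : ZLie δ Z) (hd : ∀ x, MD u P (Z x)) (hP : 0 ≤ P)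
    (hrat : ∃ q : ℕ, 0 < q ∧ ∃ p : ℤ, (q : ℝ) * P = p)
    (hnn : ∀ k : ℕ, ∃ l : List L, l.length = k ∧ (l.map (sg Z u P)).prod ≠ 0)
    (h1 : P = 1 → u = 0) :
    (∃ J : LieIdeal F L, J ≠ ⊤ ∧ ∀ x, sg Z u P x = 0 → x ∈ J) ∨
    (∃ θ : L →ₗ[F] F, θ ≠ 0 ∧ (∀ x, sg Z u P x = 0 → θ x = 0) ∧
      ∀ x b, θ ⁅x, b⁆ = θ (δ x) * θ b - θ (δ b) * θ x) := by
  rcases hP.eq_or_lt with rfl | hP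
  · left
    have hl := case_zero hnil hZ hd
    let J : LieIdeal F L :=
      { LinearMap.ker (sg Z u 0) with
        lie_mem := by
          intro b y hy
          have hy' : sg Z u 0 y = 0 := hy
          change sg Z u 0 _ = 0
          rw [hl, hy']; simp }
    refine ⟨J, ?_, fun x hx => hx⟩
    intro hJ
    obtain ⟨l, hl1, hl2⟩ := hnn 1
    obtain ⟨x, rfl⟩ := List.length_eq_one_iff.mp hl1
    apply hl2
    have : x ∈ J := by rw [hJ]; trivial
    have h3 : sg Z u 0 x = 0 := this
    simpa using h3
  · obtain ⟨x0, hx0⟩ := exists_not_nil (sg Z u P) (sg_comm hnil hZ hd hP) hnn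
    rcases lt_trichotomy P 1 with hP1 | rfl | hP1
    · exact Or.inl (case_small hnil hZ hd hP hP1 x0 hx0)
    · obtain rfl := h1 rfl
      exact Or.inr (case_one hnil hZ hd x0 hx0)
    · exact absurd (case_big hsurj hnil hZ hd hP1 hrat x0) hx0

end CaseAnalysis
end CA


namespace CA

section Rounding
variable {ι : Type*} [Fintype ι] [Nonempty ι]

/-- the rounding dynamical system -/
noncomputable def rf (u : ι → ℝ) (P : ℝ) (t : ℝ) : ℝ :=
  Finset.univ.sup' Finset.univ_nonempty (fun i => u i + (⌊t + P - u i⌋ : ℝ))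

lemma rf_le (u : ι → ℝ) (P t : ℝ) : rf u P t ≤ t + P := by
  apply Finset.sup'_le
  intro i _
  have := Int.floor_le (t + P - u i)
  linarith

lemma le_rf (u : ι → ℝ) (P t : ℝ) (i : ι) (n : ℤ) (h : n + u i ≤ t + P) : n + u i ≤ rf u P t := by
  have h1 : n ≤ ⌊t + P - u i⌋ := Int.le_floor.mpr (by linarith)
  have h2 := Finset.le_sup' (fun i => u i + (⌊t + P - u i⌋ : ℝ)) (Finset.mem_univ i)
  have h3 : (n : ℝ) ≤ (⌊t + P - u i⌋ : ℝ) := by exact_mod_cast h1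
  have : u i + (⌊t + P - u i⌋ : ℝ) ≤ rf u P t := h2
  linarith

lemma rf_exists (u : ι → ℝ) (P t : ℝ) : ∃ (i : ι) (n : ℤ), rf u P t = u i + n := by
  obtain ⟨i, _, hi⟩ := Finset.exists_mem_eq_sup' Finset.univ_nonempty
    (fun i => u i + (⌊t + P - u i⌋ : ℝ))
  exact ⟨i, _, hi⟩

lemma rf_mono (u : ι → ℝ) (P : ℝ) : Monotone (rf u P) := by
  intro s t hst
  apply Finset.sup'_mono_fun
  intro i _
  have : ⌊s + P - u i⌋ ≤ ⌊t + P - u i⌋ := Int.floor_mono (by linarith)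
  have : (⌊s + P - u i⌋ : ℝ) ≤ ⌊t + P - u i⌋ := by exact_mod_cast this
  linarith

lemma rf_add (u : ι → ℝ) (P t : ℝ) (n : ℤ) : rf u P (t + n) = rf u P t + n := by
  apply le_antisymm
  · apply Finset.sup'_le
    intro i _
    have e : t + n + P - u i = (t + P - u i) + n := by ring
    rw [e, Int.floor_add_intCast]
    have h2 := Finset.le_sup' (fun i => u i + (⌊t + P - u i⌋ : ℝ)) (Finset.mem_univ i)
    have : u i + (⌊t + P - u i⌋ : ℝ) ≤ rf u P t := h2
    push_cast; linarith
  · rw [← le_sub_iff_add_le]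
    apply Finset.sup'_le
    intro i _
    have := le_rf u P (t + n) i (⌊t + P - u i⌋ + n) (by
      have := Int.floor_le (t + P - u i)
      push_cast; linarith)
    push_cast at this; linarith

lemma rf_iter_add (u : ι → ℝ) (P : ℝ) (m : ℕ) (t : ℝ) (n : ℤ) :
    (rf u P)^[m] (t + n) = (rf u P)^[m] t + n := by
  induction m generalizing t with
  | zero => rfl
  | succ m ih => rw [Function.iterate_succ_apply, Function.iterate_succ_apply, rf_add, ih]

lemma rf_iter_le (u : ι → ℝ) (P : ℝ) (m : ℕ) (t : ℝ) : (rf u P)^[m] t ≤ t + m * P := by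
  induction m with
  | zero => simp
  | succ m ih =>
    rw [Function.iterate_succ_apply']
    have := rf_le u P ((rf u P)^[m] t)
    push_cast; linarith

lemma rf_periodic (u : ι → ℝ) (P : ℝ) : ∃ (s : ℝ) (q : ℕ) (p : ℤ), 1 ≤ q ∧ q ≤ Fintype.card ι ∧
    (rf u P)^[q] s = s + p := by
  choose g m hg using fun j => rf_exists u P (u j)
  have hiter : ∀ (k : ℕ) (j : ι), ∃ n : ℤ, (rf u P)^[k] (u j) = u (g^[k] j) + n := by
    intro k
    induction k with
    | zero => intro j; exact ⟨0, by simp⟩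
    | succ k ih =>
      intro j
      obtain ⟨n, hn⟩ := ih (g j)
      refine ⟨n + m j, ?_⟩
      rw [Function.iterate_succ_apply, Function.iterate_succ_apply, hg, rf_iter_add, hn]
      push_cast; ring
  obtain ⟨j⟩ := ‹Nonempty ι›
  obtain ⟨a, b, hab, heq⟩ := Fintype.exists_ne_map_eq_of_card_lt
    (fun k : Fin (Fintype.card ι + 1) => g^[(k : ℕ)] j) (by simp)
  wlog hlt : a < b generalizing a b
  · exact this b a hab.symm heq.symm (lt_of_le_of_ne (not_lt.mp hlt) hab.symm)
  have hlt' : (a : ℕ) < b := hlt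
  obtain ⟨n, hn⟩ := hiter (b - a) (g^[(a : ℕ)] j)
  refine ⟨u (g^[(a : ℕ)] j), b - a, n, by omega, by omega, ?_⟩
  rw [hn, ← Function.iterate_add_apply, Nat.sub_add_cancel hlt'.le]
  have heq2 : g^[(a : ℕ)] j = g^[(b : ℕ)] j := heq
  rw [← heq2]

theorem rounding (u : ι → ℝ) (P : ℝ) : ∃ (u' : ι → ℝ) (P' : ℝ), P' ≤ P ∧
    (∃ q : ℕ, 1 ≤ q ∧ q ≤ Fintype.card ι ∧ ∃ p : ℤ, (q : ℝ) * P' = p) ∧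
    ∀ i j (n : ℤ), n + u i ≤ P + u j → n + u' i ≤ P' + u' j := by
  obtain ⟨s, q, p, hq1, hq2, hs⟩ := rf_periodic u P
  have hq0 : (0 : ℝ) < q := by exact_mod_cast hq1
  set P' : ℝ := p / q with hP'
  have hqP : (q : ℝ) * P' = p := by rw [hP']; field_simp
  have hPP : P' ≤ P := by
    have := rf_iter_le u P q s
    rw [hs] at this
    rw [hP', div_le_iff₀ hq0]; linarith
  have hsc : ∀ c : ℕ, ∀ r : ℕ, (rf u P)^[r + q * c] s = (rf u P)^[r] s + (c * p : ℤ) := by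
    intro c
    induction c with
    | zero => intro r; simp
    | succ c ih =>
      intro r
      rw [mul_add, mul_one, ← add_assoc, Function.iterate_add_apply, hs, rf_iter_add, ih]
      push_cast; ring
  have hb : ∀ n : ℕ, (rf u P)^[n] s - n * P' ≤ s + q * (P - P') := by
    intro n
    have h1 := hsc (n / q) (n % q)
    rw [Nat.mod_add_div] at h1
    have h2 := rf_iter_le u P (n % q) s
    have h3 : ((n % q : ℕ) : ℝ) ≤ q := by exact_mod_cast (Nat.mod_lt n hq1).le
    have h4 : (n : ℝ) = ((n % q : ℕ) : ℝ) + q * ((n / q : ℕ) : ℝ) := by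
      exact_mod_cast (Nat.mod_add_div n q).symm
    rw [h1]
    have h7 : (n : ℝ) * P' = ((n % q : ℕ) : ℝ) * P' + q * ((n / q : ℕ) : ℝ) * P' := by
      conv_lhs => rw [h4]
      ring
    rw [h7]
    have h5 : (q : ℝ) * ((n / q : ℕ) : ℝ) * P' = ((n / q : ℕ) : ℝ) * p := by
      rw [← hqP]; ring
    have h6 : ((n % q : ℕ) : ℝ) * (P - P') ≤ q * (P - P') :=
      mul_le_mul_of_nonneg_right h3 (by linarith)
    rw [Int.cast_mul, Int.cast_natCast]
    linarith
  have hbdd : ∀ t : ℝ, BddAbove (Set.range fun n : ℕ => (rf u P)^[n] t - n * P') := by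
    intro t
    refine ⟨s + q * (P - P') + ⌈t - s⌉, ?_⟩
    rintro _ ⟨n, rfl⟩
    have h1 : t ≤ s + (⌈t - s⌉ : ℝ) := by
      have := Int.le_ceil (t - s); linarith
    have h2 := (rf_mono u P).iterate n h1
    rw [rf_iter_add] at h2
    have := hb n
    simp only; linarith
  refine ⟨fun i => ⨆ n : ℕ, ((rf u P)^[n] (u i) - n * P'), P', hPP,
    ⟨q, hq1, hq2, p, hqP⟩, ?_⟩
  intro i j n h
  have h1 := le_rf u P (u j) i n (by linarith)
  rw [← le_sub_iff_add_le']
  apply ciSup_le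
  intro m
  have h2 := (rf_mono u P).iterate m h1
  rw [add_comm, rf_iter_add, ← Function.iterate_succ_apply] at h2
  have h3 : (rf u P)^[m + 1] (u j) - ((m + 1 : ℕ) : ℝ) * P' ≤
      ⨆ n : ℕ, ((rf u P)^[n] (u j) - n * P') := le_ciSup (hbdd (u j)) (m + 1)
  push_cast at h3
  linarith

end Rounding

section Gap
lemma exists_gap {ι : Type*} [Finite ι] (f : ι → ℝ) :
    ∃ g : ℝ, 0 < g ∧ ∀ i (n : ℤ), (n : ℝ) < f i → n ≤ f i - g := by
  have h1 : ∀ i, ∃ g : ℝ, 0 < g ∧ ∀ n : ℤ, (n : ℝ) < f i → n ≤ f i - g := by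
    intro i
    refine ⟨f i - (⌈f i⌉ - 1 : ℤ), ?_, ?_⟩
    · have := Int.ceil_lt_add_one (f i)
      push_cast; linarith
    · intro n hn
      have : n ≤ ⌈f i⌉ - 1 := by
        have : n < ⌈f i⌉ := Int.lt_ceil.mpr hn
        omega
      have : (n : ℝ) ≤ ((⌈f i⌉ - 1 : ℤ) : ℝ) := by exact_mod_cast this
      linarith
  choose g hg hg2 using h1
  cases isEmpty_or_nonempty ι with
  | inl h => exact ⟨1, one_pos, fun i => (h.false i).elim⟩
  | inr h =>
    obtain ⟨i0, hi0⟩ := Finite.exists_min g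
    exact ⟨g i0, hg i0, fun i n hn => by have := hg2 i n hn; have := hi0 i; linarith⟩
end Gap

section Flag
variable {F V : Type*} [Field F] [AddCommGroup V] [Module F V]

lemma flag_sets (k : ℕ) (H : ℕ → Set V) (hanti : ∀ l, H (l + 1) ⊆ H l) (hk : H k ⊆ {0}) :
    ∃ s : ℕ → Set V, (∀ l, s (l + 1) ⊆ s l) ∧ (∀ l, s l ⊆ H l) ∧ (∀ l, H l ⊆ Submodule.span F (s l))
      ∧ LinearIndepOn F id (s 0) ∧ s k = ∅ := by
  induction k generalizing H with
  | zero =>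
    have h0 : ∀ l, H l ⊆ {0} := by
      intro l
      induction l with
      | zero => exact hk
      | succ l ih => exact (hanti l).trans ih
    refine ⟨fun _ => ∅, fun _ => by simp, fun _ => by simp, fun l => ?_,
      linearIndepOn_empty F id, rfl⟩
    simpa using h0 l
  | succ k ih =>
    obtain ⟨s, h1, h2, h3, h4, h5⟩ := ih (fun l => H (l + 1)) (fun l => hanti _) hk
    obtain ⟨b, hb1, hb2, hb3, hb4⟩ := exists_linearIndepOn_extension h4
      ((h2 0).trans (hanti 0))
    refine ⟨fun l => Nat.casesOn l b s, ?_, ?_, ?_, hb4, h5⟩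
    · intro l; cases l with
      | zero => exact hb2
      | succ l => exact h1 l
    · intro l; cases l with
      | zero => exact hb1
      | succ l => exact h2 l
    · intro l; cases l with
      | zero => simpa using hb3
      | succ l => exact h3 l

lemma flag_basis {ι : Type*} [Fintype ι] [DecidableEq ι] (k : ℕ) (H : ℕ → Set (ι → F))
    (hanti : ∀ l, H (l + 1) ⊆ H l)
    (hk : H k ⊆ {0}) (h0 : Submodule.span F (H 0) = ⊤) :
    ∃ (b : Module.Basis ι F (ι → F)) (ℓ : ι → ℕ), (∀ j, b j ∈ H (ℓ j)) ∧ (∀ j, ℓ j < k) ∧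
      ∀ l, ∀ v ∈ H l, ∀ i, b.repr v i ≠ 0 → l ≤ ℓ i := by
  obtain ⟨s, h1, h2, h3, h4, h5⟩ := flag_sets (F := F) k H hanti hk
  have hant : Antitone s := antitone_nat_of_succ_le h1
  have hsp : ⊤ ≤ Submodule.span F (Set.range (Subtype.val : s 0 → ι → F)) := by
    rw [Subtype.range_coe, ← h0, Submodule.span_le]
    exact h3 0
  let b0 : Module.Basis (s 0) F (ι → F) := Module.Basis.mk h4 hsp
  let ε : s 0 ≃ ι := b0.indexEquiv (Pi.basisFun F ι)
  let b := b0.reindex ε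
  have hbv : ∀ j, b j = (ε.symm j : ι → F) := by
    intro j
    simp [b, b0]
  have hex : ∀ j, ∃ l, b j ∈ s l ∧ l < k ∧ ∀ m, b j ∈ s m → m ≤ l := by
    intro j
    classical
    have hlt : ∀ m, b j ∈ s m → m < k := by
      intro m hm
      by_contra hmk
      have := hant (not_lt.mp hmk) hm
      rw [h5] at this
      exact this
    have hj0 : b j ∈ s 0 := by rw [hbv]; exact (ε.symm j).2
    have hsp := Nat.findGreatest_spec (P := fun m => b j ∈ s m) (n := k) (Nat.zero_le _) hj0
    exact ⟨_, hsp, hlt _ hsp, fun m hm => Nat.le_findGreatest (hlt m hm).le hm⟩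
  choose ℓ hℓ1 hℓ2 hℓ3 using hex
  refine ⟨b, ℓ, fun j => h2 _ (hℓ1 j), hℓ2, ?_⟩
  intro l v hv i hi
  have hv' := h3 l hv
  have himg : s l = b '' {j | b j ∈ s l} := by
    ext x
    constructor
    · intro hx
      refine ⟨ε ⟨x, hant (Nat.zero_le l) hx⟩, ?_, ?_⟩
      · simp only [Set.mem_ofPred_eq, hbv, Equiv.symm_apply_apply]; exact hx
      · rw [hbv, Equiv.symm_apply_apply]
    · rintro ⟨j, hj, rfl⟩; exact hj
  rw [himg] at hv'
  have hsub := b.repr_support_subset_of_mem_span {j | b j ∈ s l} hv'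
  have := hsub (Finset.mem_coe.mpr (Finsupp.mem_support_iff.mpr hi))
  exact hℓ3 i l this

end Flag
end CA

namespace CA
open LaurentPolynomial (T)

section Expand
variable {F : Type*} [Field F] {L : Type*} [LieRing L] [LieAlgebra F L]
  {W : Type*} [AddCommGroup W] [Module F W] [Module (LaurentPolynomial F) W]
  [IsScalarTower F (LaurentPolynomial F) W]
  {δ : L →ₗ[F] L} {ρ : L →ₗ[F] Module.End F W}

lemma T_smul_inj {w w' : W} (n : ℤ) (h : (T n : LaurentPolynomial F) • w = (T n : LaurentPolynomial F) • w') :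
    w = w' := by
  have := congrArg (fun z => (T (-n) : LaurentPolynomial F) • z) h
  simp only [smul_smul] at this
  rw [← LaurentPolynomial.T_add, neg_add_cancel, LaurentPolynomial.T_zero, one_smul, one_smul] at this
  exact this

/-- expansion map -/
noncomputable def expd (δ : L →ₗ[F] L) (ρ : L →ₗ[F] Module.End F W) (w : W) (x : L) (K : ℕ) :
    LaurentPolynomial F →ₗ[F] W where
  toFun f := ∑ k ∈ Finset.range K, hs k f • ρ ((δ ^ k) x) w
  map_add' f g := by simp [add_smul, Finset.sum_add_distrib]
  map_smul' c f := by simp [Finset.smul_sum, smul_assoc]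

lemma expand (hT : ∀ x w, ρ x ((T 1 : LaurentPolynomial F) • w) = (T 1 : LaurentPolynomial F) • ρ x w + ρ (δ x) w)
    (K : ℕ) (x : L) (hx : (δ ^ K) x = 0) (f : LaurentPolynomial F) (w : W) :
    ρ x (f • w) = ∑ k ∈ Finset.range K, hs k f • ρ ((δ ^ k) x) w := by
  induction K generalizing x f w with
  | zero =>
    have : x = 0 := by simpa using hx
    simp [this]
  | succ K ih =>
    have hx1 : (δ ^ K) (δ x) = 0 := by
      rw [← Module.End.mul_apply, ← pow_succ]; exact hx
    let E : LaurentPolynomial F →ₗ[F] W :=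
      ρ x ∘ₗ (LinearMap.toSpanSingleton (LaurentPolynomial F) W w).restrictScalars F
        - expd δ ρ w x (K + 1)
    have hE : ∀ f, E f = ρ x (f • w) - ∑ k ∈ Finset.range (K + 1), hs k f • ρ ((δ ^ k) x) w :=
      fun f => rfl
    have hET : ∀ f, E (T 1 * f) = (T 1 : LaurentPolynomial F) • E f := by
      intro f
      rw [hE, hE, mul_smul, hT, ih _ hx1, Finset.sum_range_succ', Finset.sum_range_succ']
      simp only [hs_T_mul, hs_zero, add_smul, Finset.sum_add_distrib, mul_smul, smul_sub,
        smul_add, Finset.smul_sum]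
      have : ∀ k, (δ ^ k) (δ x) = (δ ^ (k + 1)) x := fun k => by
        rw [← Module.End.mul_apply, ← pow_succ]
      simp only [this]
      abel
    have hE1 : E 1 = 0 := by
      rw [hE, Finset.sum_range_succ']
      simp [hs_one, hs_zero]
    have hE0 : E = 0 := by
      apply lau_ext
      intro n
      rw [LinearMap.zero_apply]
      induction n using Int.induction_on with
      | zero => rw [LaurentPolynomial.T_zero]; exact hE1
      | succ n ih => rw [add_comm, LaurentPolynomial.T_add, hET, ih, smul_zero]
      | pred n ih =>
        have := hET (T (-(n : ℤ) - 1))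
        rw [← LaurentPolynomial.T_add, add_sub_cancel, ih] at this
        exact T_smul_inj 1 (by rw [← this, smul_zero])
    have := congrArg (fun g => g f) hE0
    simp only [hE, LinearMap.zero_apply] at this
    exact sub_eq_zero.mp this

variable {ι : Type*} [Fintype ι] [DecidableEq ι]

/-- matrix of an operator -/
noncomputable def Zm (ρ : L →ₗ[F] Module.End F W) (e : Module.Basis ι (LaurentPolynomial F) W) :
    L →ₗ[F] Matrix ι ι (LaurentPolynomial F) where
  toFun x := fun i j => e.repr (ρ x (e j)) i
  map_add' x y := by
    funext i j
    simp only [map_add, LinearMap.add_apply, Finsupp.add_apply]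
    rfl
  map_smul' c x := by
    funext i j
    simp only [map_smul, LinearMap.smul_apply, RingHom.id_apply]
    rw [← algebraMap_smul (LaurentPolynomial F) c (ρ x (e j)), map_smul, Finsupp.smul_apply,
      algebraMap_smul]
    rfl

lemma Zm_apply (e : Module.Basis ι (LaurentPolynomial F) W) (x : L) (i j : ι) :
    Zm ρ e x i j = e.repr (ρ x (e j)) i := rfl

lemma Zm_sum (e : Module.Basis ι (LaurentPolynomial F) W) (x : L) (j : ι) :
    ρ x (e j) = ∑ i, Zm ρ e x i j • e i := (e.sum_repr _).symm

lemma rho_repr (hT : ∀ x w, ρ x ((T 1 : LaurentPolynomial F) • w) = (T 1 : LaurentPolynomial F) • ρ x w + ρ (δ x) w)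
    (e : Module.Basis ι (LaurentPolynomial F) W) (K : ℕ) (x : L) (hx : (δ ^ K) x = 0) (w : W) (i : ι) :
    e.repr (ρ x w) i = ∑ k ∈ Finset.range K, ∑ l, Zm ρ e ((δ ^ k) x) i l * hs k (e.repr w l) := by
  conv_lhs => rw [← e.sum_repr w]
  simp only [map_sum, expand hT K x hx, Finsupp.finsetSum_apply, map_smul, Finsupp.smul_apply,
    smul_eq_mul, Zm_apply]
  rw [Finset.sum_comm]
  simp only [mul_comm]

lemma Zm_ZLie (hT : ∀ x w, ρ x ((T 1 : LaurentPolynomial F) • w) = (T 1 : LaurentPolynomial F) • ρ x w + ρ (δ x) w)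
    (hl : ∀ x y w, ρ ⁅x, y⁆ w = ρ x (ρ y w) - ρ y (ρ x w))
    (e : Module.Basis ι (LaurentPolynomial F) W) : ZLie δ (Zm ρ e) := by
  intro x y K hx hy
  refine Matrix.ext fun i j => ?_
  rw [Zm_apply, hl, map_sub (e.repr), Finsupp.sub_apply, rho_repr hT e K x hx, rho_repr hT e K y hy,
    Matrix.sum_apply, ← Finset.sum_sub_distrib]
  refine Finset.sum_congr rfl fun k _ => ?_
  rw [Matrix.sub_apply, Matrix.mul_apply, Matrix.mul_apply]
  rfl

/-- feasibility -/
def Feas (ρ : L →ₗ[F] Module.End F W) (e : Module.Basis ι (LaurentPolynomial F) W)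
    (u : ι → ℝ) (P : ℝ) : Prop := ∀ x, MD u P (Zm ρ e x)

lemma T_unit (n : ℤ) : IsUnit (T n : LaurentPolynomial F) := LaurentPolynomial.isUnit_T n

lemma rescale (hT : ∀ x w, ρ x ((T 1 : LaurentPolynomial F) • w) = (T 1 : LaurentPolynomial F) • ρ x w + ρ (δ x) w)
    (hnil : ∀ x : L, ∃ k, (δ ^ k) x = 0)
    {e : Module.Basis ι (LaurentPolynomial F) W} {u : ι → ℝ} {P : ℝ} (h : Feas ρ e u P)
    (n : ι → ℤ) : ∃ e' : Module.Basis ι (LaurentPolynomial F) W,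
      (∀ j, e' j = (T (n j) : LaurentPolynomial F) • e j) ∧ Feas ρ e' (fun j => u j + n j) P := by
  refine ⟨e.isUnitSMul (fun j => T_unit (n j)), fun j => by simp [Module.Basis.isUnitSMul_apply], ?_⟩
  set e' := e.isUnitSMul (fun j => T_unit (F := F) (n j)) with he'
  have hej : ∀ j, e' j = (T (n j) : LaurentPolynomial F) • e j :=
    fun j => by simp [he', Module.Basis.isUnitSMul_apply]
  have hrep : ∀ w i, e.repr w i = T (n i) * e'.repr w i := by
    intro w i
    conv_lhs => rw [← e'.sum_repr w]
    rw [map_sum, Finsupp.finsetSum_apply, Finset.sum_eq_single i]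
    · rw [hej, smul_smul, map_smul, Module.Basis.repr_self, Finsupp.smul_apply,
        Finsupp.single_eq_same, smul_eq_mul, mul_one, mul_comm]
    · intro l _ hl
      rw [hej, smul_smul, map_smul, Module.Basis.repr_self, Finsupp.smul_apply,
        Finsupp.single_eq_of_ne hl.symm, smul_zero]
    · simp
  intro x i j m hm
  obtain ⟨K, hK⟩ := hnil x
  have h1 : (Zm ρ e' x i j).coeff m = (e.repr (ρ x (e' j)) i).coeff (m + n i) := by
    rw [Zm_apply, hrep, T_one_mul_coeff, add_sub_cancel_right]
  rw [h1, rho_repr hT e K x hK, AddMonoidAlgebra.coeff_sum, Finsupp.finsetSum_apply]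
  refine Finset.sum_eq_zero fun k _ => ?_
  rw [Finset.sum_eq_single j]
  · rw [hej, map_smul, Module.Basis.repr_self, Finsupp.smul_apply, Finsupp.single_eq_same, smul_eq_mul,
      mul_one, LaurentPolynomial.T, hs_single,
      AddMonoidAlgebra.coeff_mul_single_apply, h _ i j, zero_mul]
    push_cast
    have : (0 : ℝ) ≤ k := Nat.cast_nonneg k
    linarith
  · intro l _ hl
    rw [hej, map_smul, Module.Basis.repr_self, Finsupp.smul_apply, Finsupp.single_eq_of_ne hl]
    simp
  · simp

end Expand
end CA

namespace CA
open LaurentPolynomial (T)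

section Improve
variable {F : Type*} [Field F] [CharZero F] {L : Type*} [LieRing L] [LieAlgebra F L]
  {W : Type*} [AddCommGroup W] [Module F W] [Module (LaurentPolynomial F) W]
  [IsScalarTower F (LaurentPolynomial F) W]
  {δ : L →ₗ[F] L} {ρ : L →ₗ[F] Module.End F W}
  {ι : Type*} [Fintype ι] [DecidableEq ι]

/-- constant change of basis -/
lemma const_basis (e : Module.Basis ι (LaurentPolynomial F) W) (b : Module.Basis ι F (ι → F)) :
    ∃ e' : Module.Basis ι (LaurentPolynomial F) W, ∀ (x : L) (i j : ι) (n : ℤ),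
      (Zm ρ e' x i j).coeff n = b.repr (fun l => ∑ m, (Zm ρ e x l m).coeff n * b j m) i := by
  let b' : Module.Basis ι (LaurentPolynomial F) (ι → LaurentPolynomial F) :=
    (Pi.basisFun (LaurentPolynomial F) ι)
  let B : Matrix ι ι F := (Pi.basisFun F ι).toMatrix b
  let B' : Matrix ι ι F := b.toMatrix (Pi.basisFun F ι)
  have hBB : B * B' = 1 := Module.Basis.toMatrix_mul_toMatrix_flip _ _
  have hBB' : B' * B = 1 := Module.Basis.toMatrix_mul_toMatrix_flip _ _
  have hB : ∀ i j, B i j = b j i := fun i j => by simp [B, Module.Basis.toMatrix_apply]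
  have hrep : ∀ (v : ι → F) i, b.repr v i = ∑ l, B' i l * v l := by
    intro v i
    have h1 : v = ∑ l, v l • Pi.basisFun F ι l := by
      conv_lhs => rw [← (Pi.basisFun F ι).sum_repr v]
      simp
    conv_lhs => rw [h1]
    simp [B', Module.Basis.toMatrix_apply, mul_comm]
  let Bl : Matrix ι ι (LaurentPolynomial F) := B.map (algebraMap F _)
  let Bl' : Matrix ι ι (LaurentPolynomial F) := B'.map (algebraMap F _)
  have h1 : Bl * Bl' = 1 := by
    simp only [Bl, Bl']
    rw [← Matrix.map_mul, hBB]; simp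
  have h2 : Bl' * Bl = 1 := by
    simp only [Bl, Bl']
    rw [← Matrix.map_mul, hBB']; simp
  let e' : Module.Basis ι (LaurentPolynomial F) W :=
    e.map (LinearEquiv.ofLinearMap (Matrix.toLin e e Bl) (Matrix.toLin e e Bl')
      (by rw [← Matrix.toLin_mul, h1, Matrix.toLin_one])
      (by rw [← Matrix.toLin_mul, h2, Matrix.toLin_one]))
  have he' : ∀ j, e' j = ∑ i, b j i • e i := by
    intro j
    simp only [e', Module.Basis.map_apply, LinearEquiv.coe_ofLinearMap, Matrix.toLin_self]
    refine Finset.sum_congr rfl fun i _ => ?_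
    simp only [Bl, Matrix.map_apply, hB, algebraMap_smul]
  have hr' : ∀ w i, e'.repr w i = ∑ l, B' i l • e.repr w l := by
    intro w i
    simp only [e', Module.Basis.map_repr, LinearEquiv.trans_apply, LinearEquiv.symm_ofLinearMap, LinearEquiv.coe_ofLinearMap]
    rw [Matrix.toLin_apply, Module.Basis.repr_sum_self, Matrix.mulVec, dotProduct]
    refine Finset.sum_congr rfl fun l _ => ?_
    simp only [Bl', Matrix.map_apply]
    rw [Algebra.smul_def]
  refine ⟨e', fun x i j n => ?_⟩
  rw [Zm_apply, hr', hrep, he', AddMonoidAlgebra.coeff_sum, Finsupp.finsetSum_apply]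
  refine Finset.sum_congr rfl fun l _ => ?_
  rw [AddMonoidAlgebra.coeff_smul, Finsupp.smul_apply, smul_eq_mul]
  congr 1
  simp only [map_sum, map_smul, Finsupp.finsetSum_apply, AddMonoidAlgebra.coeff_sum]
  refine Finset.sum_congr rfl fun m _ => ?_
  rw [← algebraMap_smul (LaurentPolynomial F) (b j m) (ρ x (e m)), map_smul, Finsupp.smul_apply,
      algebraMap_smul, AddMonoidAlgebra.coeff_smul, Finsupp.smul_apply, smul_eq_mul, mul_comm]
  rfl

/-- homogeneous vector -/
def Hom (u : ι → ℝ) (c : ℝ) (v : ι → F) : Prop := ∀ i, v i ≠ 0 → u i = c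

/-- iterated images -/
def HH (Z : L →ₗ[F] Matrix ι ι (LaurentPolynomial F)) (u : ι → ℝ) (P : ℝ) : ℕ → Set (ι → F)
  | 0 => {v | ∃ c, 0 ≤ c ∧ c < 1 ∧ Hom u c v}
  | l + 1 => {v | ∃ x, ∃ w ∈ HH Z u P l, v = (sg Z u P x).mulVec w}

variable {Z : L →ₗ[F] Matrix ι ι (LaurentPolynomial F)} {u : ι → ℝ} {P : ℝ}

lemma HH_one (hu : ∀ i, 0 ≤ u i ∧ u i < 1) : HH Z u P 1 ⊆ HH Z u P 0 := by
  rintro v ⟨x, w, ⟨c, hc0, hc1, hc⟩, rfl⟩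
  refine ⟨Int.fract (P + c), Int.fract_nonneg _, Int.fract_lt_one _, ?_⟩
  intro i hi
  rw [Matrix.mulVec, dotProduct] at hi
  obtain ⟨j, -, hj⟩ := Finset.exists_ne_zero_of_sum_ne_zero hi
  have h1 := hc j (right_ne_zero_of_mul hj)
  have h2 := left_ne_zero_of_mul hj
  have h3 : ∃ n : ℤ, (n : ℝ) + u i = P + u j := by
    by_contra! h
    exact h2 (gc_notint _ _ _ _ h)
  obtain ⟨n, hn⟩ := h3
  rw [← h1, ← hn, Int.fract_intCast_add]
  exact (Int.fract_eq_self.mpr (hu i)).symm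

lemma HH_anti (hu : ∀ i, 0 ≤ u i ∧ u i < 1) (l : ℕ) : HH Z u P (l + 1) ⊆ HH Z u P l := by
  induction l with
  | zero => exact HH_one hu
  | succ l ih =>
    rintro v ⟨x, w, hw, rfl⟩
    exact ⟨x, w, ih hw, rfl⟩

lemma HH_list (l : ℕ) (v : ι → F) (hv : v ∈ HH Z u P l) :
    ∃ (t : List L) (w : ι → F), t.length = l ∧ v = ((t.map (sg Z u P)).prod).mulVec w := by
  induction l generalizing v with
  | zero => exact ⟨[], v, rfl, by simp⟩
  | succ l ih =>
    obtain ⟨x, w, hw, rfl⟩ := hv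
    obtain ⟨t, w', ht, rfl⟩ := ih w hw
    exact ⟨x :: t, w', by simp [ht], by simp [Matrix.mulVec_mulVec]⟩

lemma improve (e : Module.Basis ι (LaurentPolynomial F) W) (hu : ∀ i, 0 ≤ u i ∧ u i < 1)
    (hf : Feas ρ e u P) (k : ℕ)
    (hk : ∀ t : List L, t.length = k → (t.map (sg (Zm ρ e) u P)).prod = 0) :
    ∃ e' : Module.Basis ι (LaurentPolynomial F) W, ∃ u' : ι → ℝ, ∃ P' < P, Feas ρ e' u' P' := by
  obtain ⟨b, ℓ, hb1, hb2, hb3⟩ := flag_basis k (HH (Zm ρ e) u P) (HH_anti hu)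
    (by
      intro v hv
      obtain ⟨t, w, ht, rfl⟩ := HH_list k v hv
      rw [hk t ht]; simp)
    (by
      rw [eq_top_iff, ← (Pi.basisFun F ι).span_eq]
      apply Submodule.span_mono
      rintro _ ⟨i, rfl⟩
      refine ⟨u i, (hu i).1, (hu i).2, ?_⟩
      intro l hl
      by_cases h : l = i
      · rw [h]
      · simp [h] at hl)
  have hb0 : ∀ j, ∃ c, 0 ≤ c ∧ c < 1 ∧ Hom u c (b j) := fun j =>
    (antitone_nat_of_succ_le (HH_anti hu) (Nat.zero_le (ℓ j))) (hb1 j)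
  choose c hc0 hc1 hc using hb0
  have hrep : ∀ (d : ℝ) (v : ι → F), Hom u d v → ∀ i, b.repr v i ≠ 0 → c i = d := by
    intro d v hv i hi
    by_contra hne
    have hv1 := b.sum_repr v
    rw [← Finset.sum_filter_add_sum_filter_not _ (fun i => c i = d)] at hv1
    set y := ∑ i with ¬ c i = d, b.repr v i • b i with hy
    have hy0 : y = 0 := by
      funext l
      by_cases hl : u l = d
      · rw [hy, Finset.sum_apply]
        refine Finset.sum_eq_zero fun m hm => ?_
        rw [Pi.smul_apply]
        by_cases h : b m l = 0
        · rw [h, smul_zero]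
        · exact absurd ((hc m l h).symm.trans hl) (Finset.mem_filter.mp hm).2
      · have h1 := congrFun hv1 l
        rw [Pi.add_apply, Finset.sum_apply, Finset.sum_eq_zero, zero_add] at h1
        · rw [h1]
          by_contra h
          exact hl (hv l h)
        · intro m hm
          rw [Pi.smul_apply]
          by_cases h : b m l = 0
          · rw [h, smul_zero]
          · exact absurd ((hc m l h).trans (Finset.mem_filter.mp hm).2) hl
    have := linearIndependent_iff'.mp b.linearIndependent _ _ hy0 i
      (Finset.mem_filter.mpr ⟨Finset.mem_univ _, hne⟩)
    exact hi this
  obtain ⟨g, hg, hgap⟩ := exists_gap (fun ij : ι × ι => P + c ij.2 - c ij.1)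
  set ε := g / (k + 1) with hε
  have hk1 : (0 : ℝ) < k + 1 := by positivity
  have hε0 : 0 < ε := div_pos hg hk1
  have hεk : ε * (k + 1) = g := by rw [hε]; field_simp
  obtain ⟨e', he'⟩ := const_basis (ρ := ρ) e b
  refine ⟨e', fun j => c j - ε * ℓ j, P - ε, by linarith, ?_⟩
  intro x i j n hn
  rw [he']
  -- only the component at `c i` matters
  set v : ι → F := fun l => ∑ m, (Zm ρ e x l m).coeff n * b j m with hv
  have hcomp : b.repr v i = b.repr (fun l => if u l = c i then v l else 0) i := by
    have h1 : v = (fun l => if u l = c i then v l else 0) +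
        ∑ l, (if u l = c i then 0 else v l) • Pi.basisFun F ι l := by
      funext l
      simp only [Pi.add_apply, Finset.sum_apply, Pi.smul_apply, Pi.basisFun_apply, smul_eq_mul,
        Pi.single_apply, mul_ite, mul_one, mul_zero, Finset.sum_ite_eq, Finset.mem_univ, if_true]
      split_ifs <;> simp
    conv_lhs => rw [h1]
    rw [map_add, Finsupp.add_apply, map_sum, Finsupp.finsetSum_apply, Finset.sum_eq_zero, add_zero]
    intro l _
    rw [map_smul, Finsupp.smul_apply]
    by_cases hl : u l = c i
    · simp [hl]
    · have : b.repr (Pi.basisFun F ι l) i = 0 := by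
        by_contra h
        refine hl (hrep (u l) _ ?_ i h).symm
        intro m hm
        by_cases h : m = l
        · rw [h]
        · simp [h] at hm
      rw [this, smul_zero]
  rw [hcomp]
  rcases lt_trichotomy (n : ℝ) (P + c j - c i) with h | h | h
  · exfalso
    have h1 := hgap (i, j) n h
    simp only at h1
    have h2 : ((ℓ j : ℕ) : ℝ) + 1 ≤ k := by exact_mod_cast hb2 j
    have h3 : (0 : ℝ) ≤ ℓ i := Nat.cast_nonneg _
    nlinarith
  · have h1 : (fun l => if u l = c i then v l else 0) =
        fun l => if u l = c i then (sg (Zm ρ e) u P x).mulVec (b j) l else 0 := by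
      funext l
      split_ifs with hl
      · rw [hv, Matrix.mulVec, dotProduct]
        refine Finset.sum_congr rfl fun m _ => ?_
        by_cases hm : b j m = 0
        · rw [hm, mul_zero, mul_zero]
        · have := hc j m hm
          rw [sg_apply, gc_exact _ _ l m n (by rw [hl, this]; linarith)]
      · rfl
    have h2 : (sg (Zm ρ e) u P x).mulVec (b j) ∈ HH (Zm ρ e) u P (ℓ j + 1) := ⟨x, b j, hb1 j, rfl⟩
    have h3 : (fun l => if u l = c i then (sg (Zm ρ e) u P x).mulVec (b j) l else 0) =
        (sg (Zm ρ e) u P x).mulVec (b j) ∨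
        (fun l => if u l = c i then (sg (Zm ρ e) u P x).mulVec (b j) l else 0) = 0 := by
      obtain ⟨d, -, -, hd⟩ := (antitone_nat_of_succ_le (HH_anti hu) (Nat.zero_le (ℓ j + 1))) h2
      by_cases hdc : d = c i
      · left
        funext l
        split_ifs with hl
        · rfl
        · by_contra h
          exact hl ((hd l (Ne.symm h)).trans hdc)
      · right
        funext l
        split_ifs with hl
        · by_contra h
          exact hdc ((hd l h).symm.trans hl)
        · rfl
    rw [h1]
    rcases h3 with h3 | h3
    · rw [h3]
      by_contra hne
      have h4 : ((ℓ j : ℕ) : ℝ) + 1 ≤ ℓ i := by exact_mod_cast hb3 _ _ h2 i hne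
      nlinarith
    · rw [h3]; simp
  · have : (fun l => if u l = c i then v l else 0) = 0 := by
      funext l
      split_ifs with hl
      · rw [hv]
        refine Finset.sum_eq_zero fun m _ => ?_
        by_cases hm : b j m = 0
        · rw [hm, mul_zero]
        · have h5 := hc j m hm
          rw [hf x l m n (by rw [hl, h5]; linarith), zero_mul]
      · rfl
    rw [this]; simp

end Improve
end CA

namespace CA
open LaurentPolynomial (T)

section Analysis
variable {F : Type*} [Field F] [CharZero F] {L : Type*} [LieRing L] [LieAlgebra F L]
  {W : Type*} [AddCommGroup W] [Module F W] [Module (LaurentPolynomial F) W]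
  [IsScalarTower F (LaurentPolynomial F) W]
  {δ : L →ₗ[F] L} {ρ : L →ₗ[F] Module.End F W}
  {ι : Type*} [Fintype ι] [DecidableEq ι]

/-- filtration -/
def FD (e : Module.Basis ι (LaurentPolynomial F) W) (u : ι → ℝ) (t : ℝ) (w : W) : Prop :=
  ∀ i (n : ℤ), t < n + u i → (e.repr w i).coeff n = 0

lemma FD_step (hT : ∀ x w, ρ x ((T 1 : LaurentPolynomial F) • w) = (T 1 : LaurentPolynomial F) • ρ x w + ρ (δ x) w)
    (hnil : ∀ x : L, ∃ k, (δ ^ k) x = 0)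
    {e : Module.Basis ι (LaurentPolynomial F) W} {u : ι → ℝ} {P t : ℝ} (h : Feas ρ e u P)
    {w : W} (hw : FD e u t w) (x : L) : FD e u (t + P) (ρ x w) := by
  intro i n hn
  obtain ⟨K, hK⟩ := hnil x
  rw [rho_repr hT e K x hK, AddMonoidAlgebra.coeff_sum, Finsupp.finsetSum_apply]
  refine Finset.sum_eq_zero fun k _ => ?_
  rw [AddMonoidAlgebra.coeff_sum, Finsupp.finsetSum_apply]
  refine Finset.sum_eq_zero fun l _ => ?_
  refine coeff_mul_above (b := ⌊t - u l⌋) ((h _).entry i l) (fun m hm => ?_) n ?_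
  · have := Int.floor_lt.mp hm
    rw [hs_coeff, hw l, mul_zero]
    have : (0 : ℝ) ≤ k := Nat.cast_nonneg k
    push_cast
    linarith
  · have h1 := Int.floor_le (P + u l - u i)
    have h2 := Int.floor_le (t - u l)
    have : ((⌊P + u l - u i⌋ + ⌊t - u l⌋ : ℤ) : ℝ) < n := by push_cast; linarith
    exact_mod_cast this

lemma FD_bot (e e0 : Module.Basis ι (LaurentPolynomial F) W) (u : ι → ℝ) :
    ∃ s : ℝ, ∀ t < s, ∀ w, FD e u t w → ∀ i (n : ℤ), 0 ≤ n → (e0.repr w i).coeff n = 0 := by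
  choose a ha using fun p : ι × ι => exists_deg_bound (e0.repr (e p.2) p.1)
  obtain ⟨s, hs⟩ := (Set.finite_range fun p : ι × ι => u p.2 - a p).bddBelow
  refine ⟨s, fun t ht w hw i n hn => ?_⟩
  rw [← e.sum_repr w, map_sum, Finsupp.finsetSum_apply, AddMonoidAlgebra.coeff_sum,
    Finsupp.finsetSum_apply]
  refine Finset.sum_eq_zero fun l _ => ?_
  rw [map_smul, Finsupp.smul_apply, smul_eq_mul]
  refine coeff_mul_above (a := ⌊t - u l⌋) (b := a (i, l)) (fun m hm => ?_) (ha (i, l)) n ?_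
  · have := Int.floor_lt.mp hm
    exact hw l m (by linarith)
  · have h1 : s ≤ u l - a (i, l) := hs ⟨(i, l), rfl⟩
    have h2 := Int.floor_le (t - u l)
    have : ((⌊t - u l⌋ + a (i, l) : ℤ) : ℝ) < n := by
      have : (0 : ℝ) ≤ n := by exact_mod_cast hn
      push_cast; linarith
    exact_mod_cast this

lemma FD_top (e : Module.Basis ι (LaurentPolynomial F) W) (u : ι → ℝ) (w : W) :
    ∃ t, FD e u t w := by
  choose a ha using fun i => exists_deg_bound (e.repr w i)
  obtain ⟨s, hs⟩ := (Set.finite_range fun i : ι => u i + a i).bddAbove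
  refine ⟨s, fun i n hn => ha i n ?_⟩
  have h1 : u i + a i ≤ s := hs ⟨i, rfl⟩
  have : (a i : ℝ) < n := by linarith
  exact_mod_cast this

lemma feas_nonneg (hT : ∀ x w, ρ x ((T 1 : LaurentPolynomial F) • w) = (T 1 : LaurentPolynomial F) • ρ x w + ρ (δ x) w)
    (hnil : ∀ x : L, ∃ k, (δ ^ k) x = 0)
    (e0 : Module.Basis ι (LaurentPolynomial F) W) (S : Submodule F W)
    (hSρ : ∀ x, ∀ w ∈ S, ρ x w ∈ S) (hcen : ∀ w ∈ S, (∀ x, ρ x w = 0) → w = 0)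
    (hneg : ∀ w ∈ S, (∀ i (n : ℤ), 0 ≤ n → (e0.repr w i).coeff n = 0) → w = 0)
    (hS0 : ∃ w ∈ S, w ≠ 0)
    {e : Module.Basis ι (LaurentPolynomial F) W} {u : ι → ℝ} {P : ℝ} (h : Feas ρ e u P) :
    0 ≤ P := by
  by_contra! hP
  let A : Set ℝ := {t | ∃ w ∈ S, w ≠ 0 ∧ FD e u t w}
  obtain ⟨s, hs⟩ := FD_bot e e0 u
  have hbd : BddBelow A := by
    refine ⟨s, ?_⟩
    rintro t ⟨w, hw, hw0, hw1⟩
    by_contra! hts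
    exact hw0 (hneg w hw (hs t hts w hw1))
  have hne : A.Nonempty := by
    obtain ⟨w, hw, hw0⟩ := hS0
    obtain ⟨t, ht⟩ := FD_top e u w
    exact ⟨t, w, hw, hw0, ht⟩
  obtain ⟨t, ⟨w, hw, hw0, hw1⟩, htl⟩ := exists_lt_of_csInf_lt hne
    (show sInf A < sInf A - P by linarith)
  apply hw0
  apply hcen w hw
  intro x
  by_contra hx
  have : sInf A ≤ t + P := csInf_le hbd ⟨ρ x w, hSρ x w hw, hx, FD_step hT hnil h hw1 x⟩
  linarith

lemma MD.shift {u : ι → ℝ} {P : ℝ} {M : Matrix ι ι (LaurentPolynomial F)} (h : MD u P M) (c : ℝ) :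
    MD (fun i => u i + c) P M := fun i j n hn => h i j n (by linarith)

theorem analysis [IsAlgClosed F] [Nonempty ι] (hsurj : Function.Surjective δ)
    (hnil : ∀ x : L, ∃ k, (δ ^ k) x = 0)
    (hT : ∀ x w, ρ x ((T 1 : LaurentPolynomial F) • w) = (T 1 : LaurentPolynomial F) • ρ x w + ρ (δ x) w)
    (hl : ∀ x y w, ρ ⁅x, y⁆ w = ρ x (ρ y w) - ρ y (ρ x w))
    (e0 : Module.Basis ι (LaurentPolynomial F) W) (S : Submodule F W)
    (hST : ∀ w : W, ∃ N : ℤ, ∀ n ≥ N, (T n : LaurentPolynomial F) • w ∈ S)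
    (hSρ : ∀ x, ∀ w ∈ S, ρ x w ∈ S) (hcen : ∀ w ∈ S, (∀ x, ρ x w = 0) → w = 0)
    (hneg : ∀ w ∈ S, (∀ i (n : ℤ), 0 ≤ n → (e0.repr w i).coeff n = 0) → w = 0)
    (hS0 : ∃ w ∈ S, w ≠ 0)
    (hinit : ∃ d : ℤ, ∀ x i j n, d < n → (e0.repr (ρ x (e0 j)) i).coeff n = 0) :
    ∃ w : ι → W, (∀ j, w j ∈ S) ∧
      ((∃ J : LieIdeal F L, J ≠ ⊤ ∧ Module.Finite F (L ⧸ J.toSubmodule) ∧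
        ∀ x, (∀ j, ρ x (w j) = 0) → x ∈ J) ∨
      (∃ θ : L →ₗ[F] F, θ ≠ 0 ∧ (∀ x, (∀ j, ρ x (w j) = 0) → θ x = 0) ∧
        ∀ x b, θ ⁅x, b⁆ = θ (δ x) * θ b - θ (δ b) * θ x)) := by
  -- minimal slope
  let r := Fintype.card ι
  let Q : ℕ → Prop := fun N => ∃ (e : Module.Basis ι (LaurentPolynomial F) W) (u : ι → ℝ) (P : ℝ),
    Feas ρ e u P ∧ (∃ q : ℕ, 1 ≤ q ∧ q ≤ r ∧ ∃ p : ℤ, (q : ℝ) * P = p) ∧ P * (r.factorial : ℝ) = N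
  have hround : ∀ (e : Module.Basis ι (LaurentPolynomial F) W) (u : ι → ℝ) (P : ℝ), Feas ρ e u P →
      ∃ N, Q N ∧ (N : ℝ) ≤ P * r.factorial := by
    intro e u P h
    obtain ⟨u', P', hPP, ⟨q, hq1, hq2, p, hp⟩, hr⟩ := rounding u P
    have h' : Feas ρ e u' P' := by
      intro x i j n hn
      apply h x i j n
      by_contra! hh
      exact absurd (hr i j n hh) (not_le.mpr hn)
    have hP0 : 0 ≤ P' := feas_nonneg hT hnil e0 S hSρ hcen hneg hS0 h'
    obtain ⟨m, hm⟩ := Nat.dvd_factorial hq1 hq2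
    have hN : P' * (r.factorial : ℝ) = ((p * m : ℤ) : ℝ) := by
      have : (r.factorial : ℝ) = q * m := by exact_mod_cast hm
      rw [this]; push_cast; rw [← hp]; ring
    have hpm : 0 ≤ p * m := by
      have : (0 : ℝ) ≤ ((p * m : ℤ) : ℝ) := by rw [← hN]; positivity
      exact_mod_cast this
    have hN2 : P' * (r.factorial : ℝ) = ((p * m).toNat : ℕ) := by
      rw [hN]
      exact_mod_cast (Int.toNat_of_nonneg hpm).symm
    refine ⟨(p * m).toNat, ⟨e, u', P', h', ⟨q, hq1, hq2, p, hp⟩, hN2⟩, ?_⟩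
    rw [← hN2]
    exact mul_le_mul_of_nonneg_right hPP (by positivity)
  have hex : ∃ N, Q N := by
    obtain ⟨d, hd⟩ := hinit
    obtain ⟨N, hN, -⟩ := hround e0 0 d (by
      intro x i j n hn
      apply hd
      simp only [Pi.zero_apply, add_zero] at hn
      exact_mod_cast hn)
    exact ⟨N, hN⟩
  classical
  obtain ⟨e1, u1, P, hf1, ⟨q, hq1, -, p, hp⟩, hPN⟩ := Nat.find_spec hex
  have hmin : ∀ (e : Module.Basis ι (LaurentPolynomial F) W) (u : ι → ℝ) (P' : ℝ), Feas ρ e u P' →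
      P ≤ P' := by
    intro e u P' h
    obtain ⟨N, hN, hN2⟩ := hround e u P' h
    have h1 : (Nat.find hex : ℝ) ≤ N := by exact_mod_cast Nat.find_min' hex hN
    have h2 : P * (r.factorial : ℝ) ≤ P' * r.factorial := by rw [hPN]; exact h1.trans hN2
    exact le_of_mul_le_mul_right h2 (by positivity)
  have hP0 : 0 ≤ P := feas_nonneg hT hnil e0 S hSρ hcen hneg hS0 hf1
  -- integral weights if P = 1
  obtain ⟨u2, hf2, hu2⟩ : ∃ u2 : ι → ℝ, Feas ρ e1 u2 P ∧ (P = 1 → ∀ i, Int.fract (u2 i) = 0) := by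
    by_cases h1 : P = 1
    · refine ⟨fun i => (⌊u1 i⌋ : ℝ), ?_, fun _ i => Int.fract_intCast _⟩
      intro x i j n hn
      apply hf1 x i j n
      rw [h1] at hn ⊢
      beta_reduce at hn
      have h2 : 1 + ⌊u1 j⌋ < n + ⌊u1 i⌋ := by exact_mod_cast hn
      have h3 : ((2 + ⌊u1 j⌋ : ℤ) : ℝ) ≤ ((n + ⌊u1 i⌋ : ℤ) : ℝ) := by
        exact_mod_cast (show 2 + ⌊u1 j⌋ ≤ n + ⌊u1 i⌋ by omega)
      push_cast at h3
      have := Int.floor_le (u1 i)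
      have := Int.lt_floor_add_one (u1 j)
      linarith
    · exact ⟨u1, hf1, fun h => absurd h h1⟩
  choose Nj hNj using fun j => hST (e1 j)
  obtain ⟨N, hN⟩ := (Set.finite_range fun j : ι => Nj j + ⌊u2 j⌋).bddAbove
  obtain ⟨e, he, hf3⟩ := rescale hT hnil hf2 (fun j => N - ⌊u2 j⌋)
  set u : ι → ℝ := fun j => Int.fract (u2 j) with hu
  have hf : Feas ρ e u P := by
    intro x
    have := (hf3 x).shift (-N)
    convert this using 2 with j
    rw [hu]; simp only [Int.fract]; push_cast; ring
  have hu01 : ∀ i, 0 ≤ u i ∧ u i < 1 := fun i => ⟨Int.fract_nonneg _, Int.fract_lt_one _⟩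
  have heS : ∀ j, e j ∈ S := by
    intro j
    rw [he]
    apply hNj
    have : Nj j + ⌊u2 j⌋ ≤ N := hN ⟨j, rfl⟩
    omega
  refine ⟨e, heS, ?_⟩
  have hker : ∀ x, (∀ j, ρ x (e j) = 0) → sg (Zm ρ e) u P x = 0 := by
    intro x hx
    have : Zm ρ e x = 0 := by
      refine Matrix.ext fun i j => ?_
      rw [Zm_apply, hx]; simp
    rw [sg_apply, this, gc_zero]
  have hca := case_analysis hsurj hnil (Zm_ZLie hT hl e) hf hP0 ⟨q, hq1, p, hp⟩ ?_ ?_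
  · rcases hca with ⟨J, hJ, hJ2⟩ | ⟨θ, h1, h2, h3⟩
    · left
      refine ⟨J, hJ, ?_, fun x hx => hJ2 x (hker x hx)⟩
      have hle : LinearMap.ker (sg (Zm ρ e) u P) ≤ J.toSubmodule := fun x hx => hJ2 x hx
      have : Module.Finite F (L ⧸ LinearMap.ker (sg (Zm ρ e) u P)) :=
        Module.Finite.equiv (LinearMap.quotKerEquivRange _).symm
      exact Module.Finite.of_surjective (Submodule.factor hle) (Submodule.factor_surjective hle)
    · right
      exact ⟨θ, h1, fun x hx => h2 x (hker x hx), h3⟩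
  · intro k
    by_contra! hk
    obtain ⟨e', u', P', hP', hf'⟩ := improve e hu01 hf k hk
    exact absurd (hmin e' u' P' hf') (not_le.mpr hP')
  · intro h1
    funext i
    exact hu2 h1 i

end Analysis
end CA

namespace CA

section Basics
attribute [local instance] LieRing.ofAssociativeRing
variable {F R : Type*} [Field F] [CharZero F] [AddCommGroup R] [Module F R]
  (C : ConformalAlgebra F R)

lemma sesq (n : ℕ) (u v : R) : C.prod n (C.D u) v = -(n : F) • C.prod (n - 1) u v := by
  cases n with
  | zero => simp [C.sesqui_zero]
  | succ n => rw [C.sesqui]; simp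

lemma deriv (n : ℕ) (a b : R) :
    C.prod n a (C.D b) = C.D (C.prod n a b) + (n : F) • C.prod (n - 1) a b := by
  obtain ⟨N1, h1⟩ := C.locality b a
  obtain ⟨N2, h2⟩ := C.locality (C.D b) a
  have hN1 : ∀ k, ∀ j ≥ N1 + N2, C.prod (k + j) b a = 0 := fun k j hj => h1 _ (by omega)
  have hN3 : ∀ k, ∀ j ≥ N1 + N2 + 1, C.prod (k + j) b a = 0 := fun k j hj => h1 _ (by omega)
  have hN2 : ∀ k, ∀ j ≥ N1 + N2 + 1, C.prod (k + j) (C.D b) a = 0 := fun k j hj => h2 _ (by omega)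
  rw [C.skew n (N1 + N2 + 1) a (C.D b) (hN2 n), C.skew n (N1 + N2) a b (hN1 n)]
  cases n with
  | zero =>
    rw [Finset.sum_range_succ', map_sum]
    simp only [sesq, Nat.cast_zero, zero_smul, neg_zero, add_zero, map_zero, smul_zero, zero_add, map_smul]
    refine Finset.sum_congr rfl fun j _ => ?_
    rw [← Module.End.mul_apply C.D, ← pow_succ', smul_smul, Nat.add_sub_cancel]
    congr 1
    rw [Nat.factorial_succ]
    have : ((j + 1 : ℕ) : F) ≠ 0 := Nat.cast_ne_zero.mpr (Nat.succ_ne_zero j)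
    have h3 : ((j.factorial : ℕ) : F) ≠ 0 := Nat.cast_ne_zero.mpr (Nat.factorial_ne_zero j)
    push_cast at this ⊢
    field_simp
    ring
  | succ n =>
    rw [Nat.add_sub_cancel, C.skew n (N1 + N2 + 1) a b (hN3 n), Finset.sum_range_succ',
      Finset.sum_range_succ' (fun j => ((-1 : F) ^ (n + j + 1) * ((j.factorial : F)⁻¹)) • _),
      smul_add, Finset.smul_sum, map_sum, ← add_assoc, ← Finset.sum_add_distrib]
    congr 1
    · refine Finset.sum_congr rfl fun j _ => ?_
      rw [sesq, map_smul, map_smul, ← Module.End.mul_apply C.D, ← pow_succ', smul_smul, smul_smul]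
      have e1 : n + 1 + (j + 1) - 1 = n + 1 + j := by omega
      have e2 : n + (j + 1) = n + 1 + j := by omega
      rw [e1, e2, ← add_smul]
      congr 1
      rw [Nat.factorial_succ]
      have : ((j + 1 : ℕ) : F) ≠ 0 := Nat.cast_ne_zero.mpr (Nat.succ_ne_zero j)
      have h3 : ((j.factorial : ℕ) : F) ≠ 0 := Nat.cast_ne_zero.mpr (Nat.factorial_ne_zero j)
      push_cast at this ⊢
      field_simp
      ring
    · rw [sesq, map_smul, smul_smul, smul_smul]
      simp only [add_zero, Nat.add_sub_cancel]
      congr 1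
      push_cast
      ring

lemma left_zero_of_right {w : R} (h : ∀ a n, C.prod n w a = 0) : ∀ a n, C.prod n a w = 0 := by
  intro a n
  rw [C.skew n 0 a w (fun j _ => h a _)]; simp

lemma right_zero_of_left {w : R} (h : ∀ a n, C.prod n a w = 0) : ∀ a n, C.prod n w a = 0 := by
  intro a n
  rw [C.skew n 0 w a (fun j _ => h a _)]; simp

/-- the center -/
def cen : Submodule F R where
  carrier := {w | ∀ a n, C.prod n w a = 0}
  add_mem' h h' a n := by rw [map_add, LinearMap.add_apply, h, h', add_zero]
  zero_mem' a n := by simp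
  smul_mem' c w h a n := by rw [map_smul, LinearMap.smul_apply, h, smul_zero]

variable {C}

lemma cen_eq_bot (hnz : ∃ (n : ℕ) (u v : R), C.prod n u v ≠ 0)
    (hsimple : ∀ I : Submodule F R, (∀ x ∈ I, C.D x ∈ I) →
      (∀ (u : R), ∀ w ∈ I, ∀ n : ℕ, C.prod n u w ∈ I) → I = ⊥ ∨ I = ⊤) : cen C = ⊥ := by
  refine (hsimple (cen C) ?_ ?_).resolve_right ?_
  · intro x hx a n
    rw [sesq, hx, smul_zero]
  · intro u w hw n
    rw [left_zero_of_right C hw]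
    exact zero_mem _
  · intro h
    obtain ⟨n, u, v, huv⟩ := hnz
    have : u ∈ cen C := h ▸ Submodule.mem_top
    exact huv (this v n)

lemma sesq_pow_mem (I : Submodule F R) (k n : ℕ) (u v : R) (h : ∀ m, m + k = n → C.prod m u v ∈ I) :
    C.prod n ((C.D ^ k) u) v ∈ I := by
  induction k generalizing n with
  | zero => exact h n rfl
  | succ k ih =>
    rw [pow_succ', Module.End.mul_apply, sesq]
    cases n with
    | zero => simp
    | succ n => exact I.smul_mem _ (ih _ (fun m hm => h m (by omega)))

lemma sesq_pow_top (k n : ℕ) (u v : R) :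
    ∃ c : F, c ≠ 0 ∧ C.prod (n + k) ((C.D ^ k) u) v = c • C.prod n u v := by
  induction k with
  | zero => exact ⟨1, one_ne_zero, by simp⟩
  | succ k ih =>
    obtain ⟨c, hc, h⟩ := ih
    refine ⟨-((n + (k + 1) : ℕ) : F) * c, mul_ne_zero (neg_ne_zero.mpr ?_) hc, ?_⟩
    · exact Nat.cast_ne_zero.mpr (by omega)
    · rw [pow_succ', Module.End.mul_apply, sesq]
      have : n + (k + 1) - 1 = n + k := by omega
      rw [this, h, smul_smul]

open Polynomial in
lemma torsion_cen (p : F[X]) (hp : p ≠ 0) (w : R) (h : aeval C.D p w = 0) : w ∈ cen C := by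
  intro a n
  obtain ⟨N, hN⟩ := C.locality w a
  by_contra hne
  -- take maximal n
  classical
  have hex : ∃ n, C.prod n w a ≠ 0 ∧ ∀ m > n, C.prod m w a = 0 := by
    have hlt : ∀ m, C.prod m w a ≠ 0 → m ≤ N := fun m hm => by
      by_contra hh; exact hm (hN m (by omega))
    have hsp := Nat.findGreatest_spec (P := fun m => C.prod m w a ≠ 0) (n := N) (hlt n hne) hne
    refine ⟨_, hsp, fun m hm => ?_⟩
    by_contra hm'
    exact absurd (Nat.le_findGreatest (hlt m hm') hm') (not_le.mpr hm)
  obtain ⟨n, hn, hmax⟩ := hex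
  have h1 : C.prod (n + p.natDegree) (aeval C.D p w) a = 0 := by rw [h]; simp
  rw [aeval_eq_sum_range, LinearMap.sum_apply, map_sum, LinearMap.sum_apply,
    Finset.sum_range_succ, Finset.sum_eq_zero, zero_add] at h1
  · obtain ⟨c, hc, h2⟩ := sesq_pow_top (C := C) p.natDegree n w a
    rw [LinearMap.smul_apply, map_smul, LinearMap.smul_apply, h2, smul_smul] at h1
    have := mul_ne_zero (leadingCoeff_ne_zero.mpr hp) hc
    exact hn ((smul_eq_zero.mp h1).resolve_left this)
  · intro i hi
    rw [LinearMap.smul_apply, map_smul, LinearMap.smul_apply]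
    have : C.prod (n + p.natDegree) ((C.D ^ i) w) a ∈ (⊥ : Submodule F R) :=
      sesq_pow_mem ⊥ i _ w a (fun m hm => by
        rw [hmax m (by have := Finset.mem_range.mp hi; omega)]; exact zero_mem _)
    rw [(Submodule.mem_bot F).mp this, smul_zero]

variable (C)
/-- the annihilation-type Lie algebra acting on `R` -/
def LL : LieSubalgebra F (Module.End F R) where
  __ := Submodule.span F (Set.range fun p : ℕ × R => (C.prod p.1 p.2 : Module.End F R))
  lie_mem' := by
    intro x y hx hy
    change _ ∈ Submodule.span F _ at hx
    change _ ∈ Submodule.span F _ at hy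
    change _ ∈ Submodule.span F _
    induction hx using Submodule.span_induction with
    | zero => rw [zero_lie]; exact zero_mem _
    | add x x' _ _ h h' => rw [add_lie]; exact add_mem h h'
    | smul c x _ h => rw [smul_lie]; exact Submodule.smul_mem _ _ h
    | mem x hx =>
      obtain ⟨⟨m, a⟩, rfl⟩ := hx
      induction hy using Submodule.span_induction with
      | zero => rw [lie_zero]; exact zero_mem _
      | add x x' _ _ h h' => rw [lie_add]; exact add_mem h h'
      | smul c x _ h => rw [lie_smul]; exact Submodule.smul_mem _ _ h
      | mem y hy =>
        obtain ⟨⟨n, b⟩, rfl⟩ := hy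
        have : ⁅(C.prod m a : Module.End F R), (C.prod n b : Module.End F R)⁆ =
            ∑ j ∈ Finset.range (m + 1), ((m.choose j : F)) • C.prod (m + n - j) (C.prod j a b) := by
          ext w
          rw [LieRing.of_associative_ring_bracket]
          simpa using C.jacobi m n a b w
        simp only
        rw [this]
        refine Submodule.sum_mem _ fun j _ => Submodule.smul_mem _ _ (Submodule.subset_span ⟨(_, _), rfl⟩)

/-- generator -/
def gen (n : ℕ) : R →ₗ[F] LL C where
  toFun a := ⟨C.prod n a, Submodule.subset_span ⟨(n, a), rfl⟩⟩
  map_add' a b := by ext; simp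
  map_smul' c a := by ext; simp

variable {C}
@[simp] lemma gen_apply (n : ℕ) (a w : R) : (gen C n a : Module.End F R) w = C.prod n a w := rfl

lemma LL_coe_add (x y : LL C) : ((x + y : LL C) : Module.End F R) = x + y := rfl

lemma LL_ind {p : LL C → Prop} (h0 : p 0) (hadd : ∀ x y, p x → p y → p (x + y))
    (hsmul : ∀ (c : F) x, p x → p (c • x)) (hgen : ∀ n a, p (gen C n a)) (x : LL C) : p x := by
  obtain ⟨x, hx0⟩ := x
  have hx2 : x ∈ Submodule.span F (Set.range fun p : ℕ × R => (C.prod p.1 p.2 : Module.End F R)) := hx0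
  induction hx2 using Submodule.span_induction with
  | zero => exact h0
  | add x y hx hy h h' => exact hadd ⟨x, hx⟩ ⟨y, hy⟩ (h hx) (h' hy)
  | smul c x hx h => exact hsmul c ⟨x, hx⟩ (h hx)
  | mem x hx2 => obtain ⟨⟨m, a⟩, rfl⟩ := hx2; exact hgen m a

lemma gen_lie (m n : ℕ) (a b : R) : ⁅gen C m a, gen C n b⁆ =
    ∑ j ∈ Finset.range (m + 1), ((m.choose j : F)) • gen C (m + n - j) (C.prod j a b) := by
  apply Subtype.ext
  ext w
  have := C.jacobi m n a b w
  rw [LieSubalgebra.coe_bracket, LieRing.of_associative_ring_bracket]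
  simpa using this

variable (C)
/-- the derivation -/
def dl : LL C →ₗ[F] LL C where
  toFun x := ⟨(x : Module.End F R) * C.D - C.D * (x : Module.End F R), by
    refine LL_ind (p := fun x : LL C => (x : Module.End F R) * C.D - C.D * (x : Module.End F R) ∈ LL C)
      ?_ ?_ ?_ ?_ x
    · simp
    · intro x y hx hy
      convert add_mem hx hy using 1
      simp only [LL_coe_add, add_mul, mul_add]; abel
    · intro c x hx
      convert (LL C).smul_mem c hx using 1
      simp [smul_sub]
    · intro n a
      convert ((n : F) • gen C (n - 1) a).2 using 1
      ext w
      simp [deriv]⟩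
  map_add' x y := by
    apply Subtype.ext
    simp only [LL_coe_add, add_mul, mul_add]; abel
  map_smul' c x := by
    apply Subtype.ext
    simp [smul_sub]
variable {C}

lemma dl_act (x : LL C) (w : R) :
    (dl C x : Module.End F R) w = (x : Module.End F R) (C.D w) - C.D ((x : Module.End F R) w) := rfl

lemma dl_gen (n : ℕ) (a : R) : dl C (gen C n a) = (n : F) • gen C (n - 1) a := by
  apply Subtype.ext
  ext w
  rw [dl_act]
  simp [deriv]

lemma dl_surj : Function.Surjective (dl C) := by
  intro x
  refine LL_ind (p := fun x => ∃ y, dl C y = x) ?_ ?_ ?_ ?_ x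
  · exact ⟨0, map_zero _⟩
  · rintro _ _ ⟨y, rfl⟩ ⟨z, rfl⟩; exact ⟨y + z, map_add _ _ _⟩
  · rintro c _ ⟨y, rfl⟩; exact ⟨c • y, map_smul _ _ _⟩
  · intro n a
    refine ⟨((n + 1 : ℕ) : F)⁻¹ • gen C (n + 1) a, ?_⟩
    rw [map_smul, dl_gen, smul_smul, inv_mul_cancel₀ (Nat.cast_ne_zero.mpr (Nat.succ_ne_zero n)),
      one_smul, Nat.add_sub_cancel]

lemma dl_pow_gen (n : ℕ) (a : R) : (dl C ^ (n + 1)) (gen C n a) = 0 := by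
  induction n with
  | zero => simp [dl_gen]
  | succ n ih => rw [pow_succ, Module.End.mul_apply, dl_gen, map_smul, Nat.add_sub_cancel, ih, smul_zero]

lemma dl_nil (x : LL C) : ∃ k, (dl C ^ k) x = 0 := by
  refine LL_ind (p := fun x => ∃ k, (dl C ^ k) x = 0) ?_ ?_ ?_ ?_ x
  · exact ⟨0, map_zero _⟩
  · rintro x y ⟨k, hk⟩ ⟨l, hl⟩
    refine ⟨k + l, ?_⟩
    rw [map_add, pow_zero_of_le hk (by omega), pow_zero_of_le hl (by omega), add_zero]
  · rintro c x ⟨k, hk⟩; exact ⟨k, by rw [map_smul, hk, smul_zero]⟩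
  · intro n a; exact ⟨n + 1, dl_pow_gen n a⟩

lemma dl_lie (x y : LL C) : dl C ⁅x, y⁆ = ⁅dl C x, y⁆ + ⁅x, dl C y⁆ := by
  apply Subtype.ext
  ext w
  simp only [LL_coe_add, LieSubalgebra.coe_bracket, LinearMap.add_apply,
    LieRing.of_associative_ring_bracket, LinearMap.sub_apply, Module.End.mul_apply, dl_act, map_sub]
  abel

end Basics
end CA

namespace CA
open LaurentPolynomial (T)

section Ext
attribute [local instance] LieRing.ofAssociativeRing
variable {F R : Type*} [Field F] [CharZero F] [AddCommGroup R] [Module F R]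
  {C : ConformalAlgebra F R} {κ : Type*} [Fintype κ] [DecidableEq κ]
  (j : R →ₗ[F] (κ → LaurentPolynomial F)) (v : κ → R)

/-- truncated extension -/
noncomputable def rhoF (K : ℕ) (x : LL C) (w : κ → LaurentPolynomial F) : κ → LaurentPolynomial F :=
  ∑ k ∈ Finset.range K, ∑ l, hs k (w l) • j (((dl C ^ k) x : Module.End F R) (v l))

open Classical in
/-- nilpotency order -/
noncomputable def Kx (x : LL C) : ℕ := Nat.find (dl_nil x)

lemma Kx_spec (x : LL C) : (dl C ^ (Kx x)) x = 0 := by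
  classical
  exact Nat.find_spec (dl_nil x)

lemma Kx_le (x : LL C) (K : ℕ) (h : (dl C ^ K) x = 0) : Kx x ≤ K := by
  classical
  exact Nat.find_min' (dl_nil x) h

lemma rhoF_indep {K K' : ℕ} (hK : K ≤ K') (x : LL C) (h : (dl C ^ K) x = 0)
    (w : κ → LaurentPolynomial F) : rhoF j v K x w = rhoF j v K' x w := by
  rw [rhoF, rhoF]
  refine Finset.sum_subset (fun k hk => ?_) (fun k _ hk => ?_)
  · simp only [Finset.mem_range] at hk ⊢; omega
  · simp only [Finset.mem_range, not_lt] at hk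
    rw [pow_zero_of_le h hk]
    simp

/-- the extended action -/
noncomputable def rho : LL C →ₗ[F] Module.End F (κ → LaurentPolynomial F) where
  toFun x :=
    { toFun := rhoF j v (Kx x) x
      map_add' := fun w w' => by
        simp only [rhoF, Pi.add_apply, map_add, add_smul, Finset.sum_add_distrib]
      map_smul' := fun c w => by
        simp only [rhoF, Pi.smul_apply, map_smul, smul_assoc, Finset.smul_sum, RingHom.id_apply] }
  map_add' x y := by
    refine LinearMap.ext fun w => ?_
    have hx : (dl C ^ (Kx x + Kx y)) x = 0 := pow_zero_of_le (Kx_spec x) (by omega)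
    have hy : (dl C ^ (Kx x + Kx y)) y = 0 := pow_zero_of_le (Kx_spec y) (by omega)
    have hxy : (dl C ^ (Kx x + Kx y)) (x + y) = 0 := by rw [map_add, hx, hy, add_zero]
    change rhoF j v _ (x + y) w = rhoF j v _ x w + rhoF j v _ y w
    rw [rhoF_indep j v (Kx_le _ _ hxy) _ (Kx_spec _), rhoF_indep j v (Kx_le _ _ hx) _ (Kx_spec _),
      rhoF_indep j v (Kx_le _ _ hy) _ (Kx_spec _)]
    simp only [rhoF, map_add, LL_coe_add, LinearMap.add_apply, smul_add, Finset.sum_add_distrib]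
  map_smul' c x := by
    refine LinearMap.ext fun w => ?_
    have hx : (dl C ^ (Kx x)) (c • x) = 0 := by rw [map_smul, Kx_spec, smul_zero]
    change rhoF j v _ (c • x) w = c • rhoF j v _ x w
    rw [rhoF_indep j v (Kx_le _ _ hx) _ (Kx_spec _)]
    simp only [rhoF, map_smul, Finset.smul_sum]
    refine Finset.sum_congr rfl fun k _ => Finset.sum_congr rfl fun l _ => ?_
    have h1 : ((c • (dl C ^ (k : ℕ)) x : LL C) : Module.End F R) (v l) =
      c • (((dl C ^ (k : ℕ)) x : LL C) : Module.End F R) (v l) := rfl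
    rw [h1, map_smul, smul_comm]

lemma rho_apply (K : ℕ) (x : LL C) (h : (dl C ^ K) x = 0) (w : κ → LaurentPolynomial F) :
    rho j v x w = ∑ k ∈ Finset.range K, ∑ l, hs k (w l) • j (((dl C ^ k) x : Module.End F R) (v l)) :=
  rhoF_indep j v (Kx_le _ _ h) _ (Kx_spec _) w

lemma rho_T (x : LL C) (w : κ → LaurentPolynomial F) :
    rho j v x ((T 1 : LaurentPolynomial F) • w) =
      (T 1 : LaurentPolynomial F) • rho j v x w + rho j v (dl C x) w := by
  obtain ⟨K, hK⟩ := dl_nil x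
  have hK1 : (dl C ^ (K + 1)) x = 0 := pow_zero_of_le hK (by omega)
  have hK2 : (dl C ^ K) (dl C x) = 0 := by rw [← Module.End.mul_apply, ← pow_succ]; exact hK1
  rw [rho_apply j v _ x hK1, rho_apply j v _ x hK1, rho_apply j v _ _ hK2,
    Finset.sum_range_succ', Finset.sum_range_succ']
  have : ∀ k, (dl C ^ k) (dl C x) = (dl C ^ (k + 1)) x := fun k => by
    rw [← Module.End.mul_apply, ← pow_succ]
  simp only [Pi.smul_apply, smul_eq_mul, hs_T_mul, hs_zero, add_smul, Finset.sum_add_distrib,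
    mul_smul, smul_add, Finset.smul_sum, this]
  abel

variable {j v}
lemma rho_j (hjD : ∀ w, j (C.D w) = (T 1 : LaurentPolynomial F) • j w)
    (hjv : ∀ k, j (v k) = Pi.single k 1)
    (hspan : Submodule.span F {w | ∃ (m : ℕ) (k : κ), w = (C.D ^ m) (v k)} = ⊤) (x : LL C) (z : R) :
    rho j v x (j z) = j ((x : Module.End F R) z) := by
  have hz : z ∈ Submodule.span F {w | ∃ (m : ℕ) (k : κ), w = (C.D ^ m) (v k)} := by
    rw [hspan]; exact Submodule.mem_top
  induction hz using Submodule.span_induction with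
  | zero => simp
  | add z z' _ _ h h' => rw [map_add, map_add, map_add, map_add, h, h']
  | smul c z _ h => rw [map_smul, map_smul, map_smul, map_smul, h]
  | mem z hz =>
    obtain ⟨m, k, rfl⟩ := hz
    induction m generalizing x with
    | zero =>
      obtain ⟨K, hK⟩ := dl_nil x
      have hK1 : (dl C ^ (K + 1)) x = 0 := pow_zero_of_le hK (by omega)
      rw [pow_zero, Module.End.one_apply, hjv, rho_apply j v _ x hK1, Finset.sum_range_succ',
        Finset.sum_eq_zero, zero_add, Finset.sum_eq_single k]
      · simp [hs_zero]
      · intro l _ hl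
        simp [hs_zero, Pi.single_eq_of_ne hl]
      · simp
      · intro i _
        refine Finset.sum_eq_zero fun l _ => ?_
        by_cases hl : l = k
        · subst hl; rw [Pi.single_eq_same, hs_one, zero_smul]
        · rw [Pi.single_eq_of_ne hl, map_zero, zero_smul]
    | succ m ih =>
      rw [pow_succ', Module.End.mul_apply, hjD, rho_T, ih, ih, ← hjD, ← map_add, dl_act]
      congr 1
      abel

lemma rho_lie (hjD : ∀ w, j (C.D w) = (T 1 : LaurentPolynomial F) • j w)
    (hjv : ∀ k, j (v k) = Pi.single k 1)
    (hspan : Submodule.span F {w | ∃ (m : ℕ) (k : κ), w = (C.D ^ m) (v k)} = ⊤)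
    (hST : ∀ w : κ → LaurentPolynomial F, ∃ N : ℕ, ∃ z, (T N : LaurentPolynomial F) • w = j z)
    (x y : LL C) (w : κ → LaurentPolynomial F) :
    rho j v ⁅x, y⁆ w = rho j v x (rho j v y w) - rho j v y (rho j v x w) := by
  obtain ⟨a, ha⟩ := dl_nil x
  obtain ⟨b, hb⟩ := dl_nil y
  obtain ⟨s, hs⟩ : ∃ s, a + b = s := ⟨_, rfl⟩
  induction s generalizing a b x y w with
  | zero =>
    obtain ⟨rfl, rfl⟩ : a = 0 ∧ b = 0 := by omega
    have hx : x = 0 := by simpa using ha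
    simp [hx]
  | succ s ih =>
    by_cases ha0 : a = 0
    · subst ha0
      have hx : x = 0 := by simpa using ha
      simp [hx]
    by_cases hb0 : b = 0
    · subst hb0
      have hy : y = 0 := by simpa using hb
      simp [hy]
    obtain ⟨a, rfl⟩ := Nat.exists_eq_succ_of_ne_zero ha0
    obtain ⟨b, rfl⟩ := Nat.exists_eq_succ_of_ne_zero hb0
    rw [pow_succ, Module.End.mul_apply] at ha hb
    have key : ∀ w, rho j v ⁅x, y⁆ ((T 1 : LaurentPolynomial F) • w) -
        (rho j v x (rho j v y ((T 1 : LaurentPolynomial F) • w)) -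
          rho j v y (rho j v x ((T 1 : LaurentPolynomial F) • w))) =
        (T 1 : LaurentPolynomial F) • (rho j v ⁅x, y⁆ w - (rho j v x (rho j v y w) - rho j v y (rho j v x w))) := by
      intro w
      have h1 := ih (dl C x) y w a ha (b + 1) (by rw [pow_succ, Module.End.mul_apply]; exact hb) (by omega)
      have h2 := ih x (dl C y) w (a + 1) (by rw [pow_succ, Module.End.mul_apply]; exact ha) b hb (by omega)
      simp only [rho_T, map_add, dl_lie, LinearMap.add_apply, h1, h2, smul_sub]
      abel
    have key2 : ∀ (n : ℕ) w, rho j v ⁅x, y⁆ ((T n : LaurentPolynomial F) • w) -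
        (rho j v x (rho j v y ((T n : LaurentPolynomial F) • w)) -
          rho j v y (rho j v x ((T n : LaurentPolynomial F) • w))) =
        (T n : LaurentPolynomial F) • (rho j v ⁅x, y⁆ w - (rho j v x (rho j v y w) - rho j v y (rho j v x w))) := by
      intro n
      induction n with
      | zero => intro w; simp
      | succ n ihn =>
        intro w
        rw [Nat.cast_succ, LaurentPolynomial.T_add, mul_smul, ihn, key, ← mul_smul]
    obtain ⟨n, z, hz⟩ := hST w
    have := key2 n w
    rw [hz, rho_j hjD hjv hspan, rho_j hjD hjv hspan, rho_j hjD hjv hspan, rho_j hjD hjv hspan,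
      rho_j hjD hjv hspan, ← map_sub, ← map_sub] at this
    have h0 : (((⁅x, y⁆ : LL C) : Module.End F R) z - ((x : Module.End F R) ((y : Module.End F R) z) -
        (y : Module.End F R) ((x : Module.End F R) z))) = 0 := by
      rw [LieSubalgebra.coe_bracket, LieRing.of_associative_ring_bracket]
      simp
    rw [h0, map_zero] at this
    have h3 := T_smul_inj (n : ℤ) (this.symm.trans (smul_zero _).symm)
    exact sub_eq_zero.mp h3

end Ext

section Free
attribute [local instance] LieRing.ofAssociativeRing
variable {F R : Type*} [Field F] [CharZero F] [AddCommGroup R] [Module F R]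
  {C : ConformalAlgebra F R}

open Polynomial in
lemma exists_basis (hcen : cen C = ⊥)
    (hft : ∃ V : Submodule F R, FiniteDimensional F V ∧
      Submodule.span F {x : R | ∃ (m : ℕ) (v : R), v ∈ V ∧ x = (C.D ^ m) v} = ⊤) :
    ∃ (r : ℕ), Nonempty (Module.Basis (Fin r) F[X] (Module.AEval' C.D)) := by
  have h1 : Module.Finite F[X] (Module.AEval' C.D) := by
    obtain ⟨V, hV, hspan⟩ := hft
    obtain ⟨s, hs⟩ := (Module.Finite.iff_fg.mp hV)
    refine ⟨⟨s.map (Module.AEval'.of C.D).toEquiv.toEmbedding, ?_⟩⟩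
    rw [eq_top_iff]
    intro x _
    have hx : (Module.AEval'.of C.D).symm x ∈ Submodule.span F {x : R | ∃ (m : ℕ) (v : R), v ∈ V ∧ x = (C.D ^ m) v} := by
      rw [hspan]; exact Submodule.mem_top
    obtain ⟨z, rfl⟩ : ∃ z, Module.AEval'.of C.D z = x := ⟨_, (Module.AEval'.of C.D).apply_symm_apply x⟩
    rw [LinearEquiv.symm_apply_apply] at hx
    have hVm : ∀ v ∈ V, Module.AEval'.of C.D v ∈ Submodule.span F[X]
        ((s.map (Module.AEval'.of C.D).toEquiv.toEmbedding : Finset (Module.AEval' C.D)) : Set _) := by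
      intro v hv
      rw [← hs] at hv
      induction hv using Submodule.span_induction with
      | zero => simp
      | add a b _ _ h h' => rw [map_add]; exact add_mem h h'
      | smul c a _ h =>
        rw [map_smul, ← Module.AEval.C_smul]
        exact Submodule.smul_mem _ _ h
      | mem a ha =>
        apply Submodule.subset_span
        simp only [Finset.coe_map]
        exact ⟨a, ha, rfl⟩
    induction hx using Submodule.span_induction with
    | zero => simp
    | add a b _ _ h h' => rw [map_add]; exact add_mem (h trivial) (h' trivial)
    | smul c a _ h =>
      rw [map_smul, ← Module.AEval.C_smul]
      exact Submodule.smul_mem _ _ (h trivial)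
    | mem a ha =>
      obtain ⟨m, v, hv, rfl⟩ := ha
      have := Module.AEval.X_pow_smul_of (R := F) (a := C.D) v m
      have h2 : Module.AEval'.of C.D ((C.D ^ m) v) = (X ^ m : F[X]) • Module.AEval'.of C.D v := this.symm
      rw [h2]
      exact Submodule.smul_mem _ _ (hVm v hv)
  have h2 : Module.IsTorsionFree F[X] (Module.AEval' C.D) := by
    rw [Module.isTorsionFree_iff_smul_eq_zero]
    intro p w hpw
    by_cases hp : p = 0
    · left; exact hp
    right
    have h3 : aeval C.D p ((Module.AEval'.of C.D).symm w) = 0 := by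
      have := Module.AEval.of_symm_smul (R := F) (a := C.D) p w
      rw [hpw, map_zero] at this
      exact this.symm
    have h4 := torsion_cen p hp _ h3
    rw [hcen, Submodule.mem_bot] at h4
    simpa using h4
  let b := Module.basisOfFiniteTypeTorsionFree' (R := F[X]) (M := Module.AEval' C.D)
  exact ⟨b.1, ⟨b.2⟩⟩

end Free
end CA

namespace CA
open LaurentPolynomial (T)

section Core
attribute [local instance] LieRing.ofAssociativeRing
variable {F R : Type*} [Field F] [CharZero F] [AddCommGroup R] [Module F R]
  {C : ConformalAlgebra F R} {r : ℕ}

open Polynomial in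
/-- coordinates -/
noncomputable def jmap (b : Module.Basis (Fin r) F[X] (Module.AEval' C.D)) :
    R →ₗ[F] (Fin r → LaurentPolynomial F) where
  toFun z := fun k => Polynomial.toLaurent (b.repr (Module.AEval'.of C.D z) k)
  map_add' z z' := by ext1 k; simp
  map_smul' c z := by
    ext1 k
    have : Module.AEval'.of C.D (c • z) = Polynomial.C c • Module.AEval'.of C.D z := by
      rw [map_smul, ← Module.AEval.C_smul]
    simp only [this, map_smul, Finsupp.smul_apply, smul_eq_mul, map_mul, RingHom.id_apply,
      Pi.smul_apply, Polynomial.toLaurent_C]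
    rw [LaurentPolynomial.smul_eq_C_mul]

open Polynomial in
lemma jmap_apply (b : Module.Basis (Fin r) F[X] (Module.AEval' C.D)) (z : R) (k : Fin r) :
    jmap b z k = Polynomial.toLaurent (b.repr (Module.AEval'.of C.D z) k) := rfl

open Polynomial in
lemma jmap_D (b : Module.Basis (Fin r) F[X] (Module.AEval' C.D)) (z : R) :
    jmap b (C.D z) = (T 1 : LaurentPolynomial F) • jmap b z := by
  ext1 k
  have h2 : Module.AEval'.of C.D (C.D z) = (X : F[X]) • Module.AEval'.of C.D z :=
    (Module.AEval'.X_smul_of C.D z).symm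
  rw [Pi.smul_apply, jmap_apply, jmap_apply, h2]
  simp

open Polynomial in
lemma jmap_inj (b : Module.Basis (Fin r) F[X] (Module.AEval' C.D)) :
    Function.Injective (jmap b) := by
  intro z z' h
  apply (Module.AEval'.of C.D).injective
  apply b.repr.injective
  ext1 k
  exact Polynomial.toLaurent_injective (congrFun h k)

open Polynomial in
lemma jmap_surj (b : Module.Basis (Fin r) F[X] (Module.AEval' C.D)) (f : Fin r → F[X]) :
    ∃ z, jmap b z = fun k => Polynomial.toLaurent (f k) := by
  refine ⟨(Module.AEval'.of C.D).symm (b.repr.symm (Finsupp.equivFunOnFinite.symm f)), ?_⟩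
  ext1 k
  rw [jmap_apply]
  simp

lemma toLaurent_coeff_neg (f : Polynomial F) (n : ℤ) (hn : n < 0) :
    (Polynomial.toLaurent f).coeff n = 0 := by
  induction f using Polynomial.induction_on' with
  | add p q h h' => rw [map_add, AddMonoidAlgebra.coeff_add, Finsupp.add_apply, h, h', add_zero]
  | monomial m a =>
    rw [← Polynomial.C_mul_X_pow_eq_monomial, Polynomial.toLaurent_C_mul_X_pow,
      ← LaurentPolynomial.single_eq_C_mul_T]
    simp only [AddMonoidAlgebra.coeff_single]
    rw [Finsupp.single_eq_of_ne]
    omega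

/-- elements of bounded degree -/
def Bd (j : R →ₗ[F] (Fin r → LaurentPolynomial F)) (d : ℤ) : Submodule F R where
  carrier := {z | ∀ i n, d < n → (j z i).coeff n = 0}
  add_mem' h h' i n hn := by simp [h i n hn, h' i n hn]
  zero_mem' i n hn := by simp
  smul_mem' c z h i n hn := by simp [h i n hn]

lemma Bd_ex (j : R →ₗ[F] (Fin r → LaurentPolynomial F)) (z : R) : ∃ d0 : ℤ, ∀ d ≥ d0, z ∈ Bd j d := by
  choose a ha using fun i => exists_deg_bound (j z i)
  refine ⟨∑ i, |a i|, fun d hd i n hn => ha i n ?_⟩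
  have : |a i| ≤ ∑ i, |a i| := Finset.single_le_sum (f := fun i => |a i|) (fun _ _ => abs_nonneg _) (Finset.mem_univ i)
  have := le_abs_self (a i)
  omega

lemma Bd_fin {κ : Type*} (s : Finset κ) (j : R →ₗ[F] (Fin r → LaurentPolynomial F)) (z : κ → R) :
    ∃ d0 : ℤ, ∀ k ∈ s, ∀ d ≥ d0, z k ∈ Bd j d := by
  choose a ha using fun k => Bd_ex j (z k)
  refine ⟨∑ i ∈ s, |a i|, fun k hk d hd => ha k d ?_⟩
  have : |a k| ≤ ∑ i ∈ s, |a i| := Finset.single_le_sum (f := fun i => |a i|) (fun _ _ => abs_nonneg _) hk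
  have := le_abs_self (a k)
  omega

theorem core [IsAlgClosed F] (C : ConformalAlgebra F R)
    (hnz : ∃ (n : ℕ) (u v : R), C.prod n u v ≠ 0)
    (hsimple : ∀ I : Submodule F R, (∀ x ∈ I, C.D x ∈ I) →
      (∀ (u : R), ∀ w ∈ I, ∀ n : ℕ, C.prod n u w ∈ I) → I = ⊥ ∨ I = ⊤)
    (hft : ∃ V : Submodule F R, FiniteDimensional F V ∧
      Submodule.span F {x : R | ∃ (m : ℕ) (v : R), v ∈ V ∧ x = (C.D ^ m) v} = ⊤) :
    (∃ J : LieIdeal F (LL C), J ≠ ⊤ ∧ Module.Finite F (LL C ⧸ J.toSubmodule) ∧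
        ∀ a, ∃ N, ∀ m ≥ N, gen C m a ∈ J) ∨
    (∃ θ : LL C →ₗ[F] F, θ ≠ 0 ∧ (∀ a, ∃ N, ∀ m ≥ N, θ (gen C m a) = 0) ∧
        ∀ x b, θ ⁅x, b⁆ = θ (dl C x) * θ b - θ (dl C b) * θ x) := by
  have hcen := cen_eq_bot hnz hsimple
  obtain ⟨r, ⟨b⟩⟩ := exists_basis hcen hft
  obtain ⟨n0, u0, v0, h0⟩ := hnz
  have hjD := jmap_D b
  have hinj := jmap_inj b
  let v : Fin r → R := fun k => (Module.AEval'.of C.D).symm (b k)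
  have hjv : ∀ k, jmap b (v k) = Pi.single k 1 := by
    intro k
    ext1 l
    rw [jmap_apply, LinearEquiv.apply_symm_apply, Module.Basis.repr_self]
    by_cases h : l = k
    · subst h; simp
    · rw [Pi.single_eq_of_ne h, Finsupp.single_eq_of_ne h, map_zero]
  have hspan : Submodule.span F {w | ∃ (m : ℕ) (k : Fin r), w = (C.D ^ m) (v k)} = ⊤ := by
    rw [eq_top_iff]
    intro z _
    have h1 := b.sum_repr (Module.AEval'.of C.D z)
    have h2 : z = ∑ k, (Polynomial.aeval C.D (b.repr (Module.AEval'.of C.D z) k)) (v k) := by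
      apply (Module.AEval'.of C.D).injective
      rw [map_sum]
      conv_lhs => rw [← h1]
      refine Finset.sum_congr rfl fun k _ => ?_
      have := Module.AEval.of_aeval_smul (R := F) (a := C.D) (b.repr (Module.AEval'.of C.D z) k) (v k)
      have h3 : Module.AEval'.of C.D (v k) = b k := LinearEquiv.apply_symm_apply _ _
      rw [← h3]
      exact this.symm
    rw [h2]
    refine Submodule.sum_mem _ fun k _ => ?_
    rw [Polynomial.aeval_eq_sum_range, LinearMap.sum_apply]
    refine Submodule.sum_mem _ fun m _ => ?_
    rw [LinearMap.smul_apply]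
    exact Submodule.smul_mem _ _ (Submodule.subset_span ⟨m, k, rfl⟩)
  have hST : ∀ w : Fin r → LaurentPolynomial F, ∃ N : ℕ, ∀ n ≥ N, ∃ z,
      (T n : LaurentPolynomial F) • w = jmap b z := by
    intro w
    choose N f hf using fun k => LaurentPolynomial.exists_T_pow (w k)
    refine ⟨∑ k, N k, fun n hn => ?_⟩
    have hN : ∀ k, N k ≤ n := fun k =>
      (Finset.single_le_sum (f := N) (fun _ _ => Nat.zero_le _) (Finset.mem_univ k)).trans hn
    obtain ⟨z, hz⟩ := jmap_surj b (fun k => f k * Polynomial.X ^ (n - N k))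
    refine ⟨z, ?_⟩
    rw [hz]
    ext1 k
    rw [Pi.smul_apply, smul_eq_mul, map_mul, hf, Polynomial.toLaurent_X_pow, mul_assoc,
      ← LaurentPolynomial.T_add, mul_comm]
    congr 2
    have := hN k
    omega
  have hne : Nonempty (Fin r) := by
    by_contra hne
    rw [not_nonempty_iff] at hne
    exact h0 (hinj (Subsingleton.elim _ _))
  have hlie := rho_lie hjD hjv hspan (fun w => by
    obtain ⟨N, hN⟩ := hST w
    exact ⟨N, hN N le_rfl⟩)
  have hinit : ∃ d : ℤ, ∀ (x : LL C) i j n, d < n →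
      ((Pi.basisFun (LaurentPolynomial F) (Fin r)).repr (rho (jmap b) v x
        (Pi.basisFun (LaurentPolynomial F) (Fin r) j)) i).coeff n = 0 := by
    choose M hM using C.locality
    obtain ⟨d, hd⟩ := Bd_fin ((Finset.univ : Finset (Fin r × Fin r)).biUnion fun p =>
      (Finset.range (M (v p.1) (v p.2))).image fun m => (p.1, p.2, m)) (jmap b)
      (fun q : Fin r × Fin r × ℕ => C.prod q.2.2 (v q.1) (v q.2.1))
    have hd' : ∀ k l m, C.prod m (v k) (v l) ∈ Bd (jmap b) d := by
      intro k l m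
      by_cases hm : M (v k) (v l) ≤ m
      · rw [hM _ _ _ hm]; exact zero_mem _
      · refine hd (k, l, m) ?_ d le_rfl
        simp only [Finset.mem_biUnion, Finset.mem_univ, true_and, Finset.mem_image, Finset.mem_range]
        exact ⟨(k, l), m, by simpa using hm, rfl⟩
    refine ⟨d, fun x i l n hn => ?_⟩
    rw [Pi.basisFun_apply, Pi.basisFun_repr, ← hjv, rho_j hjD hjv hspan]
    suffices h : (x : Module.End F R) (v l) ∈ Bd (jmap b) d from h i n hn
    refine LL_ind (p := fun x : LL C => (x : Module.End F R) (v l) ∈ Bd (jmap b) d) ?_ ?_ ?_ ?_ x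
    · exact zero_mem _
    · intro x y hx hy; exact add_mem hx hy
    · intro c x hx; exact Submodule.smul_mem _ c hx
    · intro n a
      rw [gen_apply]
      have ha : a ∈ Submodule.span F {w | ∃ (m : ℕ) (k : Fin r), w = (C.D ^ m) (v k)} := by
        rw [hspan]; exact Submodule.mem_top
      induction ha using Submodule.span_induction with
      | zero => simp
      | add x y _ _ h h' => rw [map_add, LinearMap.add_apply]; exact add_mem h h'
      | smul c x _ h => rw [map_smul, LinearMap.smul_apply]; exact Submodule.smul_mem _ _ h
      | mem a ha =>
        obtain ⟨m, k, rfl⟩ := ha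
        exact sesq_pow_mem _ _ _ _ _ (fun m' _ => hd' _ _ _)
  obtain ⟨w, hw, hcase⟩ := analysis (δ := dl C) (ρ := rho (jmap b) v) dl_surj dl_nil (rho_T (jmap b) v) hlie
    (Pi.basisFun (LaurentPolynomial F) (Fin r)) (LinearMap.range (jmap b)) (by
      intro w
      obtain ⟨N, hN⟩ := hST w
      refine ⟨N, fun n hn => ?_⟩
      lift n to ℕ using (by omega)
      obtain ⟨z, hz⟩ := hN n (by exact_mod_cast hn)
      exact ⟨z, hz.symm⟩)
    (by
      rintro x _ ⟨z, rfl⟩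
      rw [rho_j hjD hjv hspan]
      exact ⟨_, rfl⟩)
    (by
      rintro _ ⟨z, rfl⟩ h
      have hz : z ∈ cen C := by
        apply right_zero_of_left
        intro a n
        have := h (gen C n a)
        rw [rho_j hjD hjv hspan, gen_apply] at this
        exact hinj (this.trans (map_zero _).symm)
      rw [hcen, Submodule.mem_bot] at hz
      rw [hz, map_zero])
    (by
      rintro _ ⟨z, rfl⟩ h
      ext i n
      by_cases hn : 0 ≤ n
      · have := h i n hn
        rw [Pi.basisFun_repr] at this
        simpa using this
      · rw [jmap_apply]
        simpa using toLaurent_coeff_neg _ n (by omega))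
    ⟨_, ⟨C.prod n0 u0 v0, rfl⟩, fun h => h0 (hinj (h.trans (map_zero _).symm))⟩ hinit
  choose z hz using hw
  have hloc : ∀ a, ∃ N, ∀ m ≥ N, ∀ k, rho (jmap b) v (gen C m a) (w k) = 0 := by
    intro a
    choose M hM using C.locality
    refine ⟨∑ k, M a (z k), fun m hm k => ?_⟩
    have := (Finset.single_le_sum (f := fun k => M a (z k)) (fun _ _ => Nat.zero_le _) (Finset.mem_univ k)).trans hm
    rw [← hz, rho_j hjD hjv hspan, gen_apply, hM _ _ _ this, map_zero]
  rcases hcase with ⟨J, h1, h2, h3⟩ | ⟨θ, h1, h2, h3⟩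
  · left
    refine ⟨J, h1, h2, fun a => ?_⟩
    obtain ⟨N, hN⟩ := hloc a
    exact ⟨N, fun m hm => h3 _ (hN m hm)⟩
  · right
    refine ⟨θ, h1, fun a => ?_, h3⟩
    obtain ⟨N, hN⟩ := hloc a
    exact ⟨N, fun m hm => h2 _ (hN m hm)⟩

end Core
end CA

namespace CA

section Common
attribute [local instance] LieRing.ofAssociativeRing
variable {F R : Type*} [Field F] [CharZero F] [AddCommGroup R] [Module F R]
  {C : ConformalAlgebra F R}

lemma choose_swap (n i j : ℕ) :
    n.choose i * (n - i).choose j = n.choose j * (n - j).choose i := by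
  by_cases h : i + j ≤ n
  · have h1 := Nat.choose_mul (n := n) (k := i + j) (s := i) (by omega)
    have h2 := Nat.choose_mul (n := n) (k := i + j) (s := j) (by omega)
    rw [Nat.add_sub_cancel_left] at h1
    rw [Nat.add_sub_cancel] at h2
    rw [← h1, ← h2, ← Nat.choose_symm_add]
  · by_cases hi : n < i
    · rw [Nat.choose_eq_zero_of_lt hi, Nat.choose_eq_zero_of_lt (n := n - j) (by omega)]; simp
    · rw [Nat.choose_eq_zero_of_lt (n := n - i) (by omega)]
      by_cases hj : n < j
      · rw [Nat.choose_eq_zero_of_lt hj]; simp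
      · rw [Nat.choose_eq_zero_of_lt (n := n - j) (by omega)]; simp

lemma gen_prod (n k : ℕ) (a b : R) : gen C k (C.prod n a b) =
    ∑ i ∈ Finset.range (n + 1), ((-1 : F) ^ i * (n.choose i : F)) • ⁅gen C (n - i) a, gen C (k + i) b⁆ := by
  have h1 : ∀ i ∈ Finset.range (n + 1),
      ((-1 : F) ^ i * (n.choose i : F)) • ⁅gen C (n - i) a, gen C (k + i) b⁆ =
      ∑ j ∈ Finset.range (n + 1), ((-1 : F) ^ i * ((n.choose j : F) * ((n - j).choose i : F))) •
        gen C (n + k - j) (C.prod j a b) := by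
    intro i hi
    rw [Finset.mem_range] at hi
    rw [gen_lie, Finset.smul_sum]
    have hsub : Finset.range (n - i + 1) ⊆ Finset.range (n + 1) := by
      intro x hx; rw [Finset.mem_range] at *; omega
    rw [Finset.sum_subset hsub (f := fun j => ((-1 : F) ^ i * (n.choose i : F)) •
      (((n - i).choose j : F)) • gen C (n - i + (k + i) - j) (C.prod j a b))]
    · refine Finset.sum_congr rfl fun j _ => ?_
      have e : n - i + (k + i) - j = n + k - j := by omega
      rw [e, smul_smul]
      congr 1
      have := choose_swap n i j
      have h2 : (n.choose i : F) * ((n - i).choose j : F) = (n.choose j : F) * ((n - j).choose i : F) := by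
        exact_mod_cast congrArg (Nat.cast (R := F)) this
      rw [← h2]; ring
    · intro j _ hj
      rw [Finset.mem_range, not_lt] at hj
      rw [Nat.choose_eq_zero_of_lt (n := n - i) (by omega)]; simp
  rw [Finset.sum_congr rfl h1, Finset.sum_comm]
  have h2 : ∀ j ∈ Finset.range (n + 1),
      ∑ i ∈ Finset.range (n + 1), ((-1 : F) ^ i * ((n.choose j : F) * ((n - j).choose i : F))) •
        gen C (n + k - j) (C.prod j a b) = if j = n then gen C k (C.prod n a b) else 0 := by
    intro j hj
    rw [Finset.mem_range] at hj
    rw [← Finset.sum_smul]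
    have h3 : ∑ i ∈ Finset.range (n + 1), (-1 : F) ^ i * ((n.choose j : F) * ((n - j).choose i : F)) =
        if j = n then 1 else 0 := by
      have h4 := Int.alternating_sum_range_choose (n := n - j)
      have h5 : ∑ i ∈ Finset.range (n + 1), ((-1) ^ i * ((n - j).choose i) : ℤ) =
          ∑ i ∈ Finset.range (n - j + 1), ((-1) ^ i * ((n - j).choose i) : ℤ) := by
        symm
        apply Finset.sum_subset
        · intro x hx; rw [Finset.mem_range] at *; omega
        · intro i _ hi
          rw [Finset.mem_range, not_lt] at hi
          rw [Nat.choose_eq_zero_of_lt (by omega)]; simp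
      rw [h4] at h5
      have h6 : ∑ i ∈ Finset.range (n + 1), (-1 : F) ^ i * ((n - j).choose i : F) =
          ((if n - j = 0 then 1 else 0 : ℤ) : F) := by
        rw [← h5]; push_cast; rfl
      have h7 : ∑ i ∈ Finset.range (n + 1), (-1 : F) ^ i * ((n.choose j : F) * ((n - j).choose i : F)) =
        (n.choose j : F) * ∑ i ∈ Finset.range (n + 1), (-1 : F) ^ i * ((n - j).choose i : F) := by
        rw [Finset.mul_sum]
        exact Finset.sum_congr rfl fun i _ => by ring
      rw [h7, h6]
      by_cases hjn : j = n
      · subst hjn; simp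
      · have : n - j ≠ 0 := by omega
        simp [hjn, this]
    rw [h3]
    by_cases hjn : j = n
    · subst hjn; simp
    · simp [hjn]
  rw [Finset.sum_congr rfl h2]
  simp

lemma gen_D (k : ℕ) (a : R) : gen C k (C.D a) = -(k : F) • gen C (k - 1) a := by
  apply Subtype.ext
  ext w
  change C.prod k (C.D a) w = _
  rw [sesq]; rfl

variable {V : Type*} [AddCommGroup V] [Module F V] (π : LL C →ₗ[F] V)

/-- degree-zero part -/
def Gs : Submodule F R where
  carrier := {g | ∀ k ≥ 1, π (gen C k g) = 0}
  add_mem' h h' k hk := by rw [map_add, map_add, h k hk, h' k hk, add_zero]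
  zero_mem' k hk := by simp
  smul_mem' c z h k hk := by rw [map_smul, map_smul, h k hk, smul_zero]

variable {π}

lemma pi_D {g : R} (hg : g ∈ Gs π) (k m : ℕ) : π (gen C k ((C.D ^ m) g)) =
    if k = m then ((-1 : F) ^ m * (m.factorial : F)) • π (gen C 0 g) else 0 := by
  induction m generalizing k with
  | zero =>
    by_cases hk : k = 0
    · subst hk; simp
    · simp [hk, hg k (by omega)]
  | succ m ih =>
    rw [pow_succ', Module.End.mul_apply, gen_D, map_smul, ih]
    cases k with
    | zero => simp
    | succ k =>
      rw [Nat.add_sub_cancel]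
      by_cases hk : k = m
      · subst hk
        simp only [if_true, smul_smul]
        congr 1
        rw [Nat.factorial_succ]; push_cast; ring
      · simp [hk]

lemma freeG (hker : ∀ a, (∀ m, π (gen C m a) = 0) → a = 0) (f : ℕ →₀ R) (hf : ∀ m : ℕ, f m ∈ Gs π)
    (h : (f.sum fun m g => (C.D ^ m) g) = 0) : f = 0 := by
  ext k
  apply hker
  intro m
  by_cases hm : 1 ≤ m
  · exact hf k m hm
  obtain rfl : m = 0 := by omega
  have h1 : π (gen C k (f.sum fun m g => (C.D ^ m) g)) = 0 := by rw [h]; simp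
  rw [Finsupp.sum, map_sum, map_sum, Finset.sum_congr rfl (fun i _ => pi_D (hf i) k i),
    Finset.sum_ite_eq] at h1
  by_cases hk : k ∈ f.support
  · rw [if_pos hk] at h1
    refine (smul_eq_zero.mp h1).resolve_left ?_
    exact mul_ne_zero (pow_ne_zero _ (by simp)) (Nat.cast_ne_zero.mpr (Nat.factorial_ne_zero _))
  · rw [Finsupp.notMem_support_iff] at hk
    rw [hk]; simp

lemma spanG (hker : ∀ a, (∀ m, π (gen C m a) = 0) → a = 0)
    (hloc : ∀ a, ∃ N, ∀ m ≥ N, π (gen C m a) = 0)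
    (hs : ∀ s, ∃ g ∈ Gs π, π (gen C 0 g) = s) :
    Submodule.span F {x : R | ∃ (m : ℕ) (g : R), g ∈ Gs π ∧ x = (C.D ^ m) g} = ⊤ := by
  rw [eq_top_iff]
  intro a _
  obtain ⟨N, hN⟩ := hloc a
  choose g hg hg0 using hs
  have : a = ∑ m ∈ Finset.range N, (C.D ^ m) (g (((-1 : F) ^ m * (m.factorial : F))⁻¹ • π (gen C m a))) := by
    apply sub_eq_zero.mp
    apply hker
    intro k
    rw [map_sub, map_sub, map_sum, map_sum, Finset.sum_congr rfl (fun i _ => pi_D (hg _) k i),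
      Finset.sum_ite_eq, hg0]
    by_cases hk : k < N
    · rw [if_pos (Finset.mem_range.mpr hk), smul_smul, mul_inv_cancel₀, one_smul, sub_self]
      exact mul_ne_zero (pow_ne_zero _ (by simp)) (Nat.cast_ne_zero.mpr (Nat.factorial_ne_zero _))
    · rw [if_neg (by simpa using hk), hN k (by omega), sub_zero]
  rw [this]
  exact Submodule.sum_mem _ fun m _ => Submodule.subset_span ⟨m, _, hg _, rfl⟩

/-- joint kernel -/
lemma ker_triv (hsimple : ∀ I : Submodule F R, (∀ x ∈ I, C.D x ∈ I) →
      (∀ (u : R), ∀ w ∈ I, ∀ n : ℕ, C.prod n u w ∈ I) → I = ⊥ ∨ I = ⊤)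
    (hπ : π ≠ 0)
    (hlie : ∀ n k u w, (∀ m, π (gen C m w) = 0) → π ⁅gen C n u, gen C k w⁆ = 0) :
    ∀ a, (∀ m, π (gen C m a) = 0) → a = 0 := by
  let K : Submodule F R :=
    { carrier := {a | ∀ m, π (gen C m a) = 0}
      add_mem' := fun h h' m => by rw [map_add, map_add, h m, h' m, add_zero]
      zero_mem' := fun m => by simp
      smul_mem' := fun c z h m => by rw [map_smul, map_smul, h m, smul_zero] }
  have hK : K = ⊥ ∨ K = ⊤ := by
    apply hsimple
    · intro x hx m
      rw [gen_D, map_smul, hx (m - 1), smul_zero]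
    · intro u w hw n k
      rw [gen_prod, map_sum]
      refine Finset.sum_eq_zero fun i _ => ?_
      rw [map_smul, hlie _ _ _ _ hw, smul_zero]
  rcases hK with hK | hK
  · intro a ha
    have : a ∈ K := ha
    rw [hK] at this
    simpa using this
  · exfalso
    apply hπ
    ext x
    rw [LinearMap.zero_apply]
    refine LL_ind (p := fun x => π x = 0) ?_ ?_ ?_ ?_ x
    · exact map_zero _
    · intro x y hx hy; rw [map_add, hx, hy, add_zero]
    · intro c x hx; rw [map_smul, hx, smul_zero]
    · intro n a
      have : a ∈ K := hK ▸ Submodule.mem_top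
      exact this n

end Common

section Vir
attribute [local instance] LieRing.ofAssociativeRing
variable {F R : Type*} [Field F] [CharZero F] [AddCommGroup R] [Module F R]
  {C : ConformalAlgebra F R}

theorem virEnd
    (hnz : ∃ (n : ℕ) (u v : R), C.prod n u v ≠ 0)
    (hsimple : ∀ I : Submodule F R, (∀ x ∈ I, C.D x ∈ I) →
      (∀ (u : R), ∀ w ∈ I, ∀ n : ℕ, C.prod n u w ∈ I) → I = ⊥ ∨ I = ⊤)
    (θ : LL C →ₗ[F] F) (hθ : θ ≠ 0) (hloc : ∀ a, ∃ N, ∀ m ≥ N, θ (gen C m a) = 0)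
    (hlie : ∀ x b, θ ⁅x, b⁆ = θ (dl C x) * θ b - θ (dl C b) * θ x) :
    ∃ e : R,
      (∀ c : ℕ →₀ F, (c.sum fun m a => a • ((C.D ^ m) e)) = 0 → c = 0) ∧
      Submodule.span F (Set.range fun m : ℕ => (C.D ^ m) e) = ⊤ ∧
      C.prod 0 e e = C.D e ∧ C.prod 1 e e = (2 : F) • e ∧ ∀ n ≥ 2, C.prod n e e = 0 := by
  have hg : ∀ n k a b, θ ⁅gen C n a, gen C k b⁆ =
      n * θ (gen C (n - 1) a) * θ (gen C k b) - k * θ (gen C (k - 1) b) * θ (gen C n a) := by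
    intro n k a b
    rw [hlie, dl_gen, dl_gen, map_smul, map_smul, smul_eq_mul, smul_eq_mul]
  have hker := ker_triv (π := θ) hsimple hθ (fun n k u w hw => by rw [hg, hw, hw]; ring)
  -- product formula
  have hp : ∀ n k a b, θ (gen C k (C.prod n a b)) = ∑ i ∈ Finset.range (n + 1),
      ((-1 : F) ^ i * (n.choose i : F)) * (((n - i : ℕ) : F) * θ (gen C (n - i - 1) a) * θ (gen C (k + i) b) -
        ((k + i : ℕ) : F) * θ (gen C (k + i - 1) b) * θ (gen C (n - i) a)) := by
    intro n k a b
    rw [gen_prod, map_sum]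
    refine Finset.sum_congr rfl fun i _ => ?_
    rw [map_smul, hg, smul_eq_mul]
  obtain ⟨a, ha⟩ : ∃ a : R, a ≠ 0 := by
    obtain ⟨n, u, v, h⟩ := hnz
    exact ⟨_, h⟩
  obtain ⟨N, hN, hmax⟩ : ∃ N, θ (gen C N a) ≠ 0 ∧ ∀ m > N, θ (gen C m a) = 0 := by
    classical
    obtain ⟨M, hM⟩ := hloc a
    have hex : ∃ n, θ (gen C n a) ≠ 0 := by
      by_contra hh
      push Not at hh
      exact ha (hker a hh)
    obtain ⟨n, hn⟩ := hex
    have hlt : ∀ m, θ (gen C m a) ≠ 0 → m ≤ M := fun m hm => by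
      by_contra hh; exact hm (hM m (by omega))
    have hsp := Nat.findGreatest_spec (P := fun m => θ (gen C m a) ≠ 0) (n := M) (hlt n hn) hn
    refine ⟨_, hsp, fun m hm => ?_⟩
    by_contra hm'
    exact absurd (Nat.le_findGreatest (hlt m hm') hm') (not_le.mpr hm)
  obtain ⟨b, hb0, hb⟩ : ∃ b, θ (gen C 0 b) ≠ 0 ∧ b ∈ Gs θ := by
    refine ⟨C.prod (2 * N + 1) a a, ?_, ?_⟩
    · rw [hp]
      have h1 : ∀ i ∈ Finset.range (2 * N + 1 + 1),
          ((-1 : F) ^ i * ((2 * N + 1).choose i : F)) * (((2 * N + 1 - i : ℕ) : F) *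
            θ (gen C (2 * N + 1 - i - 1) a) * θ (gen C (0 + i) a) -
            ((0 + i : ℕ) : F) * θ (gen C (0 + i - 1) a) * θ (gen C (2 * N + 1 - i) a)) =
          (if i = N then (-1 : F) ^ N * ((2 * N + 1).choose N : F) * ((N + 1 : ℕ) : F) * θ (gen C N a) ^ 2 else 0)
          + (if i = N + 1 then (-1 : F) ^ N * ((2 * N + 1).choose N : F) * ((N + 1 : ℕ) : F) * θ (gen C N a) ^ 2 else 0) := by
        intro i hi
        rw [Finset.mem_range] at hi
        rcases lt_trichotomy i N with h | h | h
        · rw [hmax (2 * N + 1 - i - 1) (by omega), hmax (2 * N + 1 - i) (by omega), if_neg (by omega), if_neg (by omega)]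
          ring
        · subst h
          rw [hmax (2 * i + 1 - i) (by omega), if_pos rfl, if_neg (by omega)]
          have e1 : 2 * i + 1 - i - 1 = i := by omega
          have e2 : 2 * i + 1 - i = i + 1 := by omega
          rw [e1, e2, zero_add]
          ring
        · by_cases h2 : i = N + 1
          · subst h2
            rw [if_neg (by omega), if_pos rfl, zero_add, hmax (N + 1) (by omega)]
            have e1 : 2 * N + 1 - (N + 1) = N := by omega
            rw [e1, Nat.add_sub_cancel]
            have e2 : (2 * N + 1).choose (N + 1) = (2 * N + 1).choose N := by
              apply Nat.choose_symm_of_eq_add; omega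
            rw [e2]
            ring
          · rw [hmax (0 + i) (by omega), hmax (0 + i - 1) (by omega), if_neg (by omega), if_neg (by omega)]
            ring
      rw [Finset.sum_congr rfl h1, Finset.sum_add_distrib, Finset.sum_ite_eq', Finset.sum_ite_eq',
        if_pos (by rw [Finset.mem_range]; omega), if_pos (by rw [Finset.mem_range]; omega), ← two_mul]
      refine mul_ne_zero two_ne_zero (mul_ne_zero (mul_ne_zero (mul_ne_zero (pow_ne_zero _ (by simp)) ?_) ?_) (pow_ne_zero _ hN))
      · exact Nat.cast_ne_zero.mpr (Nat.choose_pos (by omega)).ne'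
      · exact Nat.cast_ne_zero.mpr (by omega)
    · intro k hk
      rw [hp]
      refine Finset.sum_eq_zero fun i hi => ?_
      rw [Finset.mem_range] at hi
      have h1 : θ (gen C (2 * N + 1 - i - 1) a) * θ (gen C (k + i) a) = 0 := by
        by_cases h : N < k + i
        · rw [hmax _ h, mul_zero]
        · rw [hmax (2 * N + 1 - i - 1) (by omega), zero_mul]
      have h2 : θ (gen C (k + i - 1) a) * θ (gen C (2 * N + 1 - i) a) = 0 := by
        by_cases h : N < k + i - 1
        · rw [hmax _ h, zero_mul]
        · rw [hmax (2 * N + 1 - i) (by omega), mul_zero]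
      rw [mul_assoc ((_ : ℕ) : F), h1, mul_assoc ((_ : ℕ) : F), h2]
      ring
  obtain ⟨e, he, he0⟩ : ∃ e ∈ Gs θ, θ (gen C 0 e) = 1 :=
    ⟨(θ (gen C 0 b))⁻¹ • b, Submodule.smul_mem _ _ hb, by
      rw [map_smul, map_smul, smul_eq_mul, inv_mul_cancel₀ hb0]⟩
  have hδ : ∀ k, θ (gen C k e) = if k = 0 then 1 else 0 := by
    intro k
    by_cases hk : k = 0
    · subst hk; simpa using he0
    · rw [if_neg hk]; exact he k (by omega)
  have hext : ∀ x y, (∀ k, θ (gen C k x) = θ (gen C k y)) → x = y := by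
    intro x y h
    apply sub_eq_zero.mp
    apply hker
    intro m
    rw [map_sub, map_sub, h, sub_self]
  have hG : ∀ g ∈ Gs θ, g = θ (gen C 0 g) • e := by
    intro g hg
    apply hext
    intro k
    rw [map_smul, map_smul, hδ]
    by_cases hk : k = 0
    · subst hk; simp
    · rw [if_neg hk, hg k (by omega), smul_zero]
  refine ⟨e, ?_, ?_, ?_, ?_, ?_⟩
  · intro c hc
    have := freeG hker (c.mapRange (fun t => t • e) (zero_smul _ _)) (fun m => by
      rw [Finsupp.mapRange_apply]; exact Submodule.smul_mem _ _ he) (by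
      rw [Finsupp.sum_mapRange_index (by simp)]
      rw [← hc]
      exact Finsupp.sum_congr fun m _ => map_smul _ _ _)
    ext m
    have h2 := DFunLike.congr_fun this m
    rw [Finsupp.mapRange_apply, Finsupp.zero_apply] at h2
    have h3 := congrArg (fun z => θ (gen C 0 z)) h2
    simp only [map_smul, he0, map_zero, smul_eq_mul, mul_one] at h3
    exact h3
  · rw [eq_top_iff, ← spanG hker hloc (fun s => ⟨s • e, Submodule.smul_mem _ _ he, by
      rw [map_smul, map_smul, he0, smul_eq_mul, mul_one]⟩), Submodule.span_le]
    rintro _ ⟨m, g, hg, rfl⟩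
    rw [hG g hg, map_smul]
    exact Submodule.smul_mem _ _ (Submodule.subset_span ⟨m, rfl⟩)
  · apply hext
    intro k
    rw [hp, gen_D, map_smul, hδ]
    simp only [zero_add, Finset.sum_range_one, hδ]
    rcases k with _ | _ | k <;> simp
  · apply hext
    intro k
    rw [hp, map_smul, map_smul, hδ]
    simp only [Finset.sum_range_succ, Finset.sum_range_zero, hδ]
    rcases k with _ | k
    · norm_num
    · simp
  · intro n hn
    apply hker
    intro k
    rw [hp]
    refine Finset.sum_eq_zero fun i hi => ?_
    rw [Finset.mem_range] at hi
    rw [hδ, hδ, hδ, hδ]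
    have h2 : ((k + i : ℕ) : F) * (if k + i - 1 = 0 then 1 else 0 : F) * (if n - i = 0 then 1 else 0) = 0 := by
      by_cases h : n - i = 0
      · rw [if_neg (by omega)]; ring
      · rw [if_neg h]; ring
    rw [h2]
    have h3 : ((n - i : ℕ) : F) * (if n - i - 1 = 0 then 1 else 0) * (if k + i = 0 then 1 else 0) = 0 := by
      by_cases h : k + i = 0
      · rw [if_neg (by omega)]; ring
      · rw [if_neg h]; ring
    rw [h3]; ring

end Vir
end CA

namespace CA

section Dens
variable {F : Type*} [Field F] {L : Type*} [LieRing L] [LieAlgebra F L]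

/-- a maximal ideal above a proper ideal of finite codimension -/
lemma exists_max (J0 : LieIdeal F L) (h0 : J0 ≠ ⊤) (hfin : Module.Finite F (L ⧸ J0.toSubmodule)) :
    ∃ J : Submodule F L, J0.toSubmodule ≤ J ∧ (∀ z : L, ∀ y ∈ J, ⁅z, y⁆ ∈ J) ∧ J ≠ ⊤ ∧
      ∀ K : Submodule F L, J ≤ K → (∀ z : L, ∀ y ∈ K, ⁅z, y⁆ ∈ K) → K = J ∨ K = ⊤ := by
  let S : Set (Submodule F (L ⧸ J0.toSubmodule)) :=
    {p | ∃ J : Submodule F L, J0.toSubmodule ≤ J ∧ (∀ z : L, ∀ y ∈ J, ⁅z, y⁆ ∈ J) ∧ J ≠ ⊤ ∧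
      J = p.comap J0.toSubmodule.mkQ}
  have hS : S.Nonempty := by
    refine ⟨⊥, J0.toSubmodule, le_rfl, fun z y hy => J0.lie_mem hy, ?_, ?_⟩
    · intro h; apply h0
      exact LieSubmodule.toSubmodule_injective (h.trans LieSubmodule.top_toSubmodule.symm)
    · ext x; simp
  obtain ⟨p, ⟨J, h1, h2, h3, rfl⟩, hmax⟩ := WellFounded.has_min (wellFounded_gt (α := Submodule F (L ⧸ J0.toSubmodule))) S hS
  refine ⟨_, h1, h2, h3, fun K hK hKl => ?_⟩
  by_contra hh
  push Not at hh
  have hKe : K = (K.map J0.toSubmodule.mkQ).comap J0.toSubmodule.mkQ := by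
    rw [Submodule.comap_map_mkQ, sup_eq_right.mpr (h1.trans hK)]
  refine hmax (K.map J0.toSubmodule.mkQ) ⟨K, h1.trans hK, hKl, hh.2, hKe⟩ ?_
  refine lt_of_le_of_ne ?_ ?_
  · intro x hx
    obtain ⟨y, rfl⟩ := J0.toSubmodule.mkQ_surjective x
    exact Submodule.mem_map_of_mem (hK hx)
  · rintro rfl
    exact hh.1 hKe

variable {J : Submodule F L} {δ : L →ₗ[F] L}

lemma leib (hJ : ∀ z : L, ∀ y ∈ J, ⁅z, y⁆ ∈ J) (hδ : ∀ x y, δ ⁅x, y⁆ = ⁅δ x, y⁆ + ⁅x, δ y⁆)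
    (n : ℕ) (z x : L) (hx : ∀ k < n, (δ ^ k) x ∈ J) :
    (∀ k < n, (δ ^ k) ⁅z, x⁆ ∈ J) ∧ (δ ^ n) ⁅z, x⁆ - ⁅z, (δ ^ n) x⁆ ∈ J := by
  induction n generalizing z x with
  | zero => simp
  | succ n ih =>
    have h1 := fun z => ih z x (fun k hk => hx k (by omega))
    constructor
    · intro k hk
      by_cases hkn : k < n
      · exact (h1 z).1 k hkn
      · obtain rfl : k = n := by omega
        have := add_mem (h1 z).2 (hJ z _ (hx k (by omega)))
        simpa using this
    · have h2 := ih z (δ x) (fun k hk => by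
        have := hx (k + 1) (by omega)
        rwa [pow_succ, Module.End.mul_apply] at this)
      have h3 := add_mem (h1 (δ z)).2 (hJ (δ z) _ (hx n (by omega)))
      have h4 := add_mem h2.2 h3
      rw [pow_succ, Module.End.mul_apply, hδ, map_add, Module.End.mul_apply]
      convert h4 using 1
      abel

/-- jets -/
def Ij (J : Submodule F L) (δ : L →ₗ[F] L) (n : ℕ) : Submodule F L :=
  LinearMap.ker (LinearMap.pi fun k : Fin n => J.mkQ ∘ₗ (δ ^ (k : ℕ)))

lemma mem_Ij (n : ℕ) (x : L) : x ∈ Ij J δ n ↔ ∀ k < n, (δ ^ k) x ∈ J := by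
  rw [Ij, LinearMap.mem_ker]
  constructor
  · intro h k hk
    have := congrFun h ⟨k, hk⟩
    simpa using this
  · intro h
    ext k
    simpa using h k k.2

lemma dens [Module.Finite F (L ⧸ J)] (hJ : ∀ z : L, ∀ y ∈ J, ⁅z, y⁆ ∈ J) (hJt : J ≠ ⊤)
    (hmax : ∀ K : Submodule F L, J ≤ K → (∀ z : L, ∀ y ∈ K, ⁅z, y⁆ ∈ K) → K = J ∨ K = ⊤)
    (hδ : ∀ x y, δ ⁅x, y⁆ = ⁅δ x, y⁆ + ⁅x, δ y⁆)
    (hsurj : Function.Surjective δ) (hnil : ∀ x, ∃ k, (δ ^ k) x = 0) (n : ℕ) (y : L) :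
    ∃ x, (∀ k < n, (δ ^ k) x ∈ J) ∧ (δ ^ n) x - y ∈ J := by
  have hK := hmax ((Ij J δ n).map (δ ^ n) ⊔ J) le_sup_right (by
    intro z y hy
    obtain ⟨u, hu, j, hj, rfl⟩ := Submodule.mem_sup.mp hy
    obtain ⟨x, hx, rfl⟩ := Submodule.mem_map.mp hu
    have h1 := leib hJ hδ n z x ((mem_Ij n x).mp hx)
    rw [lie_add]
    have h2 := Submodule.mem_map_of_mem (f := δ ^ n) ((mem_Ij (J := J) (δ := δ) n ⁅z, x⁆).mpr h1.1)
    refine add_mem ?_ (Submodule.mem_sup_right (hJ z j hj))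
    have h3 := sub_mem (Submodule.mem_sup_left (T := J) h2) (Submodule.mem_sup_right (S := (Ij J δ n).map (δ ^ n)) h1.2)
    simpa using h3)
  rcases hK with hK | hK
  · exfalso
    have hstab : ∀ x ∈ Ij J δ n, (δ ^ n) x ∈ J := fun x hx => by
      rw [← hK]; exact Submodule.mem_sup_left (Submodule.mem_map_of_mem hx)
    by_cases hn : n = 0
    · subst hn
      apply hJt
      rw [eq_top_iff]
      intro x _
      have := hstab x ((mem_Ij 0 x).mpr (by simp))
      simpa using this
    have hst : Ij J δ n ≤ (Ij J δ n).comap δ := by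
      intro x hx
      rw [Submodule.mem_comap, mem_Ij]
      intro k hk
      rw [← Module.End.mul_apply, ← pow_succ]
      by_cases hk' : k + 1 < n
      · exact (mem_Ij n x).mp hx _ hk'
      · obtain rfl : k + 1 = n := by omega
        exact hstab x hx
    have hfin : Module.Finite F (L ⧸ Ij J δ n) :=
      Module.Finite.equiv (LinearMap.quotKerEquivRange
        (LinearMap.pi fun k : Fin n => J.mkQ ∘ₗ (δ ^ (k : ℕ)))).symm
    have hsq : Function.Surjective (Submodule.mapQ (Ij J δ n) (Ij J δ n) δ hst) := by
      intro q
      obtain ⟨y, rfl⟩ := Submodule.mkQ_surjective _ q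
      obtain ⟨x, rfl⟩ := hsurj y
      exact ⟨Submodule.mkQ _ x, by simp⟩
    have hiq := LinearMap.injective_iff_surjective.mpr hsq
    have hback : ∀ x, δ x ∈ Ij J δ n → x ∈ Ij J δ n := by
      intro x hx
      have : Submodule.mapQ (Ij J δ n) (Ij J δ n) δ hst (Submodule.mkQ _ x) =
          Submodule.mapQ (Ij J δ n) (Ij J δ n) δ hst 0 := by
        rw [map_zero]; simpa using hx
      simpa using hiq this
    apply hJt
    rw [eq_top_iff]
    intro x _
    obtain ⟨k, hk⟩ := hnil x
    have hx : x ∈ Ij J δ n := by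
      induction k generalizing x with
      | zero =>
        have : x = 0 := by simpa using hk
        rw [this]; exact zero_mem _
      | succ k ih =>
        rw [pow_succ, Module.End.mul_apply] at hk
        exact hback x (ih (by trivial) hk)
    simpa using (mem_Ij n x).mp hx 0 (by omega)
  · have hy : y ∈ (Ij J δ n).map (δ ^ n) ⊔ J := hK ▸ Submodule.mem_top
    obtain ⟨u, hu, j, hj, rfl⟩ := Submodule.mem_sup.mp hy
    obtain ⟨x, hx, rfl⟩ := Submodule.mem_map.mp hu
    refine ⟨x, (mem_Ij n x).mp hx, ?_⟩
    have := J.neg_mem hj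
    simpa using this

end Dens

section Cur
attribute [local instance] LieRing.ofAssociativeRing
variable {F R : Type*} [Field F] [CharZero F] [AddCommGroup R] [Module F R]
  {C : ConformalAlgebra F R}

lemma perfect (hnz : ∃ (n : ℕ) (u v : R), C.prod n u v ≠ 0)
    (hsimple : ∀ I : Submodule F R, (∀ x ∈ I, C.D x ∈ I) →
      (∀ (u : R), ∀ w ∈ I, ∀ n : ℕ, C.prod n u w ∈ I) → I = ⊥ ∨ I = ⊤)
    (J : Submodule F (LL C)) (hJ : ∀ x y : LL C, ⁅x, y⁆ ∈ J) : J = ⊤ := by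
  by_contra hne
  have hπ : J.mkQ ≠ 0 := by
    intro h
    apply hne
    rw [← J.ker_mkQ, h, LinearMap.ker_zero]
  have hker := ker_triv (π := J.mkQ) hsimple hπ (fun n k u w _ => by simpa using hJ _ _)
  obtain ⟨n, u, v, h⟩ := hnz
  apply h
  apply hker
  intro m
  rw [gen_prod, map_sum]
  refine Finset.sum_eq_zero fun i _ => ?_
  rw [map_smul]
  have : J.mkQ ⁅gen C (n - i) u, gen C (m + i) v⁆ = 0 := by simpa using hJ _ _
  rw [this, smul_zero]

lemma dl_pow_gen' (n i : ℕ) (hi : i ≤ n) (a : R) :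
    (dl C ^ i) (gen C n a) = ((n.choose i : F) * (i.factorial : F)) • gen C (n - i) a := by
  induction i with
  | zero => simp
  | succ i ih =>
    rw [pow_succ', Module.End.mul_apply, ih (by omega), map_smul, dl_gen, smul_smul]
    congr 1
    have h1 := Nat.choose_succ_right_eq n i
    have h2 : (n.choose (i + 1) : F) * ((i : F) + 1) = (n.choose i : F) * ((n - i : ℕ) : F) := by
      exact_mod_cast congrArg (Nat.cast (R := F)) h1
    rw [Nat.factorial_succ]
    push_cast
    linear_combination (-(i.factorial : F)) * h2

/-- action formula -/
lemma gen_act (x : LL C) : ∃ K0, ∀ K ≥ K0, ∀ (m : ℕ) (b : R), gen C m ((x : Module.End F R) b) =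
    ∑ i ∈ Finset.range K, ((-1 : F) ^ i * (i.factorial : F)⁻¹) • ⁅(dl C ^ i) x, gen C (m + i) b⁆ := by
  refine LL_ind (p := fun x : LL C => ∃ K0, ∀ K ≥ K0, ∀ (m : ℕ) (b : R), gen C m ((x : Module.End F R) b) =
    ∑ i ∈ Finset.range K, ((-1 : F) ^ i * (i.factorial : F)⁻¹) • ⁅(dl C ^ i) x, gen C (m + i) b⁆) ?_ ?_ ?_ ?_ x
  · refine ⟨0, fun K _ m b => ?_⟩
    simp
  · rintro x y ⟨K1, h1⟩ ⟨K2, h2⟩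
    refine ⟨K1 + K2, fun K hK m b => ?_⟩
    rw [LL_coe_add, LinearMap.add_apply, map_add, h1 K (by omega), h2 K (by omega),
      ← Finset.sum_add_distrib]
    refine Finset.sum_congr rfl fun i _ => ?_
    rw [map_add, add_lie, smul_add]
  · rintro c x ⟨K1, h1⟩
    refine ⟨K1, fun K hK m b => ?_⟩
    have e : ((c • x : LL C) : Module.End F R) b = c • (x : Module.End F R) b := rfl
    rw [e, map_smul, h1 K hK, Finset.smul_sum]
    refine Finset.sum_congr rfl fun i _ => ?_
    rw [map_smul, smul_lie, smul_comm]
  · intro n a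
    refine ⟨n + 1, fun K hK m b => ?_⟩
    rw [gen_apply, gen_prod]
    have hsub : Finset.range (n + 1) ⊆ Finset.range K := by
      intro x hx; rw [Finset.mem_range] at *; omega
    rw [← Finset.sum_subset hsub]
    · refine Finset.sum_congr rfl fun i hi => ?_
      rw [Finset.mem_range] at hi
      rw [dl_pow_gen' n i (by omega), smul_lie, smul_smul]
      congr 1
      have : (i.factorial : F) ≠ 0 := Nat.cast_ne_zero.mpr (Nat.factorial_ne_zero _)
      field_simp
    · intro i _ hi
      rw [Finset.mem_range, not_lt] at hi
      rw [pow_zero_of_le (dl_pow_gen n a) hi, zero_lie, smul_zero]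

theorem curEnd
    (hnz : ∃ (n : ℕ) (u v : R), C.prod n u v ≠ 0)
    (hsimple : ∀ I : Submodule F R, (∀ x ∈ I, C.D x ∈ I) →
      (∀ (u : R), ∀ w ∈ I, ∀ n : ℕ, C.prod n u w ∈ I) → I = ⊥ ∨ I = ⊤)
    (J0 : LieIdeal F (LL C)) (hJ0 : J0 ≠ ⊤) (hfin : Module.Finite F (LL C ⧸ J0.toSubmodule))
    (hloc0 : ∀ a, ∃ N, ∀ m ≥ N, gen C m a ∈ J0) :
    ∃ G : Submodule F R, FiniteDimensional F G ∧
      (∀ f : ℕ →₀ R, (∀ m : ℕ, f m ∈ G) → (f.sum fun m g => (C.D ^ m) g) = 0 → f = 0) ∧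
      Submodule.span F {x : R | ∃ (m : ℕ) (g : R), g ∈ G ∧ x = (C.D ^ m) g} = ⊤ ∧
      (∀ u ∈ G, ∀ v ∈ G, C.prod 0 u v ∈ G) ∧
      (∀ u ∈ G, ∀ v ∈ G, ∀ n ≥ 1, C.prod n u v = 0) ∧
      (∀ u ∈ G, ∀ v ∈ G, C.prod 0 u v = -C.prod 0 v u) ∧
      (∀ u ∈ G, ∀ v ∈ G, ∀ w ∈ G,
        C.prod 0 u (C.prod 0 v w) - C.prod 0 v (C.prod 0 u w) = C.prod 0 (C.prod 0 u v) w) ∧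
      (∃ u ∈ G, ∃ v ∈ G, C.prod 0 u v ≠ 0) ∧
      (∀ I : Submodule F R, I ≤ G → (∀ u ∈ G, ∀ w ∈ I, C.prod 0 u w ∈ I) →
        I = ⊥ ∨ I = G) := by
  obtain ⟨J, hJ0J, hJ, hJt, hmax⟩ := exists_max J0 hJ0 hfin
  have hfin' : Module.Finite F (LL C ⧸ J) :=
    Module.Finite.of_surjective (Submodule.factor hJ0J) (Submodule.factor_surjective hJ0J)
  have hq : ∀ x, J.mkQ x = 0 ↔ x ∈ J := fun x => by simp
  have hloc : ∀ a, ∃ N, ∀ m ≥ N, J.mkQ (gen C m a) = 0 := fun a => by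
    obtain ⟨N, hN⟩ := hloc0 a
    exact ⟨N, fun m hm => (hq _).mpr (hJ0J (hN m hm))⟩
  have hJ' : ∀ y ∈ J, ∀ z : LL C, ⁅y, z⁆ ∈ J := fun y hy z => by
    rw [← lie_skew]; exact J.neg_mem (hJ z y hy)
  have hnab : ¬ ∀ x y : LL C, ⁅x, y⁆ ∈ J := fun h => hJt (perfect hnz hsimple J h)
  have hπ : J.mkQ ≠ 0 := by
    intro h
    apply hJt
    rw [← J.ker_mkQ, h, LinearMap.ker_zero]
  have hker := ker_triv (π := J.mkQ) hsimple hπ (fun n k u w hw => (hq _).mpr (hJ _ _ ((hq _).mp (hw k))))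
  -- trivial centre of the quotient
  have hcen : ∀ c : LL C, (∀ y : LL C, ⁅y, c⁆ ∈ J) → c ∈ J := by
    let K : Submodule F (LL C) :=
      { carrier := {c | ∀ y : LL C, ⁅y, c⁆ ∈ J}
        add_mem' := fun h h' y => by rw [lie_add]; exact add_mem (h y) (h' y)
        zero_mem' := fun y => by rw [lie_zero]; exact zero_mem _
        smul_mem' := fun c x h y => by rw [lie_smul]; exact J.smul_mem _ (h y) }
    have hK := hmax K (fun c hc y => hJ y c hc) (fun z c hc y => hJ y _ (hc z))
    rcases hK with hK | hK
    · intro c hc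
      rw [← hK]; exact hc
    · exfalso
      apply hnab
      intro x y
      have : y ∈ K := hK ▸ Submodule.mem_top
      exact this x
  -- action on degree-zero elements
  have hactG : ∀ (x : LL C) g, g ∈ Gs J.mkQ → (x : Module.End F R) g ∈ Gs J.mkQ ∧
      gen C 0 ((x : Module.End F R) g) - ⁅x, gen C 0 g⁆ ∈ J := by
    intro x g hg
    obtain ⟨K0, hK0⟩ := gen_act x
    constructor
    · intro k hk
      rw [hK0 K0 le_rfl, hq]
      exact J.sum_mem fun i _ => J.smul_mem _ (hJ _ _ ((hq _).mp (hg _ (by omega))))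
    · rw [hK0 (K0 + 1) (by omega), Finset.sum_range_succ']
      have : ∑ i ∈ Finset.range K0, ((-1 : F) ^ (i + 1) * ((i + 1).factorial : F)⁻¹) •
          ⁅(dl C ^ (i + 1)) x, gen C (0 + (i + 1)) g⁆ ∈ J :=
        J.sum_mem fun i _ => J.smul_mem _ (hJ _ _ ((hq _).mp (hg _ (by omega))))
      simpa using this
  -- a nonzero degree-zero element
  have hex : ∃ g ∈ Gs J.mkQ, gen C 0 g ∉ J := by
    obtain ⟨a, ha⟩ : ∃ a : R, a ≠ 0 := by
      obtain ⟨n, u, v, h⟩ := hnz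
      exact ⟨_, h⟩
    obtain ⟨N, hN, hNmax⟩ : ∃ N, J.mkQ (gen C N a) ≠ 0 ∧ ∀ m > N, J.mkQ (gen C m a) = 0 := by
      classical
      obtain ⟨M, hM⟩ := hloc a
      have hex : ∃ n, J.mkQ (gen C n a) ≠ 0 := by
        by_contra hh
        push Not at hh
        exact ha (hker a hh)
      obtain ⟨n, hn⟩ := hex
      have hlt : ∀ m, J.mkQ (gen C m a) ≠ 0 → m ≤ M := fun m hm => by
        by_contra hh; exact hm (hM m (by omega))
      have hsp := Nat.findGreatest_spec (P := fun m => J.mkQ (gen C m a) ≠ 0) (n := M) (hlt n hn) hn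
      refine ⟨_, hsp, fun m hm => ?_⟩
      by_contra hm'
      exact absurd (Nat.le_findGreatest (hlt m hm') hm') (not_le.mpr hm)
    obtain ⟨y, hy⟩ : ∃ y : LL C, ⁅y, gen C N a⁆ ∉ J := by
      by_contra hh
      push Not at hh
      exact hN ((hq _).mpr (hcen _ hh))
    obtain ⟨x, hx, hxN⟩ := dens hJ hJt hmax dl_lie dl_surj dl_nil N y
    obtain ⟨K0, hK0⟩ := gen_act x
    refine ⟨(x : Module.End F R) a, ?_, ?_⟩
    · intro k hk
      rw [hK0 K0 le_rfl, hq]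
      refine J.sum_mem fun i _ => J.smul_mem _ ?_
      by_cases hi : i < N
      · exact hJ' _ (hx i hi) _
      · exact hJ _ _ ((hq _).mp (hNmax _ (by omega)))
    · rw [hK0 (K0 + N + 1) (by omega)]
      intro hmem
      have hNm : N ∈ Finset.range (K0 + N + 1) := by rw [Finset.mem_range]; omega
      rw [← Finset.add_sum_erase _ _ hNm] at hmem
      have h2 : ∑ i ∈ (Finset.range (K0 + N + 1)).erase N, ((-1 : F) ^ i * (i.factorial : F)⁻¹) •
          ⁅(dl C ^ i) x, gen C (0 + i) a⁆ ∈ J := by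
        refine J.sum_mem fun i hi => J.smul_mem _ ?_
        have hne := Finset.ne_of_mem_erase hi
        by_cases hi : i < N
        · exact hJ' _ (hx i hi) _
        · exact hJ _ _ ((hq _).mp (hNmax _ (by omega)))
      have h3 := (J.add_mem_iff_left h2).mp hmem
      rw [zero_add] at h3
      have hne : ((-1 : F) ^ N * (N.factorial : F)⁻¹) ≠ 0 :=
        mul_ne_zero (pow_ne_zero _ (by simp)) (inv_ne_zero (Nat.cast_ne_zero.mpr (Nat.factorial_ne_zero _)))
      have h4 := (J.smul_mem_iff hne).mp h3
      apply hy
      have h5 := hJ' _ hxN (gen C N a)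
      rw [sub_lie] at h5
      have := J.sub_mem h4 h5
      simpa using this
  -- surjectivity
  have hs : ∀ s, ∃ g ∈ Gs J.mkQ, J.mkQ (gen C 0 g) = s := by
    have hK := hmax ((Gs J.mkQ).map (gen C 0) ⊔ J) le_sup_right (by
      intro z y hy
      obtain ⟨u, hu, j, hj, rfl⟩ := Submodule.mem_sup.mp hy
      obtain ⟨g, hg, rfl⟩ := Submodule.mem_map.mp hu
      rw [lie_add]
      refine add_mem ?_ (Submodule.mem_sup_right (hJ z j hj))
      obtain ⟨h1, h2⟩ := hactG z g hg
      have h3 := sub_mem (Submodule.mem_sup_left (T := J) (Submodule.mem_map_of_mem (f := gen C 0) h1))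
        (Submodule.mem_sup_right (S := (Gs J.mkQ).map (gen C 0)) h2)
      simpa using h3)
    rcases hK with hK | hK
    · exfalso
      obtain ⟨g, hg, hgJ⟩ := hex
      apply hgJ
      rw [← hK]
      exact Submodule.mem_sup_left (Submodule.mem_map_of_mem hg)
    · intro s
      obtain ⟨y, rfl⟩ := J.mkQ_surjective s
      have hy : y ∈ (Gs J.mkQ).map (gen C 0) ⊔ J := hK ▸ Submodule.mem_top
      obtain ⟨u, hu, j, hj, rfl⟩ := Submodule.mem_sup.mp hy
      obtain ⟨g, hg, rfl⟩ := Submodule.mem_map.mp hu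
      exact ⟨g, hg, by rw [map_add, (hq j).mpr hj, add_zero]⟩
  have hinj : ∀ g ∈ Gs J.mkQ, gen C 0 g ∈ J → g = 0 := by
    intro g hg h
    apply hker
    intro m
    by_cases hm : 1 ≤ m
    · exact hg m hm
    · obtain rfl : m = 0 := by omega
      exact (hq _).mpr h
  have hbr : ∀ u g, g ∈ Gs J.mkQ → gen C 0 (C.prod 0 u g) - ⁅gen C 0 u, gen C 0 g⁆ ∈ J :=
    fun u g hg => (hactG (gen C 0 u) g hg).2
  have hhigh : ∀ u ∈ Gs J.mkQ, ∀ v ∈ Gs J.mkQ, ∀ n ≥ 1, C.prod n u v = 0 := by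
    intro u hu v hv n hn
    have h := hactG (gen C n u) v hv
    rw [gen_apply] at h
    refine hinj _ h.1 ?_
    have := add_mem h.2 (hJ' _ ((hq _).mp (hu n hn)) (gen C 0 v))
    simpa using this
  refine ⟨Gs J.mkQ, ?_, fun f hf h => freeG hker f hf h, spanG hker hloc hs, ?_, hhigh, ?_, ?_, ?_, ?_⟩
  · refine Module.Finite.of_injective ((J.mkQ ∘ₗ gen C 0) ∘ₗ (Gs J.mkQ).subtype) ?_
    rw [← LinearMap.ker_eq_bot, LinearMap.ker_eq_bot']
    rintro ⟨g, hg⟩ h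
    exact Subtype.ext (hinj g hg ((hq _).mp h))
  · intro u _ v hv
    exact (hactG (gen C 0 u) v hv).1
  · intro u hu v hv
    rw [C.skew 0 1 u v (fun j hj => hhigh v hv u hu _ (by omega))]
    simp
  · intro u _ v _ w _
    rw [C.jacobi]
    simp
  · by_contra hh
    push Not at hh
    apply hnab
    intro x y
    obtain ⟨u, hu, hux⟩ := hs (J.mkQ x)
    obtain ⟨v, hv, hvy⟩ := hs (J.mkQ y)
    have h1 := hbr u v hv
    rw [hh u hu v hv, map_zero, zero_sub, neg_mem_iff] at h1
    have h2 : x - gen C 0 u ∈ J := by rw [← hq, map_sub, hux, sub_self]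
    have h3 : y - gen C 0 v ∈ J := by rw [← hq, map_sub, hvy, sub_self]
    have h4 := add_mem (add_mem (hJ' _ h2 y) (hJ (gen C 0 u) _ h3)) h1
    simpa [sub_lie, lie_sub] using h4
  · intro I hIG hI
    have hK := hmax (I.map (gen C 0) ⊔ J) le_sup_right (by
      intro z y hy
      obtain ⟨u, hu, j, hj, rfl⟩ := Submodule.mem_sup.mp hy
      obtain ⟨g, hg, rfl⟩ := Submodule.mem_map.mp hu
      rw [lie_add]
      refine add_mem ?_ (Submodule.mem_sup_right (hJ z j hj))
      obtain ⟨u, hu, huz⟩ := hs (J.mkQ z)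
      have h1 := hbr u g (hIG hg)
      have h2 : z - gen C 0 u ∈ J := by rw [← hq, map_sub, huz, sub_self]
      have h4 := J.sub_mem (hJ' _ h2 (gen C 0 g)) h1
      have h3 := add_mem (Submodule.mem_sup_left (T := J) (Submodule.mem_map_of_mem (f := gen C 0) (hI u hu g hg)))
        (Submodule.mem_sup_right (S := I.map (gen C 0)) h4)
      convert h3 using 1
      rw [sub_lie]; abel)
    rcases hK with hK | hK
    · left
      rw [eq_bot_iff]
      intro g hg
      rw [Submodule.mem_bot]
      apply hinj g (hIG hg)
      rw [← hK]
      exact Submodule.mem_sup_left (Submodule.mem_map_of_mem hg)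
    · right
      refine le_antisymm hIG fun g' hg' => ?_
      have hy : gen C 0 g' ∈ I.map (gen C 0) ⊔ J := hK ▸ Submodule.mem_top
      obtain ⟨u, hu, j, hj, hsum⟩ := Submodule.mem_sup.mp hy
      obtain ⟨g, hg, rfl⟩ := Submodule.mem_map.mp hu
      have : g' - g = 0 := by
        apply hinj _ (sub_mem hg' (hIG hg))
        rw [map_sub, ← hsum]
        simpa using hj
      rw [sub_eq_zero.mp this]
      exact hg

end Cur
end CA

/-- **D'Andrea–Kac classification** (Theorem 2.3): over an algebraically closed field
of characteristic 0, a simple conformal algebra of finite type is isomorphic either to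
the Virasoro conformal algebra `R_W` (intrinsically: `R` is a free rank-one
`F[∂]`-module on a generator `e` with `e⁽⁰⁾e = ∂e`, `e⁽¹⁾e = 2e`, `e⁽ⁿ⁾e = 0` for
`n ≥ 2`) or to the current conformal algebra `R(G)` of a finite-dimensional simple
Lie algebra `G` (intrinsically: `R` is a free `F[∂]`-module over a finite-dimensional
subspace `G` on which `prod 0` is a simple Lie bracket and all higher products vanish;
such data determine the conformal structure uniquely). -/
theorem simple_finite_type_classification
    {F R : Type*} [Field F] [CharZero F] [IsAlgClosed F] [AddCommGroup R] [Module F R]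
    (C : ConformalAlgebra F R)
    -- simplicity: some product is nonzero and the only ideals are ⊥ and ⊤
    (hnz : ∃ (n : ℕ) (u v : R), C.prod n u v ≠ 0)
    (hsimple : ∀ I : Submodule F R, (∀ x ∈ I, C.D x ∈ I) →
      (∀ (u : R), ∀ w ∈ I, ∀ n : ℕ, C.prod n u w ∈ I) → I = ⊥ ∨ I = ⊤)
    -- finite type: R = F[∂]V for some finite-dimensional subspace V
    (hft : ∃ V : Submodule F R, FiniteDimensional F V ∧
      Submodule.span F {x : R | ∃ (m : ℕ) (v : R), v ∈ V ∧ x = (C.D ^ m) v} = ⊤) :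
    -- R ≅ R_W :
    (∃ e : R,
      (∀ c : ℕ →₀ F, (c.sum fun m a => a • ((C.D ^ m) e)) = 0 → c = 0) ∧
      Submodule.span F (Set.range fun m : ℕ => (C.D ^ m) e) = ⊤ ∧
      C.prod 0 e e = C.D e ∧ C.prod 1 e e = (2 : F) • e ∧ ∀ n ≥ 2, C.prod n e e = 0)
    ∨
    -- R ≅ R(G) for a finite-dimensional simple Lie algebra G :
    (∃ G : Submodule F R, FiniteDimensional F G ∧
      -- R is a free F[∂]-module over G
      (∀ f : ℕ →₀ R, (∀ m : ℕ, f m ∈ G) → (f.sum fun m g => (C.D ^ m) g) = 0 → f = 0) ∧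
      Submodule.span F {x : R | ∃ (m : ℕ) (g : R), g ∈ G ∧ x = (C.D ^ m) g} = ⊤ ∧
      -- the products of elements of G: prod 0 is a bracket on G, higher products vanish
      (∀ u ∈ G, ∀ v ∈ G, C.prod 0 u v ∈ G) ∧
      (∀ u ∈ G, ∀ v ∈ G, ∀ n ≥ 1, C.prod n u v = 0) ∧
      -- (G, prod 0) is a simple Lie algebra
      (∀ u ∈ G, ∀ v ∈ G, C.prod 0 u v = -C.prod 0 v u) ∧
      (∀ u ∈ G, ∀ v ∈ G, ∀ w ∈ G,
        C.prod 0 u (C.prod 0 v w) - C.prod 0 v (C.prod 0 u w) = C.prod 0 (C.prod 0 u v) w) ∧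
      (∃ u ∈ G, ∃ v ∈ G, C.prod 0 u v ≠ 0) ∧
      (∀ I : Submodule F R, I ≤ G → (∀ u ∈ G, ∀ w ∈ I, C.prod 0 u w ∈ I) →
        I = ⊥ ∨ I = G)) := by
  rcases CA.core C hnz hsimple hft with ⟨J, h1, h2, h3⟩ | ⟨θ, h1, h2, h3⟩
  · right
    exact CA.curEnd hnz hsimple J h1 h2 h3
  · left
    exact CA.virEnd hnz hsimple θ h1 h2 h3
end
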